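/- arXiv:2502.01950 — 2 statements merged into one kernel-verified Lean document; each statement's English description precedes it below -/
import Mathlib

section
/- Let G be a finite solvable group acting faithfully and fixed-point-freely on a finite vector space V. Then either the Fitting height of G is at most 2, or the Fitting height of G equals 3 and G has a quotient isomorphic to CSU(2,3) (the conformal special unitary group of order 48, i.e., the binary octahedral group), whence |cod(G)| ≥ 6. -/
open CategoryTheory

/-- The kernel of (the character of) a finite-dimensional complex representation. -/
noncomputable def charKer {G : Type} [Group G] (V : FDRep ℂ G) : Subgroup G :=
  MonoidHom.ker (Representation.asGroupHom V.ρ)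

/-- The codegree of a character: `|G : ker χ| / χ(1)`. -/
noncomputable def codeg {G : Type} [Group G] (V : FDRep ℂ G) : ℕ :=
  (charKer V).index / Module.finrank ℂ V

/-- The set of codegrees of irreducible characters of `G`. -/
def codSet (G : Type) [Group G] : Set ℕ :=
  {n | ∃ V : FDRep ℂ G, Simple V ∧ codeg V = n}

/-- Inner product of class functions on a finite group. -/
noncomputable def innerChar (G : Type) [Group G] (f g : G → ℂ) : ℂ :=
  (∑ᶠ x : G, f x * starRingEnd ℂ (g x)) / Nat.card G

open scoped Classical in
/-- The induced character `θ^G` of a character `θ` of a subgroup `H ≤ G`. -/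
noncomputable def indChar {G : Type} [Group G] (H : Subgroup G) (θ : FDRep ℂ ↥H) : G → ℂ :=
  fun g => (∑ᶠ x : G, if h : x * g * x⁻¹ ∈ H then θ.character ⟨x * g * x⁻¹, h⟩ else 0) /
    Nat.card ↥H

/-- `M/N` is nilpotent: some term of the lower central series of `M` (relative to `M`)
lands in `N`. -/
def nilpotentFactor {G : Type} [Group G] (N M : Subgroup G) : Prop :=
  ∃ m : ℕ, (fun K => ⁅K, M⁆)^[m] M ≤ N

/-- The Fitting height: the length of the shortest normal series with nilpotent factors. -/
noncomputable def fittingHeight (G : Type) [Group G] : ℕ :=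
  sInf {n | ∃ c : Fin (n + 1) → Subgroup G, c 0 = ⊥ ∧ c (Fin.last n) = ⊤ ∧
    (∀ i, (c i).Normal) ∧ (∀ i : Fin n, c i.castSucc ≤ c i.succ) ∧
    ∀ i : Fin n, nilpotentFactor (c i.castSucc) (c i.succ)}

/-- The binary octahedral group `CSU(2,3)`: the group of order 48 whose Fitting subgroup is
`Q₈` and whose Sylow 2-subgroups are generalized quaternion of order 16. -/
def IsBinaryOctahedral (K : Type) [Group K] : Prop :=
  Nat.card K = 48 ∧
    (∃ Fit : Subgroup K, IsGreatest {N : Subgroup K | N.Normal ∧ Group.IsNilpotent ↥N} Fit ∧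
      Nonempty (↥Fit ≃* QuaternionGroup 2)) ∧
    ∀ P : Sylow 2 K, Nonempty (↥(P : Subgroup K) ≃* QuaternionGroup 4)

/-- `G` has a quotient isomorphic to the binary octahedral group. -/
def HasBinaryOctahedralQuotient (G : Type) [Group G] : Prop :=
  ∃ (K : Type) (instK : Group K),
    letI := instK
    ∃ φ : G →* K, Function.Surjective φ ∧ IsBinaryOctahedral K

/-!
The idea is that a fixed-point-free action leaves little room in the Sylow subgroups of `G`. An
involution can only act as `-1`, so there is at most one of them, and two commuting elements of
prime order `p` generate a cyclic group. Hence the `p`-subgroups of `G` are cyclic for odd `p`, and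
the `2`-subgroups are cyclic or generalized quaternion.

Let `F` be a maximal nilpotent normal subgroup; since `G` is solvable, `F` contains its own
centralizer. The derived group `G'` centralizes the cyclic Sylow subgroups of `F`, because their
automorphism groups are abelian, so modulo `F` it is determined by its action on the Sylow
`2`-subgroup `P` of `F`. If `P` is cyclic, or generalized quaternion of order at least `16`, then
`[G', G] ≤ F`. If `P` is `Q₈`, the same holds unless `G` permutes the three cyclic subgroups of
order four of `P` as the full symmetric group `S₃`, and then still `[G', G'] ≤ F`.

In the exceptional case the centralizer of `P` has a central Sylow `2`-subgroup of order two, so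
Burnside's transfer theorem provides a normal subgroup of odd order whose quotient is an extension
of `Q₈` by `S₃` with a single involution: the binary octahedral group. Its codegrees include
`1, 2, 3, 8, 12, 24`, which come from the trivial and the sign character, the standard
representation of `S₃`, the action on the pure quaternions, the tensor product of the faithful
two-dimensional representation with the standard one, and the faithful representation itself.
-/

open scoped commutatorElement

section FixedPointFreeAction

/-- The group `G` acts fixed-point-freely on the additive group `V`: no nonidentity element of `G`
fixes a nonzero element of `V`. -/
def ActsFixedPointFreely (G V : Type*) [Group G] [AddCommGroup V] [DistribMulAction G V] : Prop :=
  ∀ g : G, g ≠ 1 → ∀ v : V, v ≠ 0 → g • v ≠ v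

/-- The `p²`-condition, in a form that does not mention cardinalities: two commuting elements of
order dividing `p` lie in a common subgroup of order `p`. For a prime `p` it says that every
subgroup of order `p²` is cyclic. -/
def PSqCondition (p : ℕ) (G : Type*) [Group G] : Prop :=
  ∀ x y : G, Commute x y → x ^ p = 1 → y ^ p = 1 → x ≠ 1 → y ∈ Subgroup.zpowers x

/-- The group `G` has at most one involution. -/
def AtMostOneInvolution (G : Type*) [Group G] : Prop :=
  ∀ x y : G, orderOf x = 2 → orderOf y = 2 → x = y

variable {G V : Type*} [Group G] [AddCommGroup V] [DistribMulAction G V]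

theorem smul_sum_range_pow_smul {g : G} {n : ℕ} (hn : g ^ n = 1) (v : V) :
    g • ∑ k ∈ Finset.range n, g ^ k • v = ∑ k ∈ Finset.range n, g ^ k • v := by
  have hshift := (Finset.sum_range_succ' (fun k ↦ g ^ k • v) n).symm.trans
    (Finset.sum_range_succ (fun k ↦ g ^ k • v) n)
  rw [hn, pow_zero] at hshift
  simpa only [Finset.smul_sum, smul_smul, ← pow_succ'] using add_right_cancel hshift

theorem ActsFixedPointFreely.sum_range_pow_smul_eq_zero (h : ActsFixedPointFreely G V) {g : G}
    (hg : g ≠ 1) {n : ℕ} (hn : g ^ n = 1) (v : V) : ∑ k ∈ Finset.range n, g ^ k • v = 0 :=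
  by_contra fun hv ↦ h g hg _ hv (smul_sum_range_pow_smul hn v)

theorem ActsFixedPointFreely.atMostOneInvolution [FaithfulSMul G V]
    (h : ActsFixedPointFreely G V) : AtMostOneInvolution G := by
  -- An involution acts as `-1`.
  have hneg : ∀ x : G, orderOf x = 2 → ∀ v : V, v + x • v = 0 := fun x hx v ↦ by
    simpa [Finset.sum_range_succ] using
      h.sum_range_pow_smul_eq_zero (orderOf_eq_prime_iff.1 hx).2 (orderOf_eq_prime_iff.1 hx).1 v
  exact fun x y hx hy ↦ eq_of_smul_eq_smul fun v : V ↦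
    add_left_cancel ((hneg x hx v).trans (hneg y hy v).symm)

theorem ActsFixedPointFreely.prime_nsmul_eq_zero (h : ActsFixedPointFreely G V) {p : ℕ}
    [Fact p.Prime] {x y : G} (hxy : Commute x y) (hx : x ^ p = 1) (hy : y ^ p = 1) (hx1 : x ≠ 1)
    (hyx : y ∉ Subgroup.zpowers x) (v : V) : p • v = 0 := by
  -- Sum `(y * x ^ j) ^ k • v` over `j, k < p`: each sum over `k` is zero, and so is each sum
  -- over `j` with `k ≠ 0`, because `x ^ k` then has order `p`.
  have hrow : ∀ j, ∑ k ∈ Finset.range p, (y * x ^ j) ^ k • v = 0 := fun j ↦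
    h.sum_range_pow_smul_eq_zero
      (fun hj ↦ hyx (by
        rw [eq_inv_of_mul_eq_one_left hj]
        exact inv_mem (pow_mem (Subgroup.mem_zpowers x) j)))
      (by rw [(hxy.symm.pow_right j).mul_pow, hy, ← pow_mul, mul_comm, pow_mul, hx, one_pow,
        one_mul]) v
  have hcolumn : ∀ k ∈ Finset.range p, k ≠ 0 →
      ∑ j ∈ Finset.range p, (y * x ^ j) ^ k • v = 0 := fun k hk hk0 ↦ by
    have hxk : x ^ k ≠ 1 := fun hxk ↦
      Nat.not_dvd_of_pos_of_lt hk0.bot_lt (Finset.mem_range.1 hk)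
        (orderOf_eq_prime hx hx1 ▸ orderOf_dvd_of_pow_eq_one hxk)
    have hxkp : (x ^ k) ^ p = 1 := by rw [← pow_mul, mul_comm, pow_mul, hx, one_pow]
    simp only [(hxy.symm.pow_right _).mul_pow, mul_smul, ← Finset.smul_sum]
    simp only [← pow_mul, mul_comm _ k]
    simp only [pow_mul, h.sum_range_pow_smul_eq_zero hxk hxkp, smul_zero]
  have hp : 0 ∈ Finset.range p := Finset.mem_range.2 (Fact.out : p.Prime).pos
  calc p • v = ∑ j ∈ Finset.range p, (y * x ^ j) ^ 0 • v := by simp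
    _ = ∑ k ∈ Finset.range p, ∑ j ∈ Finset.range p, (y * x ^ j) ^ k • v :=
        (Finset.sum_eq_single_of_mem 0 hp hcolumn).symm
    _ = 0 := by rw [Finset.sum_comm, Finset.sum_eq_zero fun j _ ↦ hrow j]

theorem exists_ne_zero_smul_eq_of_prime_nsmul_eq_zero [Nontrivial V] {p : ℕ} [Fact p.Prime]
    (hV : ∀ v : V, p • v = 0) {x : G} (hx : x ^ p = 1) : ∃ v : V, v ≠ 0 ∧ x • v = v := by
  by_contra! hfix
  let X : AddMonoid.End V := DistribMulAction.toAddMonoidEnd G V x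
  have hinj : Function.Injective ⇑(X - 1 : AddMonoid.End V) :=
    (injective_iff_map_eq_zero _).2 fun v hv ↦
      by_contra fun hv0 ↦ hfix v hv0 (sub_eq_zero.1 hv)
  have hpEnd : (p : AddMonoid.End V) = 0 := AddMonoidHom.ext fun v ↦
    (AddMonoid.End.natCast_apply p v).trans (hV v)
  have hXp : X ^ p = 1 := by rw [← map_pow, hx, map_one]
  obtain ⟨v, hv⟩ := exists_ne (0 : V)
  have : Nontrivial (AddMonoid.End V) := ⟨1, 0, fun h ↦ hv (DFunLike.congr_fun h v)⟩
  have hnil : (X - 1) ^ p = 0 := by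
    have : CharP (AddMonoid.End V) p := (CharP.charP_iff_prime_eq_zero Fact.out).2 hpEnd
    rw [sub_pow_char_of_commute _ (Commute.one_right X), hXp, one_pow, sub_self]
  refine hv (hinj.iterate p ?_)
  rw [← AddMonoid.End.coe_pow, hnil]
  rfl

theorem ActsFixedPointFreely.pSqCondition [FaithfulSMul G V] (h : ActsFixedPointFreely G V) (p : ℕ)
    [Fact p.Prime] : PSqCondition p G := by
  intro x y hxy hx hy hx1
  by_contra hyx
  have : Nontrivial V := by
    by_contra hV
    rw [not_nontrivial_iff_subsingleton] at hV
    exact hx1 (eq_of_smul_eq_smul fun v : V ↦ Subsingleton.elim _ _)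
  obtain ⟨v, hv, hxv⟩ := exists_ne_zero_smul_eq_of_prime_nsmul_eq_zero
    (h.prime_nsmul_eq_zero hxy hx hy hx1 hyx) hx
  exact h x hx1 v hv hxv

end FixedPointFreeAction

section CyclicPGroups

theorem PSqCondition.of_injective {G H : Type*} [Group G] [Group H] {p : ℕ}
    (hG : PSqCondition p G) (f : H →* G) (hf : Function.Injective f) : PSqCondition p H := by
  intro x y hxy hx hy hx1
  have hmem := hG (f x) (f y) (hxy.map f) (by rw [← map_pow, hx, map_one])
    (by rw [← map_pow, hy, map_one]) ((map_ne_one_iff f hf).2 hx1)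
  rwa [← MonoidHom.map_zpowers, Subgroup.mem_map_iff_mem hf] at hmem

theorem AtMostOneInvolution.of_injective {G H : Type*} [Group G] [Group H]
    (hG : AtMostOneInvolution G) (f : H →* G) (hf : Function.Injective f) :
    AtMostOneInvolution H := fun x y hx hy ↦
  hf (hG _ _ ((orderOf_injective f hf x).trans hx) ((orderOf_injective f hf y).trans hy))

theorem AtMostOneInvolution.pSqCondition_two {G : Type*} [Group G] (hG : AtMostOneInvolution G) :
    PSqCondition 2 G := by
  intro x y _ hx hy hx1
  rcases eq_or_ne y 1 with rfl | hy1
  · exact one_mem _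
  · rw [hG y x (orderOf_eq_prime hy hy1) (orderOf_eq_prime hx hx1)]
    exact Subgroup.mem_zpowers x

theorem exists_isCoatom_mem_of_not_isCyclic {G : Type*} [Group G] [IsCoatomic (Subgroup G)]
    (hG : ¬ IsCyclic G) (g : G) : ∃ M : Subgroup G, IsCoatom M ∧ g ∈ M := by
  obtain htop | ⟨M, hM, hgM⟩ := eq_top_or_exists_le_coatom (Subgroup.zpowers g)
  · exact absurd (isCyclic_iff_exists_zpowers_eq_top.2 ⟨g, htop⟩) hG
  · exact ⟨M, hM, hgM (Subgroup.mem_zpowers g)⟩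

theorem exists_isCoatom_ne_of_not_isCyclic {G : Type*} [Group G] [IsCoatomic (Subgroup G)]
    (hG : ¬ IsCyclic G) : ∃ M L : Subgroup G, IsCoatom M ∧ IsCoatom L ∧ M ≠ L := by
  obtain ⟨M, hM, -⟩ := exists_isCoatom_mem_of_not_isCyclic hG 1
  obtain ⟨g, hg⟩ : ∃ g, g ∉ M := by
    by_contra! hall
    exact hM.1 ((Subgroup.eq_top_iff' M).2 hall)
  obtain ⟨L, hL, hgL⟩ := exists_isCoatom_mem_of_not_isCyclic hG g
  exact ⟨M, L, hM, hL, fun h ↦ hg (h ▸ hgL)⟩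

variable {p : ℕ} [Fact p.Prime] {P : Type*} [Group P] [Finite P]

theorem normal_of_isCoatom_of_isPGroup (hP : IsPGroup p P) {M : Subgroup P} (hM : IsCoatom M) :
    M.Normal :=
  have := hP.isNilpotent
  Subgroup.NormalizerCondition.normal_of_coatom M Group.normalizerCondition_of_isNilpotent hM

theorem index_eq_prime_of_isCoatom (hP : IsPGroup p P) {M : Subgroup P} (hM : IsCoatom M) :
    M.index = p := by
  obtain ⟨m, hm⟩ := IsPGroup.iff_card.1 (hP.to_subgroup M)
  obtain ⟨n, hn⟩ := hP.index M
  have hn0 : n ≠ 0 := fun h0 ↦ hM.1 (Subgroup.index_eq_one.1 (by rw [hn, h0, pow_zero]))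
  have hdvd : p ^ (m + 1) ∣ Nat.card P := by
    rw [← M.card_mul_index, hm, hn, ← pow_add]
    exact pow_dvd_pow p (by omega)
  obtain ⟨K, hK, hMK⟩ := Sylow.exists_subgroup_card_pow_succ hdvd hm
  have hKtop : K = ⊤ := hM.2 K (lt_of_le_of_ne hMK fun h ↦ by
    rw [← h, hm] at hK
    exact (Nat.pow_lt_pow_succ (Fact.out : p.Prime).one_lt).ne hK)
  rw [hKtop, Subgroup.card_top, ← M.card_mul_index, hm, pow_succ] at hK
  exact Nat.eq_of_mul_eq_mul_left (pow_pos (Fact.out : p.Prime).pos m) hK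

theorem pow_prime_mem_of_isCoatom (hP : IsPGroup p P) {M : Subgroup P} (hM : IsCoatom M) (x : P) :
    x ^ p ∈ M := by
  have := normal_of_isCoatom_of_isPGroup hP hM
  exact index_eq_prime_of_isCoatom hP hM ▸ M.pow_index_mem x

theorem commutatorElement_mem_of_isCoatom (hP : IsPGroup p P) {M : Subgroup P} (hM : IsCoatom M)
    (x y : P) : ⁅x, y⁆ ∈ M := by
  have := normal_of_isCoatom_of_isPGroup hP hM
  have hcyclic : IsCyclic (P ⧸ M) := isCyclic_of_prime_card (index_eq_prime_of_isCoatom hP hM)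
  exact Subgroup.Normal.quotient_commutative_iff_commutator_le.1 hcyclic.isMulCommutative
    (Subgroup.commutator_mem_commutator (Subgroup.mem_top x) (Subgroup.mem_top y))

theorem PSqCondition.exists_orderOf_eq_prime_and_mem_zpowers [Nontrivial P]
    (hPSq : PSqCondition p P) (hP : IsPGroup p P) :
    ∃ z : P, orderOf z = p ∧ ∀ y : P, y ^ p = 1 → y ∈ Subgroup.zpowers z := by
  have := hP.center_nontrivial
  have hdvd : p ∣ Nat.card (Subgroup.center P) :=
    (hP.to_subgroup _).card_eq_or_dvd.resolve_left Finite.one_lt_card.ne'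
  obtain ⟨z, hz⟩ := exists_prime_orderOf_dvd_card' p hdvd
  rw [← Subgroup.orderOf_coe] at hz
  refine ⟨z, hz, fun y hy ↦ hPSq z y (Subgroup.mem_center_iff.1 z.2 y).symm
    (orderOf_dvd_iff_pow_eq_one.1 hz.dvd) hy ?_⟩
  rw [Ne, ← orderOf_eq_one_iff, hz]
  exact (Fact.out : p.Prime).ne_one

theorem PSqCondition.isCyclic_of_mul_pow (hPSq : PSqCondition p P) (hP : IsPGroup p P)
    (hmul : ∀ x y : P, (x * y) ^ p = x ^ p * y ^ p) : IsCyclic P := by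
  by_contra hcyc
  have : Nontrivial P := not_subsingleton_iff_nontrivial.1 fun _ ↦ hcyc isCyclic_of_subsingleton
  obtain ⟨M, L, hM, hL, hML⟩ := exists_isCoatom_ne_of_not_isCyclic hcyc
  let power : P →* P := ⟨⟨(· ^ p), one_pow p⟩, hmul⟩
  obtain ⟨z, hz, hzmem⟩ := hPSq.exists_orderOf_eq_prime_and_mem_zpowers hP
  have hker : Nat.card power.ker ≤ p := by
    rw [← hz, ← Nat.card_zpowers]
    exact Subgroup.card_le_of_le fun y hy ↦ hzmem y hy
  have hrange : power.range ≤ M ⊓ L := by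
    rintro _ ⟨x, rfl⟩
    exact ⟨pow_prime_mem_of_isCoatom hP hM x, pow_prime_mem_of_isCoatom hP hL x⟩
  have hlt : M ⊓ L < M := inf_lt_left.2 fun hle ↦ hML (hM.le_iff_eq hL.1 |>.1 hle).symm
  have hcard : Nat.card power.range < Nat.card M :=
    (Subgroup.card_le_of_le hrange).trans_lt (Set.Finite.card_lt_card (Set.toFinite _) hlt)
  have hpM : Nat.card M * p = Nat.card P := by
    rw [← index_eq_prime_of_isCoatom hP hM, M.card_mul_index]
  have hkr : Nat.card power.ker * Nat.card power.range = Nat.card P := by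
    rw [← Subgroup.index_ker, Subgroup.card_mul_index]
  nlinarith [Nat.mul_le_mul_right (Nat.card power.range) hker, (Fact.out : p.Prime).pos]

theorem PSqCondition.isCyclic_of_isMulCommutative [IsMulCommutative P] (hPSq : PSqCondition p P)
    (hP : IsPGroup p P) : IsCyclic P :=
  hPSq.isCyclic_of_mul_pow hP fun x y ↦ (show Commute x y from mul_comm' x y).mul_pow p

theorem inf_le_center_of_sup_eq_top {G : Type*} [Group G] {M L : Subgroup G} [IsMulCommutative M]
    [IsMulCommutative L] (h : M ⊔ L = ⊤) : M ⊓ L ≤ Subgroup.center G := by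
  intro z hz
  have hcentral : M ⊔ L ≤ Subgroup.centralizer {z} := sup_le
    (fun g hg ↦ Subgroup.mem_centralizer_singleton_iff.2
      (setLike_mul_comm hg hz.1))
    (fun g hg ↦ Subgroup.mem_centralizer_singleton_iff.2
      (setLike_mul_comm hg hz.2))
  exact Subgroup.mem_center_iff.2 fun g ↦
    Subgroup.mem_centralizer_singleton_iff.1 (hcentral (h ▸ Subgroup.mem_top g))

theorem pow_mul_eq_commutatorElement_pow_mul {G : Type*} [Group G] {x y : G}
    (h : Commute y ⁅y, x⁆) (n : ℕ) : y ^ n * x = ⁅y, x⁆ ^ n * (x * y ^ n) := by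
  have hyx : y * x = ⁅y, x⁆ * (x * y) := by simp [commutatorElement_def, mul_assoc]
  induction n with
  | zero => simp
  | succ n ih =>
    rw [pow_succ y, mul_assoc, hyx, ← mul_assoc, (h.pow_left n).eq, mul_assoc, ← mul_assoc _ x, ih,
      pow_succ']
    simp only [mul_assoc]

theorem mul_pow_of_commutatorElement_mem_center {G : Type*} [Group G] {x y : G}
    (h : ⁅y, x⁆ ∈ Subgroup.center G) (n : ℕ) :
    (x * y) ^ n = x ^ n * y ^ n * ⁅y, x⁆ ^ n.choose 2 := by
  have hz : ∀ (m : ℕ) (g : G), Commute (⁅y, x⁆ ^ m) g := fun m g ↦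
    (Subgroup.mem_center_iff.1 (pow_mem h m) g).symm
  induction n with
  | zero => simp
  | succ n ih =>
    calc (x * y) ^ (n + 1)
        = x ^ n * (y ^ n * x) * y * ⁅y, x⁆ ^ n.choose 2 := by
          rw [pow_succ, ih, mul_assoc, (hz _ (x * y)).eq]
          simp only [mul_assoc]
      _ = x ^ (n + 1) * y ^ (n + 1) * (⁅y, x⁆ ^ n * ⁅y, x⁆ ^ n.choose 2) := by
          rw [pow_mul_eq_commutatorElement_pow_mul (Subgroup.mem_center_iff.1 h y), (hz n _).eq,
            pow_succ x, pow_succ y]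
          simp only [mul_assoc, (hz n _).eq]
      _ = x ^ (n + 1) * y ^ (n + 1) * ⁅y, x⁆ ^ (n + 1).choose 2 := by
          rw [← pow_add, Nat.choose_succ_succ' n 1, Nat.choose_one_right]

theorem mul_pow_prime_of_forall_isCoatom_isMulCommutative (hP : IsPGroup p P) (hp : Odd p)
    (hcyc : ¬ IsCyclic P) (hcomm : ∀ M : Subgroup P, IsCoatom M → IsMulCommutative M) (x y : P) :
    (x * y) ^ p = x ^ p * y ^ p := by
  obtain ⟨M, L, hM, hL, hML⟩ := exists_isCoatom_ne_of_not_isCyclic hcyc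
  have := hcomm M hM
  have := hcomm L hL
  have hcenter := inf_le_center_of_sup_eq_top (hM.sup_eq_top_of_ne hL hML)
  have hz : ⁅y, x⁆ ∈ Subgroup.center P := hcenter
    ⟨commutatorElement_mem_of_isCoatom hP hM y x, commutatorElement_mem_of_isCoatom hP hL y x⟩
  have hyp : x * y ^ p = y ^ p * x := Subgroup.mem_center_iff.1
    (hcenter ⟨pow_prime_mem_of_isCoatom hP hM y, pow_prime_mem_of_isCoatom hP hL y⟩) x
  have hzp : ⁅y, x⁆ ^ p = 1 := by
    simpa [hyp] using pow_mul_eq_commutatorElement_pow_mul (Subgroup.mem_center_iff.1 hz _) p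
  obtain ⟨m, hm⟩ : p ∣ p.choose 2 := by
    have hprime : p.Prime := Fact.out
    exact hprime.dvd_choose_self two_ne_zero (hprime.odd_iff.1 hp)
  rw [mul_pow_of_commutatorElement_mem_center hz, hm, pow_mul, hzp, one_pow, mul_one]

theorem PSqCondition.isCyclic_of_odd (hPSq : PSqCondition p P) (hP : IsPGroup p P) (hp : Odd p) :
    IsCyclic P := by
  suffices ∀ H : Subgroup P, IsCyclic H from Subgroup.topEquiv.isCyclic.1 (this ⊤)
  intro H
  induction H using WellFoundedLT.induction with
  | ind H ih =>
    by_contra hcyc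
    refine hcyc ((hPSq.of_injective H.subtype H.subtype_injective).isCyclic_of_mul_pow
      (hP.to_subgroup H) (mul_pow_prime_of_forall_isCoatom_isMulCommutative (hP.to_subgroup H) hp
        hcyc fun M hM ↦ ?_))
    have hlt : M.map H.subtype < H := by
      simpa [← MonoidHom.range_eq_map] using
        Subgroup.map_subtype_lt_map_subtype.2 (lt_top_iff_ne_top.2 hM.1)
    have := ih _ hlt
    exact ((M.equivMapOfInjective H.subtype H.subtype_injective).isCyclic.2 this).isMulCommutative

end CyclicPGroups

section MaximalNormalAbelian

variable {S : Type*} [Group S]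

theorem exists_mem_forall_commutatorElement_mem [Group.IsNilpotent S] {A C : Subgroup S}
    [C.Normal] (h : ¬ C ≤ A) : ∃ x ∈ C, x ∉ A ∧ ∀ g : S, ⁅x, g⁆ ∈ A := by
  classical
  have hex : ∃ n, ∃ x ∈ Subgroup.upperCentralSeries S n, x ∈ C ∧ x ∉ A := by
    obtain ⟨x, hxC, hxA⟩ := SetLike.not_le_iff_exists.1 h
    obtain ⟨n, hn⟩ := Group.IsNilpotent.nilpotent S
    exact ⟨n, x, hn ▸ Subgroup.mem_top x, hxC, hxA⟩
  obtain ⟨x, hx, hxC, hxA⟩ := Nat.find_spec hex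
  obtain ⟨n, hn⟩ : ∃ n, Nat.find hex = n + 1 := Nat.exists_eq_succ_of_ne_zero fun h0 ↦ by
    rw [h0, Subgroup.upperCentralSeries_zero, Subgroup.mem_bot] at hx
    exact hxA (hx ▸ one_mem A)
  refine ⟨x, hxC, hxA, fun g ↦ by_contra fun hg ↦ Nat.find_min hex (m := n) (by omega) ?_⟩
  rw [hn] at hx
  exact ⟨_, Subgroup.mem_upperCentralSeries_succ_iff.1 hx g, Subgroup.commutator_le_left C ⊤
    (Subgroup.commutator_mem_commutator hxC (Subgroup.mem_top g)), hg⟩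

theorem normal_sup_zpowers {A : Subgroup S} [A.Normal] {x : S} (hx : ∀ g : S, ⁅x, g⁆ ∈ A) :
    (A ⊔ Subgroup.zpowers x).Normal where
  conj_mem y hy g := by
    obtain ⟨a, ha, b, hb, rfl⟩ := Subgroup.mem_sup_of_normal_left.1 hy
    obtain ⟨k, rfl⟩ := Subgroup.mem_zpowers_iff.1 hb
    have hgx : g * x * g⁻¹ ∈ A ⊔ Subgroup.zpowers x := by
      rw [show g * x * g⁻¹ = ⁅x, g⁆⁻¹ * x by simp [commutatorElement_def, mul_assoc]]
      exact Subgroup.mul_mem_sup (inv_mem (hx g)) (Subgroup.mem_zpowers x)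
    rw [show g * (a * x ^ k) * g⁻¹ = g * a * g⁻¹ * (g * x * g⁻¹) ^ k by rw [conj_zpow]; group]
    exact mul_mem (Subgroup.mem_sup_left (Subgroup.Normal.conj_mem ‹_› a ha g)) (zpow_mem hgx k)

theorem isMulCommutative_sup_zpowers {A : Subgroup S} [A.Normal] [IsMulCommutative A] {x : S}
    (hx : x ∈ Subgroup.centralizer (A : Set S)) : IsMulCommutative ↥(A ⊔ Subgroup.zpowers x) := by
  refine .of_setLike_mul_comm fun y hy z hz ↦ ?_
  obtain ⟨a, ha, _, ⟨k, rfl⟩, rfl⟩ := Subgroup.mem_sup_of_normal_left.1 hy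
  obtain ⟨b, hb, _, ⟨l, rfl⟩, rfl⟩ := Subgroup.mem_sup_of_normal_left.1 hz
  have hax : Commute a x := Subgroup.mem_centralizer_iff.1 hx a ha
  have hbx : Commute b x := Subgroup.mem_centralizer_iff.1 hx b hb
  have hab : Commute a b := setLike_mul_comm ha hb
  exact (hab.mul_right (hax.zpow_right l)).mul_left
    ((hbx.zpow_right k).symm.mul_right (Commute.zpow_zpow_self x k l))

theorem exists_normal_isMulCommutative_centralizer_le (S : Type*) [Group S] [Finite S]
    [Group.IsNilpotent S] : ∃ A : Subgroup S, A.Normal ∧ IsMulCommutative A ∧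
      Subgroup.centralizer (A : Set S) ≤ A := by
  obtain ⟨A, ⟨hnormal, hcomm⟩, hmax⟩ :=
    {A : Subgroup S | A.Normal ∧ IsMulCommutative A}.toFinite.exists_maximal
      ⟨⊥, inferInstance, inferInstance⟩
  refine ⟨A, hnormal, hcomm, by_contra fun hle ↦ ?_⟩
  obtain ⟨x, hxC, hxA, hx⟩ := exists_mem_forall_commutatorElement_mem hle
  exact hxA (hmax (y := A ⊔ Subgroup.zpowers x)
    ⟨normal_sup_zpowers hx, isMulCommutative_sup_zpowers hxC⟩ le_sup_left
    (Subgroup.mem_sup_right (Subgroup.mem_zpowers x)))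

end MaximalNormalAbelian

section InvolutiveAutomorphism

variable {A : Type*} [Group A] [Finite A] [IsCyclic A]

theorem mem_zpowers_of_orderOf_dvd_orderOf {x y : A} (h : orderOf x ∣ orderOf y) :
    x ∈ Subgroup.zpowers y := by
  let : CommGroup A := IsCyclic.commGroup
  have hker : Subgroup.zpowers y = (powMonoidHom (orderOf y) : A →* A).ker := by
    refine Subgroup.eq_of_le_of_card_ge (Subgroup.zpowers_le.2 (pow_orderOf_eq_one y)) ?_
    rw [IsCyclic.card_powMonoidHom_ker, Nat.card_zpowers,
      Nat.gcd_eq_right (orderOf_dvd_natCard y)]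
  exact hker ▸ orderOf_dvd_iff_pow_eq_one.1 h

theorem exists_pow_eq_of_notMem_zpowers {p : ℕ} [Fact p.Prime] (hA : IsPGroup p A) {x y : A}
    (h : y ∉ Subgroup.zpowers x) : ∃ z ∈ Subgroup.zpowers y, z ^ p = x := by
  obtain ⟨m, hm⟩ := IsPGroup.iff_orderOf.1 hA x
  obtain ⟨n, hn⟩ := IsPGroup.iff_orderOf.1 hA y
  have hmn : m < n := by
    by_contra! hnm
    exact h (mem_zpowers_of_orderOf_dvd_orderOf (hm ▸ hn ▸ pow_dvd_pow p hnm))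
  have hyp : orderOf (y ^ p) = p ^ (n - 1) := by
    rw [orderOf_pow_of_dvd (Fact.out : p.Prime).ne_zero (hn ▸ dvd_pow_self p (by omega)), hn]
    exact (Nat.pow_sub_one (Fact.out : p.Prime).ne_zero (by omega)).symm
  obtain ⟨k, rfl⟩ := Subgroup.mem_zpowers_iff.1
    (mem_zpowers_of_orderOf_dvd_orderOf (x := x) (y := y ^ p)
      (hm ▸ hyp ▸ pow_dvd_pow p (by omega)))
  exact ⟨y ^ k, zpow_mem (Subgroup.mem_zpowers y) k, by
    rw [← zpow_natCast, ← zpow_natCast, ← zpow_mul, ← zpow_mul, mul_comm]⟩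

theorem apply_eq_inv_of_apply_eq_self_of_forall_mul_apply_ne (hA : IsPGroup 2 A) {σ : A →* A}
    (hσ : ∃ b, σ b ≠ b) {c : A} (hc : σ c = c) (hcnorm : ∀ b, b * σ b ≠ c) (b : A) :
    σ b = b⁻¹ := by
  let : CommGroup A := IsCyclic.commGroup
  obtain ⟨g, hg⟩ := IsCyclic.exists_generator (α := A)
  -- With `g * σ g = d ^ 2` for a fixed point `d`, the automorphism `σ` inverts `d⁻¹ * g`, which
  -- generates `A` because the fixed point `d` does not.
  obtain ⟨d, hd, hdg⟩ : ∃ d, σ d = d ∧ d ^ 2 = g * σ g := by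
    have hcg : c ∉ Subgroup.zpowers (g * σ g) := fun hmem ↦ by
      obtain ⟨k, rfl⟩ := Subgroup.mem_zpowers_iff.1 hmem
      exact hcnorm (g ^ k) (by rw [map_zpow, mul_zpow])
    obtain ⟨d, hdc, hd⟩ := exists_pow_eq_of_notMem_zpowers hA hcg
    obtain ⟨k, rfl⟩ := Subgroup.mem_zpowers_iff.1 hdc
    exact ⟨c ^ k, by rw [map_zpow, hc], hd⟩
  have hinv : σ (d⁻¹ * g) = (d⁻¹ * g)⁻¹ := by
    rw [eq_inv_iff_mul_eq_one, map_mul, map_inv, hd]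
    calc d⁻¹ * σ g * (d⁻¹ * g) = (d ^ 2)⁻¹ * (g * σ g) := by
          rw [sq, mul_inv_rev]; ac_rfl
      _ = 1 := by rw [hdg, inv_mul_cancel]
  have hgd : g ∈ Subgroup.zpowers (d⁻¹ * g) := by
    obtain ⟨e, he, rfl⟩ := exists_pow_eq_of_notMem_zpowers hA (x := d) (y := g) fun hmem ↦ by
      obtain ⟨x, hx⟩ := hσ
      obtain ⟨k, rfl⟩ := Subgroup.mem_zpowers_iff.1 (Subgroup.zpowers_le.2 hmem (hg x))
      exact hx (by rw [map_zpow, hd])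
    obtain ⟨k, rfl⟩ := Subgroup.mem_zpowers_iff.1 he
    obtain ⟨n, hn⟩ := IsPGroup.iff_orderOf.1 hA g
    rw [show ((g ^ k) ^ 2)⁻¹ * g = g ^ (1 - 2 * k) by group, mem_zpowers_zpow_iff, hn]
    exact Int.isCoprime_iff_gcd_eq_one.1 (by push_cast; exact IsCoprime.pow_right ⟨1, k, by ring⟩)
  obtain ⟨k, hk⟩ := Subgroup.mem_zpowers_iff.1 (Subgroup.zpowers_le.2 hgd (hg b))
  rw [← hk, map_zpow, hinv, inv_zpow]

end InvolutiveAutomorphism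

section QuaternionGroupLift

variable {H : Type*} [Group H]

theorem zpow_eq_zpow_of_intCast_eq {a : H} {m : ℕ} (h : a ^ m = 1) {k l : ℤ}
    (hkl : (k : ZMod m) = l) : a ^ k = a ^ l :=
  zpow_eq_zpow_iff_modEq.2 (((ZMod.intCast_eq_intCast_iff k l m).1 hkl).of_dvd
    (Int.natCast_dvd_natCast.2 (orderOf_dvd_of_pow_eq_one h)))

theorem zpow_mul_eq_mul_zpow_neg {a x : H} (hxa : x * a * x⁻¹ = a⁻¹) (k : ℤ) :
    a ^ k * x = x * a ^ (-k) := by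
  have hconj : x * a ^ (-k) * x⁻¹ = a ^ k := by rw [← conj_zpow, hxa, inv_zpow', neg_neg]
  rw [← hconj, inv_mul_cancel_right]

variable {n : ℕ} {a x : H}

/-- The homomorphism out of the generalized quaternion group of order `4 * n` given by a pair
satisfying the defining relations. -/
def quaternionGroupLift (ha : a ^ (2 * n) = 1) (hx : x * x = a ^ n) (hxa : x * a * x⁻¹ = a⁻¹) :
    QuaternionGroup n →* H :=
  MonoidHom.mk'
    (fun
      | .a i => a ^ (i.cast : ℤ)
      | .xa i => x * a ^ (i.cast : ℤ)) <| by
    rintro (i | i) (j | j)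
    · rw [QuaternionGroup.a_mul_a, ← zpow_add]
      exact zpow_eq_zpow_of_intCast_eq ha (by simp only [Int.cast_add, ZMod.intCast_zmod_cast])
    · rw [QuaternionGroup.a_mul_xa, ← mul_assoc, zpow_mul_eq_mul_zpow_neg hxa, mul_assoc,
        ← zpow_add]
      exact congrArg (x * ·) (zpow_eq_zpow_of_intCast_eq ha
        (by simp only [Int.cast_add, Int.cast_neg, ZMod.intCast_zmod_cast]; ring))
    · rw [QuaternionGroup.xa_mul_a, mul_assoc, ← zpow_add]
      exact congrArg (x * ·) (zpow_eq_zpow_of_intCast_eq ha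
        (by simp only [Int.cast_add, ZMod.intCast_zmod_cast]))
    · rw [QuaternionGroup.xa_mul_xa, mul_assoc, ← mul_assoc (a ^ _) x,
        zpow_mul_eq_mul_zpow_neg hxa, mul_assoc, ← zpow_add, ← mul_assoc, hx, ← zpow_natCast,
        ← zpow_add]
      exact zpow_eq_zpow_of_intCast_eq ha
        (by simp only [Int.cast_add, Int.cast_neg, Int.cast_natCast, ZMod.intCast_zmod_cast]; ring)

variable (ha : a ^ (2 * n) = 1) (hx : x * x = a ^ n) (hxa : x * a * x⁻¹ = a⁻¹)

theorem quaternionGroupLift_a (k : ℤ) : quaternionGroupLift ha hx hxa (.a k) = a ^ k :=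
  zpow_eq_zpow_of_intCast_eq ha (by simp)

theorem quaternionGroupLift_xa (k : ℤ) : quaternionGroupLift ha hx hxa (.xa k) = x * a ^ k :=
  congrArg (x * ·) (zpow_eq_zpow_of_intCast_eq ha (by simp))

theorem quaternionGroupLift_injective (horder : orderOf a = 2 * n)
    (hmem : x ∉ Subgroup.zpowers a) : Function.Injective (quaternionGroupLift ha hx hxa) := by
  refine (injective_iff_map_eq_one _).2 ?_
  rintro (i | i) hi <;> obtain ⟨k, rfl⟩ := ZMod.intCast_surjective i
  · rw [quaternionGroupLift_a, ← orderOf_dvd_iff_zpow_eq_one, horder,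
      ← ZMod.intCast_zmod_eq_zero_iff_dvd] at hi
    exact congrArg QuaternionGroup.a hi
  · rw [quaternionGroupLift_xa] at hi
    exact absurd (eq_inv_of_mul_eq_one_left hi ▸ inv_mem (zpow_mem (Subgroup.mem_zpowers a) k)) hmem

theorem quaternionGroupLift_surjective
    (h : ∀ y, y ∈ Subgroup.zpowers a ∨ x⁻¹ * y ∈ Subgroup.zpowers a) :
    Function.Surjective (quaternionGroupLift ha hx hxa) := by
  intro y
  rcases h y with hy | hy <;> obtain ⟨k, hk⟩ := Subgroup.mem_zpowers_iff.1 hy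
  · exact ⟨.a k, (quaternionGroupLift_a ha hx hxa k).trans hk⟩
  · exact ⟨.xa k, (quaternionGroupLift_xa ha hx hxa k).trans (hk ▸ mul_inv_cancel_left x y)⟩

end QuaternionGroupLift

section AtMostOneInvolution

variable {S : Type*} [Group S]

theorem AtMostOneInvolution.eq_of_sq_eq_one (hI : AtMostOneInvolution S) {x y : S} (hx : x ^ 2 = 1)
    (hy : y ^ 2 = 1) (hx1 : x ≠ 1) (hy1 : y ≠ 1) : x = y :=
  hI x y (orderOf_eq_prime hx hx1) (orderOf_eq_prime hy hy1)

theorem AtMostOneInvolution.mem_of_sq_eq_one [Finite S] (hI : AtMostOneInvolution S)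
    (hS : IsPGroup 2 S) {A : Subgroup S} (hA : A ≠ ⊥) {x : S} (hx : x ^ 2 = 1) : x ∈ A := by
  rcases eq_or_ne x 1 with rfl | hx1
  · exact one_mem A
  have : Nontrivial A := A.nontrivial_iff_ne_bot.2 hA
  obtain ⟨z, hz⟩ := exists_prime_orderOf_dvd_card' (G := A) 2
    ((hS.to_subgroup A).card_eq_or_dvd.resolve_left Finite.one_lt_card.ne')
  rw [hI x z (orderOf_eq_prime hx hx1) ((Subgroup.orderOf_coe z).trans hz)]
  exact z.2

theorem mem_of_centralizer_zpowers_le_of_conj_eq {a y : S}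
    (hcent : Subgroup.centralizer (Subgroup.zpowers a : Set S) ≤ Subgroup.zpowers a)
    (hy : y * a * y⁻¹ = a) : y ∈ Subgroup.zpowers a := by
  refine hcent (Subgroup.mem_centralizer_iff.2 fun b hb ↦ ?_)
  obtain ⟨k, rfl⟩ := Subgroup.mem_zpowers_iff.1 hb
  exact (SemiconjBy.zpow_right (mul_inv_eq_iff_eq_mul.1 hy) k).symm

variable {a : S}

theorem not_orderOf_dvd_two_of_conj_eq_inv
    (hcent : Subgroup.centralizer (Subgroup.zpowers a : Set S) ≤ Subgroup.zpowers a) {y : S}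
    (hy : y ∉ Subgroup.zpowers a) (hya : y * a * y⁻¹ = a⁻¹) : ¬ orderOf a ∣ 2 := by
  refine fun h ↦ hy (mem_of_centralizer_zpowers_le_of_conj_eq hcent (hya.trans ?_))
  rw [inv_eq_iff_mul_eq_one, ← sq]
  exact orderOf_dvd_iff_pow_eq_one.1 h

theorem exists_orderOf_eq_two_pow_succ_succ (hS : IsPGroup 2 S)
    (h : ¬ orderOf a ∣ 2) : ∃ n, orderOf a = 2 ^ (n + 2) := by
  obtain ⟨n, hn⟩ := IsPGroup.iff_orderOf.1 hS a
  match n with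
  | 0 | 1 => simp [hn] at h
  | n + 2 => exact ⟨n, hn⟩

theorem AtMostOneInvolution.mul_self_eq_pow (hI : AtMostOneInvolution S) {n : ℕ}
    (hn : orderOf a = 2 * n) (hn0 : n ≠ 0) {x : S} (hx : x ∉ Subgroup.zpowers a)
    (hxx : x ^ 2 ∈ Subgroup.zpowers a) (hxa : x * a * x⁻¹ = a⁻¹) : x * x = a ^ n := by
  have han : (a ^ n) ^ 2 = 1 := by rw [← pow_mul, mul_comm, ← hn, pow_orderOf_eq_one]
  have han1 : a ^ n ≠ 1 := fun h ↦ by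
    have := Nat.le_of_dvd (by omega) (orderOf_dvd_of_pow_eq_one h)
    omega
  have hxx1 : x ^ 2 ≠ 1 := fun h ↦ hx (by
    rw [hI.eq_of_sq_eq_one h han (fun h1 ↦ hx (h1 ▸ one_mem _)) han1]
    exact pow_mem (Subgroup.mem_zpowers a) n)
  refine sq x ▸ hI.eq_of_sq_eq_one ?_ han hxx1 han1
  obtain ⟨k, hk⟩ := Subgroup.mem_zpowers_iff.1 hxx
  calc (x ^ 2) ^ 2 = x * a ^ k * x⁻¹ * a ^ k := by rw [hk]; group
    _ = 1 := by rw [← conj_zpow, hxa, inv_zpow, inv_mul_cancel]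

variable [Finite S] [(Subgroup.zpowers a).Normal]

theorem AtMostOneInvolution.conj_eq_inv_of_sq_mem (hI : AtMostOneInvolution S) (hS : IsPGroup 2 S)
    (hcent : Subgroup.centralizer (Subgroup.zpowers a : Set S) ≤ Subgroup.zpowers a) {y : S}
    (hy : y ∉ Subgroup.zpowers a) (hyy : y ^ 2 ∈ Subgroup.zpowers a) : y * a * y⁻¹ = a⁻¹ := by
  have hbot : Subgroup.zpowers a ≠ ⊥ := fun h ↦ hy (hcent (by
    rw [h, Subgroup.coe_bot, Subgroup.mem_centralizer_singleton_iff, mul_one, one_mul]))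
  have hsq : ∀ b ∈ Subgroup.zpowers a, b * (y * b * y⁻¹) ≠ (y ^ 2)⁻¹ := fun b hb hby ↦ by
    refine hy ((Subgroup.mul_mem_cancel_left _ hb).1
      (hI.mem_of_sq_eq_one hS hbot (x := b * y) ?_))
    calc (b * y) ^ 2 = b * (y * b * y⁻¹) * y ^ 2 := by simp only [sq]; group
      _ = 1 := by rw [hby, inv_mul_cancel]
  refine congrArg Subtype.val (apply_eq_inv_of_apply_eq_self_of_forall_mul_apply_ne
    (hS.to_subgroup _) (σ := (MulAut.conjNormal y).toMonoidHom)
    ⟨⟨a, Subgroup.mem_zpowers a⟩, fun h ↦ hy ?_⟩ (c := ⟨(y ^ 2)⁻¹, inv_mem hyy⟩)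
    (Subtype.ext (by simp [sq])) (fun b h ↦ hsq b b.2 (congrArg Subtype.val h))
    ⟨a, Subgroup.mem_zpowers a⟩)
  exact mem_of_centralizer_zpowers_le_of_conj_eq hcent (congrArg Subtype.val h)

theorem AtMostOneInvolution.sq_mem_zpowers (hI : AtMostOneInvolution S) (hS : IsPGroup 2 S)
    (hcent : Subgroup.centralizer (Subgroup.zpowers a : Set S) ≤ Subgroup.zpowers a) (y : S) :
    y ^ 2 ∈ Subgroup.zpowers a := by
  -- If `y ^ 2` inverts `a` and `y` conjugates `a` to `a ^ k`, then `k ^ 2 ≡ -1` modulo `4`.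
  have hstep : ∀ y : S, (y ^ 2) ^ 2 ∈ Subgroup.zpowers a → y ^ 2 ∈ Subgroup.zpowers a := by
    intro y hy
    by_contra hyA
    have hinv := hI.conj_eq_inv_of_sq_mem hS hcent hyA hy
    obtain ⟨n, hn⟩ := exists_orderOf_eq_two_pow_succ_succ hS
      (not_orderOf_dvd_two_of_conj_eq_inv hcent hyA hinv)
    obtain ⟨k, hk⟩ := Subgroup.mem_zpowers_iff.1
      (Subgroup.Normal.conj_mem ‹_› a (Subgroup.mem_zpowers a) y)
    have hkk : a ^ (k * k + 1) = 1 := by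
      rw [zpow_add_one, ← eq_inv_iff_mul_eq_one, zpow_mul, hk, conj_zpow, hk, ← hinv, sq]
      group
    have hdvd : (4 : ℤ) ∣ k * k + 1 := by
      refine dvd_trans ?_ (orderOf_dvd_iff_zpow_eq_one.2 hkk)
      rw [hn, pow_add]
      exact ⟨2 ^ n, by push_cast; ring⟩
    rcases Int.even_or_odd' k with ⟨m, rfl | rfl⟩ <;> ring_nf at hdvd <;> omega
  obtain ⟨j, hj⟩ := hS y
  suffices ∀ j (y : S), y ^ 2 ^ j ∈ Subgroup.zpowers a → y ^ 2 ∈ Subgroup.zpowers a from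
    this j y (hj ▸ one_mem _)
  intro j
  induction j with
  | zero => exact fun y hy ↦ pow_mem (by simpa using hy) 2
  | succ j ih => exact fun y hy ↦ hstep y (ih _ (by rwa [← pow_mul, ← pow_succ']))

theorem AtMostOneInvolution.isCyclic_or_nonempty_quaternionGroup_mulEquiv {S : Type*} [Group S]
    [Finite S] (hI : AtMostOneInvolution S) (hS : IsPGroup 2 S) :
    IsCyclic S ∨ ∃ n, Nonempty (QuaternionGroup (2 ^ (n + 1)) ≃* S) := by
  have := hS.isNilpotent
  obtain ⟨A, hAnormal, _, hcent⟩ := exists_normal_isMulCommutative_centralizer_le S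
  have hAcyclic : IsCyclic A := (hI.of_injective A.subtype A.subtype_injective).pSqCondition_two
    |>.isCyclic_of_isMulCommutative (hS.to_subgroup A)
  obtain ⟨a, rfl⟩ := (Subgroup.isCyclic_iff_exists_zpowers_eq_top A).1 hAcyclic
  refine or_iff_not_imp_left.2 fun hcyclic ↦ ?_
  obtain ⟨x, hx⟩ : ∃ x, x ∉ Subgroup.zpowers a := by
    by_contra! hall
    exact hcyclic ⟨a, hall⟩
  have hinv : ∀ y ∉ Subgroup.zpowers a, y * a * y⁻¹ = a⁻¹ := fun y hy ↦
    hI.conj_eq_inv_of_sq_mem hS hcent hy (hI.sq_mem_zpowers hS hcent y)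
  obtain ⟨n, hn⟩ := exists_orderOf_eq_two_pow_succ_succ hS
    (not_orderOf_dvd_two_of_conj_eq_inv hcent hx (hinv x hx))
  rw [pow_succ'] at hn
  refine ⟨n, ⟨.ofBijective (quaternionGroupLift (hn ▸ pow_orderOf_eq_one a)
    (hI.mul_self_eq_pow hn (by positivity) hx (hI.sq_mem_zpowers hS hcent x) (hinv x hx))
    (hinv x hx)) ⟨quaternionGroupLift_injective _ _ _ hn hx,
    quaternionGroupLift_surjective _ _ _ fun y ↦ or_iff_not_imp_left.2 fun hy ↦ ?_⟩⟩⟩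
  refine mem_of_centralizer_zpowers_le_of_conj_eq hcent ?_
  calc x⁻¹ * y * a * (x⁻¹ * y)⁻¹ = x⁻¹ * (y * a * y⁻¹) * x := by group
    _ = x⁻¹ * (x * a * x⁻¹) * x := by rw [hinv y hy, hinv x hx]
    _ = a := by group

end AtMostOneInvolution

theorem quaternionGroup_hom_ext {n : ℕ} {H : Type*} [Group H] {f g : QuaternionGroup n →* H}
    (ha : f (.a 1) = g (.a 1)) (hx : f (.xa 0) = g (.xa 0)) : f = g := by
  have map_a (i) : f (.a i) = g (.a i) := by
    obtain ⟨k, rfl⟩ := ZMod.intCast_surjective i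
    have ha1 : (QuaternionGroup.a k : QuaternionGroup n) = .a 1 ^ k := by
      rcases k with k | k
      · simp
      · rw [zpow_negSucc, QuaternionGroup.a_one_pow, Int.cast_negSucc]
        rfl
    rw [ha1, map_zpow, map_zpow, ha]
  ext (i | i)
  · exact map_a i
  · rw [← zero_add i, ← QuaternionGroup.xa_mul_a, map_mul, map_mul, hx, map_a]

section LargeQuaternion

variable {m : ℕ}

theorem exists_mulAut_quaternionGroup_apply_a_eq (hm : 3 ≤ m) (φ : MulAut (QuaternionGroup m)) :
    ∃ k, ∀ i, φ (.a i) = .a (k * i) := by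
  have : NeZero m := ⟨by omega⟩
  obtain ⟨k, hk⟩ : ∃ k, φ (.a 1) = .a k := by
    rcases h : φ (.a 1) with k | j
    · exact ⟨k, rfl⟩
    · have hdvd : orderOf (QuaternionGroup.a (1 : ZMod (2 * m))) ∣ 4 := by
        rw [← MulEquiv.orderOf_eq φ, h, QuaternionGroup.orderOf_xa]
      rw [QuaternionGroup.orderOf_a_one] at hdvd
      have := Nat.le_of_dvd four_pos hdvd
      omega
  have apply_natCast (n : ℕ) : φ (.a n) = .a (k * n) := by
    induction n with
    | zero => rw [Nat.cast_zero, mul_zero, QuaternionGroup.a_zero, map_one]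
    | succ n ih =>
      rw [Nat.cast_succ, ← QuaternionGroup.a_mul_a, map_mul, ih, hk, QuaternionGroup.a_mul_a,
        mul_add_one]
  exact ⟨k, fun i ↦ by simpa only [ZMod.natCast_zmod_val] using apply_natCast i.val⟩

theorem exists_mulAut_quaternionGroup_apply_eq (hm : 3 ≤ m) (φ : MulAut (QuaternionGroup m)) :
    ∃ k l : ZMod (2 * m), IsUnit k ∧ (∀ i, φ (.a i) = .a (k * i)) ∧
      ∀ i, φ (.xa i) = .xa (l + k * i) := by
  obtain ⟨k, hk⟩ := exists_mulAut_quaternionGroup_apply_a_eq hm φ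
  obtain ⟨k', hk'⟩ := exists_mulAut_quaternionGroup_apply_a_eq hm φ⁻¹
  have hkk' : k * k' = 1 := by
    have := MulAut.apply_inv_self (QuaternionGroup m) φ (.a 1)
    rwa [hk', hk, mul_one, QuaternionGroup.a.injEq] at this
  obtain ⟨l, hl⟩ : ∃ l, φ (.xa 0) = .xa l := by
    rcases h : φ (.xa 0) with i | l
    · have := MulAut.inv_apply_self (QuaternionGroup m) φ (.xa 0)
      rw [h, hk'] at this
      cases this
    · exact ⟨l, rfl⟩
  refine ⟨k, l, IsUnit.of_mul_eq_one _ hkk', hk, fun i ↦ ?_⟩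
  rw [← zero_add i, ← QuaternionGroup.xa_mul_a, map_mul, hl, hk, QuaternionGroup.xa_mul_a, zero_add]

theorem exists_one_sub_eq_two_mul_of_isUnit [NeZero m] {k : ZMod (2 * m)} (hk : IsUnit k) :
    ∃ s, 1 - k = 2 * s := by
  rw [← ZMod.natCast_zmod_val k, ZMod.isUnit_iff_coprime] at hk
  obtain ⟨s, hs⟩ := Nat.coprime_two_right.1 (Nat.Coprime.coprime_mul_right_right hk)
  refine ⟨-s, ?_⟩
  rw [← ZMod.natCast_zmod_val k, hs]
  push_cast
  ring

theorem apply_a_one_of_mem_commutator (hm : 3 ≤ m) {φ : MulAut (QuaternionGroup m)}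
    (hφ : φ ∈ commutator (MulAut (QuaternionGroup m))) : φ (.a 1) = .a 1 := by
  suffices h : commutator (MulAut (QuaternionGroup m)) ≤
      MulAction.stabilizer _ (QuaternionGroup.a (1 : ZMod (2 * m))) from h hφ
  refine Subgroup.commutator_le.2 fun φ _ ψ _ ↦ MulAction.mem_stabilizer_iff.2 ?_
  obtain ⟨k, -, -, hk, -⟩ := exists_mulAut_quaternionGroup_apply_eq hm φ
  obtain ⟨k', -, -, hk', -⟩ := exists_mulAut_quaternionGroup_apply_eq hm ψ
  obtain ⟨n, -, -, hn, -⟩ := exists_mulAut_quaternionGroup_apply_eq hm (ψ * φ)⁻¹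
  calc ⁅φ, ψ⁆ (.a 1) = φ (ψ ((ψ * φ)⁻¹ (.a 1))) := by
        rw [commutatorElement_def, mul_assoc _ φ⁻¹, ← mul_inv_rev, MulAut.mul_apply,
          MulAut.mul_apply]
    _ = ψ (φ ((ψ * φ)⁻¹ (.a 1))) := by simp only [hn, hk, hk', mul_left_comm]
    _ = .a 1 := MulAut.apply_inv_self _ (ψ * φ) _

theorem commutator_commutator_mulAut_quaternionGroup_le (hm : 3 ≤ m) :
    ⁅commutator (MulAut (QuaternionGroup m)), ⊤⁆ ≤
      (MulAut.conj : QuaternionGroup m →* _).range := by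
  have : NeZero m := ⟨by omega⟩
  refine Subgroup.commutator_le.2 fun φ hφ ψ _ ↦ ?_
  obtain ⟨k, l, -, hφa, hφx⟩ := exists_mulAut_quaternionGroup_apply_eq hm φ
  obtain ⟨k', l', hk', hψa, hψx⟩ := exists_mulAut_quaternionGroup_apply_eq hm ψ
  obtain rfl : k = 1 := by
    have := apply_a_one_of_mem_commutator hm hφ
    rwa [hφa, mul_one, QuaternionGroup.a.injEq] at this
  obtain ⟨s, hs⟩ := exists_one_sub_eq_two_mul_of_isUnit hk'
  have hconj : φ * ψ = MulAut.conj (.a (-(s * l))) * (ψ * φ) := by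
    have inv_a (i : ZMod (2 * m)) : (QuaternionGroup.a i)⁻¹ = .a (-i) := rfl
    ext (i | i)
    · simp only [MulAut.mul_apply, MulAut.conj_apply, hφa, hψa, inv_a, QuaternionGroup.a_mul_a]
      congr 1
      ring
    · simp only [MulAut.mul_apply, MulAut.conj_apply, hφx, hψx, inv_a, QuaternionGroup.a_mul_xa,
        QuaternionGroup.xa_mul_a]
      congr 1
      linear_combination l * hs
  refine ⟨.a (-(s * l)), ?_⟩
  rw [commutatorElement_def, hconj]
  group

end LargeQuaternion

section QuaternionEight

/-- The index of the cyclic subgroup of order four of `Q₈` (in the order `⟨a 1⟩`, `⟨xa 0⟩`,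
`⟨xa 1⟩`) containing a given noncentral element; the value on central elements is irrelevant. -/
def quaternionAxis : QuaternionGroup 2 → Fin 3
  | .a _ => 0
  | .xa i => if i = 0 ∨ i = 2 then 1 else 2

/-- A generator of each of the three cyclic subgroups of order four of `Q₈`. -/
def axisGenerator : Fin 3 → QuaternionGroup 2 :=
  ![.a 1, .xa 0, .xa 1]

theorem quaternionAxis_axisGenerator : ∀ m, quaternionAxis (axisGenerator m) = m := by
  decide

theorem axisGenerator_sq_ne_one : ∀ m, axisGenerator m ^ 2 ≠ 1 := by
  decide

theorem eq_axisGenerator_or_inv : ∀ q : QuaternionGroup 2, q ^ 2 ≠ 1 →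
    q = axisGenerator (quaternionAxis q) ∨ q = (axisGenerator (quaternionAxis q))⁻¹ := by
  decide

theorem quaternionAxis_inv : ∀ q, quaternionAxis q⁻¹ = quaternionAxis q := by
  decide

theorem mulAut_apply_sq_ne_one (φ : MulAut (QuaternionGroup 2)) {q : QuaternionGroup 2}
    (hq : q ^ 2 ≠ 1) : φ q ^ 2 ≠ 1 := by
  rwa [← map_pow, map_ne_one_iff φ φ.injective]

theorem quaternionAxis_mulAut_apply (φ : MulAut (QuaternionGroup 2)) {q : QuaternionGroup 2}
    (hq : q ^ 2 ≠ 1) :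
    quaternionAxis (φ (axisGenerator (quaternionAxis q))) = quaternionAxis (φ q) := by
  obtain h | h := eq_axisGenerator_or_inv q hq
  · rw [← h]
  · rw [← quaternionAxis_inv, ← map_inv, ← h]

/-- The action of the automorphisms of `Q₈` on its three cyclic subgroups of order four. -/
def axisPerm : MulAut (QuaternionGroup 2) →* Equiv.Perm (Fin 3) :=
  MonoidHom.toHomPerm
    { toFun φ := fun m ↦ quaternionAxis (φ (axisGenerator m))
      map_one' := funext quaternionAxis_axisGenerator
      map_mul' φ ψ := funext fun m ↦ by
        exact (quaternionAxis_mulAut_apply φ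
          (mulAut_apply_sq_ne_one ψ (axisGenerator_sq_ne_one m))).symm }

theorem axisPerm_apply (φ : MulAut (QuaternionGroup 2)) (m : Fin 3) :
    axisPerm φ m = quaternionAxis (φ (axisGenerator m)) := rfl

theorem exists_conj_eq_of_quaternionAxis_eq : ∀ u v : QuaternionGroup 2,
    u ^ 2 ≠ 1 ∧ v ^ 2 ≠ 1 ∧ quaternionAxis u = 0 ∧ quaternionAxis v = 1 →
      ∃ q, q * .a 1 * q⁻¹ = u ∧ q * .xa 0 * q⁻¹ = v := by
  decide

theorem quaternionAxis_conj_axisGenerator : ∀ q m,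
    quaternionAxis (q * axisGenerator m * q⁻¹) = m := by
  decide

theorem ker_axisPerm : axisPerm.ker = (MulAut.conj : QuaternionGroup 2 →* _).range := by
  refine le_antisymm (fun φ hφ ↦ ?_) ?_
  · have quaternionAxis_apply (m) : quaternionAxis (φ (axisGenerator m)) = m := by
      rw [← axisPerm_apply, MonoidHom.mem_ker.1 hφ, Equiv.Perm.one_apply]
    obtain ⟨q, ha, hx⟩ := exists_conj_eq_of_quaternionAxis_eq (φ (.a 1)) (φ (.xa 0))
      ⟨mulAut_apply_sq_ne_one φ (by decide), mulAut_apply_sq_ne_one φ (by decide),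
        quaternionAxis_apply 0, quaternionAxis_apply 1⟩
    exact ⟨q, MulEquiv.toMonoidHom_injective (quaternionGroup_hom_ext ha hx)⟩
  · rintro _ ⟨q, rfl⟩
    exact MonoidHom.mem_ker.2 (Equiv.ext (quaternionAxis_conj_axisGenerator q))

end QuaternionEight

section ConjAut

variable {Q G : Type*} [Group Q] [Group G] (ι : Q →* G) (hι : Function.Injective ι)
  [ι.range.Normal]

/-- The action of `G` by conjugation on a normal subgroup, transported to an abstract group `Q`
along an embedding `ι` of `Q` onto that subgroup. -/
noncomputable def conjAut : G →* MulAut Q :=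
  (MulAut.congr (MonoidHom.ofInjective hι).symm).toMonoidHom.comp MulAut.conjNormal

theorem map_conjAut_apply (g : G) (q : Q) : ι (conjAut ι hι g q) = g * ι q * g⁻¹ :=
  congrArg Subtype.val ((MonoidHom.ofInjective hι).apply_symm_apply
    (MulAut.conjNormal g (MonoidHom.ofInjective hι q)))

theorem conjAut_map (q : Q) : conjAut ι hι (ι q) = MulAut.conj q := by
  ext x
  apply hι
  rw [map_conjAut_apply, MulAut.conj_apply, map_mul, map_mul, map_inv]

theorem conjAut_comp {H : Type*} [Group H] (f : G →* H) (hf : Function.Injective (f.comp ι))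
    [(f.comp ι).range.Normal] (g : G) : conjAut (f.comp ι) hf (f g) = conjAut ι hι g := by
  ext q
  apply hf
  rw [map_conjAut_apply, MonoidHom.comp_apply, MonoidHom.comp_apply, map_conjAut_apply, map_mul,
    map_mul, map_inv]

theorem commute_of_conjAut_eq_one {g : G} (h : conjAut ι hι g = 1) (q : Q) : Commute g (ι q) := by
  rw [commute_iff_eq, ← mul_inv_eq_iff_eq_mul, ← map_conjAut_apply ι hι, h, MulAut.one_apply]

end ConjAut

section Fitting

variable {G : Type*} [Group G]

theorem exists_normal_le_not_le_commutator_le [Group.IsSolvable G] {C F : Subgroup G} [C.Normal]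
    (h : ¬ C ≤ F) : ∃ M : Subgroup G, M.Normal ∧ M ≤ C ∧ ¬ M ≤ F ∧ ⁅M, M⁆ ≤ F := by
  classical
  let M (n : ℕ) : Subgroup G := (fun K ↦ ⁅K, K⁆)^[n] C
  have hsucc (n) : M (n + 1) = ⁅M n, M n⁆ := Function.iterate_succ_apply' _ _ _
  have hM (n) : (M n).Normal ∧ M n ≤ C ∧ M n ≤ derivedSeries G n := by
    induction n with
    | zero => exact ⟨‹_›, le_rfl, le_top⟩
    | succ n ih =>
      have := ih.1
      rw [hsucc]
      exact ⟨Subgroup.commutator_normal _ _, (Subgroup.commutator_le_left _ _).trans ih.2.1,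
        Subgroup.commutator_mono ih.2.2 ih.2.2⟩
  obtain ⟨n, hn⟩ := Group.IsSolvable.solvable (G := G)
  have hex : ∃ n, M n ≤ F := ⟨n, (hM n).2.2.trans (hn ▸ bot_le)⟩
  have hne : Nat.find hex ≠ 0 := fun h0 ↦ h (h0 ▸ Nat.find_spec hex : M 0 ≤ F)
  obtain ⟨k, hk⟩ := Nat.exists_eq_succ_of_ne_zero hne
  exact ⟨M k, (hM k).1, (hM k).2.1, Nat.find_min hex (hk ▸ k.lt_succ_self),
    hsucc k ▸ (hk ▸ Nat.find_spec hex : M k.succ ≤ F)⟩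

theorem isNilpotent_sup_of_le_centralizer {F M : Subgroup G} [Group.IsNilpotent F]
    [Group.IsNilpotent M] (h : M ≤ Subgroup.centralizer F) :
    Group.IsNilpotent (F ⊔ M : Subgroup G) := by
  have hcomm (x : F) (y : M) : Commute (F.subtype x) (M.subtype y) :=
    Subgroup.mem_centralizer_iff.1 (h y.2) x x.2
  rw [← F.range_subtype, ← M.range_subtype, ← MonoidHom.noncommCoprod_range _ _ hcomm]
  exact Group.nilpotent_of_surjective _ (MonoidHom.rangeRestrict_surjective _)

theorem isNilpotent_of_commutator_le_of_le_centralizer {F M : Subgroup G} (hMM : ⁅M, M⁆ ≤ F)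
    (hMF : M ≤ Subgroup.centralizer F) : Group.IsNilpotent M := by
  refine Subgroup.isNilpotent_of_lowerCentralSeries_eq_bot (n := 2) (le_bot_iff.1 ?_)
  calc ⁅⁅M, M⁆, M⁆ ≤ ⁅F, M⁆ := Subgroup.commutator_mono hMM le_rfl
    _ = ⊥ := by rwa [Subgroup.commutator_comm, Subgroup.commutator_eq_bot_iff_le_centralizer]

theorem exists_normal_isNilpotent_centralizer_le (G : Type*) [Group G] [Finite G]
    [Group.IsSolvable G] :
    ∃ F : Subgroup G, F.Normal ∧ Group.IsNilpotent F ∧ Subgroup.centralizer F ≤ F := by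
  obtain ⟨F, ⟨hF, hFnil⟩, hmax⟩ := (Set.toFinite
    {F : Subgroup G | F.Normal ∧ Group.IsNilpotent F}).exists_maximal
      ⟨⊥, inferInstance, inferInstance⟩
  refine ⟨F, hF, hFnil, ?_⟩
  by_contra hC
  obtain ⟨M, hM, hMC, hMF, hMM⟩ := exists_normal_le_not_le_commutator_le hC
  have := isNilpotent_of_commutator_le_of_le_centralizer hMM hMC
  exact hMF (le_sup_right.trans (hmax (y := F ⊔ M)
    ⟨inferInstance, isNilpotent_sup_of_le_centralizer hMC⟩ le_sup_left))

variable {F : Subgroup G} [Finite F]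

theorem normal_map_subtype_sylow [F.Normal] [Group.IsNilpotent F] {p : ℕ} [Fact p.Prime]
    (P : Sylow p F) : ((P : Subgroup F).map F.subtype).Normal := by
  have hP : (P : Subgroup F).Normal :=
    ((Group.isNilpotent_of_finite_tfae (G := F)).out 0 3 rfl rfl).1 ‹_› p ‹_› P
  have := Sylow.characteristic_of_normal P hP
  exact ConjAct.normal_of_characteristic_of_normal

theorem commute_of_mem_sylow_of_mem_sylow [F.Normal] [Group.IsNilpotent F] {p q : ℕ}
    [Fact p.Prime] [Fact q.Prime] (hpq : p ≠ q) {P : Sylow p F} {Q : Sylow q F} {x y : F}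
    (hx : x ∈ P) (hy : y ∈ Q) : Commute (x : G) y :=
  Subgroup.commute_of_normal_of_disjoint _ _ (normal_map_subtype_sylow P)
    (normal_map_subtype_sylow Q)
    (IsPGroup.disjoint_of_ne p q hpq _ _ (P.isPGroup'.map _) (Q.isPGroup'.map _)) x y
    (Subgroup.mem_map_of_mem _ hx) (Subgroup.mem_map_of_mem _ hy)

theorem mem_centralizer_of_forall_sylow_commute {g : G}
    (h : ∀ (p : ℕ) [Fact p.Prime] (P : Sylow p F), ∀ x ∈ P, Commute g x) :
    g ∈ Subgroup.centralizer (F : Set G) := by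
  suffices hF : (Subgroup.centralizer {g}).subgroupOf F = ⊤ by
    refine Subgroup.mem_centralizer_iff.2 fun x hx ↦ ?_
    exact Subgroup.mem_centralizer_singleton_iff.1 (Subgroup.subgroupOf_eq_top.1 hF hx)
  rw [← Subgroup.index_eq_one]
  by_contra hne
  obtain ⟨p, hp, hdvd⟩ := Nat.exists_prime_and_dvd hne
  have := Fact.mk hp
  have hle : ((default : Sylow p F) : Subgroup F) ≤ (Subgroup.centralizer {g}).subgroupOf F :=
    fun x hx ↦ Subgroup.mem_subgroupOf.2
      (Subgroup.mem_centralizer_singleton_iff.2 (h p _ x hx).symm)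
  exact (default : Sylow p F).not_dvd_index (hdvd.trans (Subgroup.index_dvd_of_le hle))

theorem commute_of_mem_commutator_of_isCyclic {N : Subgroup G} [N.Normal] [IsCyclic N] {g : G}
    (hg : g ∈ commutator G) {x : G} (hx : x ∈ N) : Commute g x := by
  have hker := Abelianization.commutator_subset_ker
    ((IsCyclic.mulAutMulEquiv N).toMonoidHom.comp MulAut.conjNormal) hg
  have hconj : MulAut.conjNormal g = (1 : MulAut N) :=
    (map_eq_one_iff _ (IsCyclic.mulAutMulEquiv N).injective).1 hker
  rw [commute_iff_eq, ← mul_inv_eq_iff_eq_mul]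
  exact (MulAut.conjNormal_apply g ⟨x, hx⟩).symm.trans (by rw [hconj, MulAut.one_apply])

theorem mem_of_conj_eq_conj_on_sylow_two [F.Normal] [Group.IsNilpotent F]
    (hF : Subgroup.centralizer F ≤ F)
    (hcyc : ∀ (p : ℕ) [Fact p.Prime], Odd p → ∀ P : Sylow p F, IsCyclic P) (P : Sylow 2 F) {w : G}
    (hw : w ∈ commutator G) {z : F} (hz : z ∈ P) (h : ∀ x ∈ P, w * x * w⁻¹ = z * x * (z : G)⁻¹) :
    w ∈ F := by
  have hzw : (z : G)⁻¹ * w ∈ Subgroup.centralizer F := by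
    refine mem_centralizer_of_forall_sylow_commute fun p hp P' x hx ↦ ?_
    obtain rfl | hodd := hp.out.eq_two_or_odd'
    · have hP := (Group.isNilpotent_of_finite_tfae.out 0 3 rfl rfl).1 ‹_› 2 hp P
      have := Sylow.unique_of_normal P hP
      obtain rfl := Subsingleton.elim P P'
      rw [commute_iff_eq, ← mul_inv_eq_iff_eq_mul]
      calc (z : G)⁻¹ * w * x * ((z : G)⁻¹ * w)⁻¹ = (z : G)⁻¹ * (w * x * w⁻¹) * z := by group
        _ = x := by rw [h x hx]; group
    · have := normal_map_subtype_sylow P'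
      have := (Subgroup.equivMapOfInjective (P' : Subgroup F) _ F.subtype_injective).isCyclic.1
        (hcyc p hodd P')
      have hzx : Commute (z : G) x :=
        commute_of_mem_sylow_of_mem_sylow (by rintro rfl; exact absurd hodd (by decide)) hz hx
      exact hzx.inv_left.mul_left
        (commute_of_mem_commutator_of_isCyclic hw (Subgroup.mem_map_of_mem F.subtype hx))
  simpa using F.mul_mem z.2 (hF hzw)

end Fitting

section FittingHeight

variable {G : Type} [Group G] {F : Subgroup G}

theorem nilpotentFactor_bot_of_isNilpotent [hF : Group.IsNilpotent F] : nilpotentFactor ⊥ F := by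
  obtain ⟨m, hm⟩ := (Subgroup.isNilpotent_iff_lowerCentralSeries F).1 hF
  have lowerCentralSeries_eq (n) : (fun K ↦ ⁅K, F⁆)^[n] F = F.lowerCentralSeries n := by
    induction n with
    | zero => rfl
    | succ n ih => rw [Function.iterate_succ_apply', ih]; rfl
  exact ⟨m, (lowerCentralSeries_eq m ▸ hm).le⟩

variable [F.Normal]

theorem fittingHeight_le_two [Group.IsNilpotent F] (h : ⁅commutator G, (⊤ : Subgroup G)⁆ ≤ F) :
    fittingHeight G ≤ 2 := by
  refine Nat.sInf_le ⟨![⊥, F, ⊤], rfl, rfl, ?_, ?_, ?_⟩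
  · simp only [Fin.forall_fin_succ]
    exact ⟨Subgroup.normal_bot, ‹_›, Subgroup.normal_top, nofun⟩
  · exact Fin.forall_fin_two.2 ⟨bot_le, le_top⟩
  · exact Fin.forall_fin_two.2 ⟨nilpotentFactor_bot_of_isNilpotent (F := F), 2, h⟩

theorem commutator_sup_sup_le {D : Subgroup G} (h : ⁅D, D⁆ ≤ F) : ⁅F ⊔ D, F ⊔ D⁆ ≤ F := by
  have map_mk'_self : F.map (QuotientGroup.mk' F) = ⊥ := QuotientGroup.map_mk'_self F
  rw [← QuotientGroup.ker_mk' F, ← Subgroup.map_eq_bot_iff, Subgroup.map_commutator] at h ⊢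
  rwa [Subgroup.map_sup, QuotientGroup.ker_mk', map_mk'_self, bot_sup_eq]

theorem fittingHeight_le_three [Group.IsNilpotent F] (h : ⁅commutator G, commutator G⁆ ≤ F) :
    fittingHeight G ≤ 3 := by
  refine Nat.sInf_le ⟨![⊥, F, F ⊔ commutator G, ⊤], rfl, rfl, ?_, ?_, ?_⟩
  · simp only [Fin.forall_fin_succ]
    exact ⟨Subgroup.normal_bot, ‹_›, Subgroup.sup_normal _ _, Subgroup.normal_top, nofun⟩
  · simp only [Fin.forall_fin_succ]
    exact ⟨bot_le, le_sup_left, le_top, nofun⟩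
  · simp only [Fin.forall_fin_succ]
    exact ⟨nilpotentFactor_bot_of_isNilpotent (F := F), ⟨1, commutator_sup_sup_le h⟩,
      ⟨1, le_sup_right (a := F)⟩, nofun⟩

end FittingHeight

section SymmetricGroupThree

theorem isMulCommutative_of_ne_top {H : Subgroup (Equiv.Perm (Fin 3))} (hH : H ≠ ⊤) :
    IsMulCommutative H := by
  have hcard : Nat.card (Equiv.Perm (Fin 3)) = 6 := by
    rw [Nat.card_eq_fintype_card, Fintype.card_perm, Fintype.card_fin]; rfl
  have hdvd := hcard ▸ H.card_subgroup_dvd_card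
  have hne : Nat.card H ≠ 6 := fun h ↦ hH (H.eq_top_of_card_eq (h.trans hcard.symm))
  have hle := Nat.le_of_dvd (by norm_num) hdvd
  have hprime : Nat.card H ∣ 2 ∨ Nat.card H ∣ 3 := by
    interval_cases Nat.card H <;> revert hdvd hne <;> decide
  have : IsCyclic H := hprime.elim isCyclic_of_card_dvd_prime isCyclic_of_card_dvd_prime
  infer_instance

theorem commutator_commutator_perm_fin_three :
    ⁅commutator (Equiv.Perm (Fin 3)), commutator (Equiv.Perm (Fin 3))⁆ = ⊥ := by
  have commute_of_sign : ∀ σ τ : Equiv.Perm (Fin 3), σ.sign = 1 → τ.sign = 1 → σ * τ = τ * σ := by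
    decide
  refine Subgroup.commutator_eq_bot_iff_le_centralizer.2 fun σ hσ ↦
    Subgroup.mem_centralizer_iff.2 fun τ hτ ↦ commute_of_sign τ σ ?_ ?_
  · exact Abelianization.commutator_subset_ker Equiv.Perm.sign hτ
  · exact Abelianization.commutator_subset_ker Equiv.Perm.sign hσ

end SymmetricGroupThree

theorem commutator_le_ker_of_isMulCommutative_range {G H : Type*} [Group G] [Group H] (f : G →* H)
    [IsMulCommutative f.range] : commutator G ≤ f.ker := by
  rw [← Subgroup.map_eq_bot_iff, commutator_def, Subgroup.map_commutator,
    ← MonoidHom.range_eq_map, Subgroup.commutator_eq_bot_iff_le_centralizer]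
  exact f.range.le_centralizer

section ConjugationOnSylow

variable {G Q : Type*} [Group G] [Group Q] {F : Subgroup G} [Finite F] [F.Normal]
  [Group.IsNilpotent F] {ι : Q →* G} [ι.range.Normal] {hι : Function.Injective ι}

theorem mem_of_conjAut_mem_range_conj (hF : Subgroup.centralizer F ≤ F)
    (hcyc : ∀ (p : ℕ) [Fact p.Prime], Odd p → ∀ P : Sylow p F, IsCyclic P) {P : Sylow 2 F}
    (hιP : ι.range = (P : Subgroup F).map F.subtype) {w : G} (hw : w ∈ commutator G)
    (h : conjAut ι hι w ∈ (MulAut.conj : Q →* _).range) : w ∈ F := by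
  obtain ⟨q, hq⟩ := h
  obtain ⟨z, hz, hzq⟩ : ι q ∈ (P : Subgroup F).map F.subtype := hιP ▸ ⟨q, rfl⟩
  refine mem_of_conj_eq_conj_on_sylow_two hF hcyc P hw hz fun x hx ↦ ?_
  obtain ⟨y, hy⟩ : (x : G) ∈ ι.range := hιP ▸ ⟨x, hx, rfl⟩
  rw [← hy, ← map_conjAut_apply ι hι, ← hq, ← conjAut_map ι hι, map_conjAut_apply, ← hzq]
  rfl

end ConjugationOnSylow

theorem PSqCondition.isCyclic_sylow {G : Type*} [Group G] {F : Subgroup G} [Finite F] {p : ℕ}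
    [Fact p.Prime] (h : PSqCondition p G) (hp : Odd p) (P : Sylow p F) : IsCyclic P :=
  (h.of_injective (F.subtype.comp (P : Subgroup F).subtype)
    (F.subtype_injective.comp (Subgroup.subtype_injective _))).isCyclic_of_odd P.isPGroup' hp

section Dichotomy

variable {G : Type} [Group G] [Finite G] {F : Subgroup G} [F.Normal] [Group.IsNilpotent F]

theorem fittingHeight_le_two_of_isCyclic (hF : Subgroup.centralizer F ≤ F)
    (hcyc : ∀ (p : ℕ) [Fact p.Prime], Odd p → ∀ P : Sylow p F, IsCyclic P) (P : Sylow 2 F)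
    [IsCyclic P] : fittingHeight G ≤ 2 := by
  refine fittingHeight_le_two (F := F) ((Subgroup.commutator_le_left _ _).trans fun w hw ↦ ?_)
  refine mem_of_conj_eq_conj_on_sylow_two hF hcyc P hw (one_mem P) fun x hx ↦ ?_
  have := normal_map_subtype_sylow P
  have := (Subgroup.equivMapOfInjective (P : Subgroup F) _ F.subtype_injective).isCyclic.1 ‹_›
  have hwx := commute_of_mem_commutator_of_isCyclic hw (Subgroup.mem_map_of_mem F.subtype hx)
  rw [OneMemClass.coe_one, one_mul, inv_one, mul_one]
  exact mul_inv_eq_of_eq_mul hwx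

theorem fittingHeight_le_two_of_quaternionGroup {m : ℕ} (hm : 3 ≤ m)
    (hF : Subgroup.centralizer F ≤ F)
    (hcyc : ∀ (p : ℕ) [Fact p.Prime], Odd p → ∀ P : Sylow p F, IsCyclic P) {P : Sylow 2 F}
    {ι : QuaternionGroup m →* G} [ι.range.Normal] (hι : Function.Injective ι)
    (hιP : ι.range = (P : Subgroup F).map F.subtype) : fittingHeight G ≤ 2 := by
  refine fittingHeight_le_two (F := F) fun w hw ↦
    mem_of_conjAut_mem_range_conj (hι := hι) hF hcyc hιP (Subgroup.commutator_le_left _ _ hw)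
      (commutator_commutator_mulAut_quaternionGroup_le hm ?_)
  have := Subgroup.mem_map_of_mem (conjAut ι hι) hw
  rw [Subgroup.map_commutator, commutator_def, Subgroup.map_commutator] at this
  exact Subgroup.commutator_mono (Subgroup.commutator_mono le_top le_top) le_top this

variable {ι : QuaternionGroup 2 →* G} [ι.range.Normal]

theorem fittingHeight_le_two_or_surjective (hι : Function.Injective ι)
    (hF : Subgroup.centralizer F ≤ F)
    (hcyc : ∀ (p : ℕ) [Fact p.Prime], Odd p → ∀ P : Sylow p F, IsCyclic P) {P : Sylow 2 F}
    (hιP : ι.range = (P : Subgroup F).map F.subtype) :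
    fittingHeight G ≤ 2 ∨
      fittingHeight G ≤ 3 ∧ Function.Surjective (axisPerm.comp (conjAut ι hι)) := by
  have mem_of_mem_ker {w : G} (hw : w ∈ commutator G)
      (hker : w ∈ (axisPerm.comp (conjAut ι hι)).ker) : w ∈ F :=
    mem_of_conjAut_mem_range_conj hF hcyc hιP hw (ker_axisPerm.le hker)
  by_cases hsurj : Function.Surjective (axisPerm.comp (conjAut ι hι))
  · refine .inr ⟨fittingHeight_le_three (F := F) fun w hw ↦
      mem_of_mem_ker (Subgroup.commutator_le_left _ _ hw) ?_, hsurj⟩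
    have := Subgroup.mem_map_of_mem (axisPerm.comp (conjAut ι hι)) hw
    rwa [commutator_def, Subgroup.map_commutator, Subgroup.map_commutator,
      Subgroup.map_top_of_surjective _ hsurj, ← commutator_def,
      commutator_commutator_perm_fin_three] at this
  · have := isMulCommutative_of_ne_top (mt MonoidHom.range_eq_top.1 hsurj)
    exact .inl (fittingHeight_le_two (F := F) ((Subgroup.commutator_le_left _ _).trans fun w hw ↦
      mem_of_mem_ker hw (commutator_le_ker_of_isMulCommutative_range _ hw)))

end Dichotomy

theorem fittingHeight_le_two_or_exists_quaternionGroup {G : Type} [Group G] [Finite G]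
    [Group.IsSolvable G] (hPSq : ∀ (p : ℕ) [Fact p.Prime], Odd p → PSqCondition p G)
    (hI : AtMostOneInvolution G) :
    fittingHeight G ≤ 2 ∨ fittingHeight G ≤ 3 ∧
      ∃ (ι : QuaternionGroup 2 →* G) (hι : Function.Injective ι) (_ : ι.range.Normal),
        Function.Surjective (axisPerm.comp (conjAut ι hι)) := by
  obtain ⟨F, _, _, hF⟩ := exists_normal_isNilpotent_centralizer_le G
  have hcyc (p : ℕ) [Fact p.Prime] (hp : Odd p) (P : Sylow p F) : IsCyclic P :=
    (hPSq p hp).isCyclic_sylow hp P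
  let P : Sylow 2 F := default
  have hP := normal_map_subtype_sylow P
  let ι₀ : P →* G := F.subtype.comp (P : Subgroup F).subtype
  have hι₀ : Function.Injective ι₀ := F.subtype_injective.comp (Subgroup.subtype_injective _)
  have hrange {m : ℕ} (e : QuaternionGroup m ≃* P) :
      (ι₀.comp e.toMonoidHom).range = (P : Subgroup F).map F.subtype := by
    rw [MonoidHom.range_comp, MonoidHom.range_eq_top.2 e.surjective, ← MonoidHom.range_eq_map,
      MonoidHom.range_comp, Subgroup.range_subtype]
  obtain hP' | ⟨n, ⟨e⟩⟩ :=
    (hI.of_injective ι₀ hι₀).isCyclic_or_nonempty_quaternionGroup_mulEquiv P.isPGroup'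
  · exact .inl (fittingHeight_le_two_of_isCyclic hF hcyc P)
  have := hrange e ▸ hP
  have hι := hι₀.comp e.injective
  obtain _ | n := n
  · refine (fittingHeight_le_two_or_surjective hι hF hcyc (hrange e)).imp_right fun h ↦
      ⟨h.1, _, hι, _, h.2⟩
  · have hn : 3 ≤ 2 ^ (n + 1 + 1) := by
      have := Nat.one_le_two_pow (n := n)
      rw [pow_succ, pow_succ]
      lia
    exact .inl (fittingHeight_le_two_of_quaternionGroup hn hF hcyc hι (hrange e))

section OddKernel

variable {G : Type*} [Group G]

theorem exists_normal_odd_card_of_eq_one_or_eq [Finite G] {C : Subgroup G} [C.Normal] {z : G}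
    (hz : z ^ 2 = 1) (hCz : ∀ c ∈ C, Commute c z)
    (h : ∀ c ∈ C, ∀ k, c ^ 2 ^ k = 1 → c = 1 ∨ c = z) :
    ∃ N : Subgroup G, N.Normal ∧ N ≤ C ∧ Odd (Nat.card N) ∧ ∀ c ∈ C, c ∈ N ∨ c * z ∈ N := by
  let P : Sylow 2 C := default
  have eq_one_or_eq (x : C) (hx : x ∈ (P : Subgroup C)) : (x : G) = 1 ∨ (x : G) = z := by
    obtain ⟨k, hk⟩ := P.isPGroup' ⟨x, hx⟩
    exact h x x.2 k (by simpa using congrArg (fun y : P ↦ ((y : C) : G)) hk)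
  have hP : Subgroup.normalizer (P : Set C) ≤ Subgroup.centralizer (P : Set C) :=
    fun c _ ↦ Subgroup.mem_centralizer_iff.2 fun x hx ↦ Subtype.ext <| by
      obtain hx | hx := eq_one_or_eq x hx
      · simp [hx]
      · simpa [hx] using (hCz c c.2).eq.symm
  set N := (MonoidHom.transferSylow P hP).ker.map C.subtype with hN
  have hodd : Odd (Nat.card N) := by
    rw [← Nat.not_even_iff_odd, even_iff_two_dvd, hN,
      Subgroup.card_map_of_injective C.subtype_injective]
    exact MonoidHom.not_dvd_card_ker_transferSylow P hP
  have mem_or_mem (c : G) (hc : c ∈ C) : c ∈ N ∨ c * z ∈ N := by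
    obtain ⟨⟨⟨n, hn⟩, ⟨x, hx⟩⟩, hnx⟩ :=
      (MonoidHom.ker_transferSylow_isComplement' P hP).2 ⟨c, hc⟩
    have hcnx : (n : G) * x = c := congrArg Subtype.val hnx
    obtain hx | hx := eq_one_or_eq x hx
    · exact .inl ⟨n, hn, by simp [← hcnx, hx]⟩
    · exact .inr ⟨n, hn, by simp [← hcnx, hx, mul_assoc, ← sq, hz]⟩
  refine ⟨N, ⟨fun n hn g ↦ ?_⟩, Subgroup.map_subtype_le _, hodd, mem_or_mem⟩
  have pow_card {x : G} (hx : x ∈ N) : x ^ Nat.card N = 1 :=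
    orderOf_dvd_iff_pow_eq_one.1 (N.orderOf_dvd_natCard hx)
  have hgn : g * n * g⁻¹ ∈ C := ‹C.Normal›.conj_mem n (Subgroup.map_subtype_le _ hn) g
  obtain h | h := mem_or_mem _ hgn
  · exact h
  · have hz1 := pow_card h
    rw [(hCz _ hgn).mul_pow, conj_pow, pow_card hn, mul_one, mul_inv_cancel, one_mul] at hz1
    obtain ⟨k, hk⟩ := hodd
    rw [hk, pow_succ, pow_mul, hz, one_pow, one_mul] at hz1
    rwa [hz1, mul_one] at h

theorem AtMostOneInvolution.quotient (hI : AtMostOneInvolution G) (N : Subgroup G) [N.Normal]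
    (hN : Odd (Nat.card N)) : AtMostOneInvolution (G ⧸ N) := by
  have exists_lift (y : G ⧸ N) (hy : orderOf y = 2) : ∃ x : G, orderOf x = 2 ∧ ↑x = y := by
    obtain ⟨g, rfl⟩ := QuotientGroup.mk_surjective y
    have hgy : ((g ^ Nat.card N : G) : G ⧸ N) = g := by
      obtain ⟨k, hk⟩ := hN
      rw [QuotientGroup.mk_pow, hk, pow_succ, pow_mul, ← hy, pow_orderOf_eq_one, one_pow, one_mul]
    have hg2 : g ^ 2 ∈ N := by
      rw [← QuotientGroup.eq_one_iff, QuotientGroup.mk_pow, ← hy, pow_orderOf_eq_one]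
    refine ⟨g ^ Nat.card N, orderOf_eq_prime ?_ fun h ↦ ?_, hgy⟩
    · rw [← pow_mul, mul_comm, pow_mul]
      exact orderOf_dvd_iff_pow_eq_one.1 (N.orderOf_dvd_natCard hg2)
    · rw [← hgy, h, QuotientGroup.mk_one, orderOf_one] at hy
      exact absurd hy (by decide)
  intro x y hx hy
  obtain ⟨g, hg, rfl⟩ := exists_lift x hx
  obtain ⟨h, hh, rfl⟩ := exists_lift y hy
  rw [hI g h hg hh]

end OddKernel

/-- `ι` embeds `Q₈` as a normal subgroup of `K` on whose three cyclic subgroups of order four `K`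
induces all permutations, the trivial one only by elements of the subgroup itself, and `K` has at
most one involution: this describes the binary octahedral group as an extension of `S₃` by `Q₈`. -/
structure IsOctahedralEmbedding {K : Type*} [Group K] (ι : QuaternionGroup 2 →* K)
    [ι.range.Normal] : Prop where
  injective : Function.Injective ι
  atMostOneInvolution : AtMostOneInvolution K
  surjective : Function.Surjective (axisPerm.comp (conjAut ι injective))
  ker_eq : (axisPerm.comp (conjAut ι injective)).ker = ι.range

section ExceptionalQuotient

variable {G : Type*} [Group G] {ι : QuaternionGroup 2 →* G}

theorem eq_one_or_eq_of_forall_mul_comm : ∀ q : QuaternionGroup 2, (∀ r, q * r = r * q) →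
    q = 1 ∨ q = .a 2 := by
  decide

theorem eq_one_or_eq_of_conjAut_map_eq_one [ι.range.Normal] (hι : Function.Injective ι)
    {q : QuaternionGroup 2} (h : conjAut ι hι (ι q) = 1) : q = 1 ∨ q = .a 2 :=
  eq_one_or_eq_of_forall_mul_comm q fun r ↦ hι <| by
    rw [map_mul, map_mul, (commute_of_conjAut_eq_one ι hι h r).eq]

theorem eq_one_or_eq_of_conjAut_eq_one_of_pow_two_pow_eq_one [ι.range.Normal]
    (hι : Function.Injective ι) (hI : AtMostOneInvolution G) {c : G} (hc : conjAut ι hι c = 1)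
    {k : ℕ} (hk : c ^ 2 ^ k = 1) : c = 1 ∨ c = ι (.a 2) := by
  have hz1 : ι (.a 2) ≠ 1 := (map_ne_one_iff ι hι).2 (by decide)
  have hz : ι (.a 2) ^ 2 = 1 := by rw [← map_pow]; exact map_one ι
  induction k generalizing c with
  | zero => exact .inl (by simpa using hk)
  | succ k ih =>
    rw [pow_succ', pow_mul] at hk
    obtain h | h := ih (by rw [map_pow, hc, one_pow]) hk
    · exact or_iff_not_imp_left.2 fun hc1 ↦ hI.eq_of_sq_eq_one h hz hc1 hz1
    -- Otherwise `c * i` squares to `1`, so `c` lies in the image of `Q₈`, hence in its centre.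
    · obtain ⟨q, hq⟩ : c ∈ ι.range := by
        have hsq : (c * ι (.a 1)) ^ 2 = 1 := by
          rw [(commute_of_conjAut_eq_one ι hι hc _).mul_pow, h, ← map_pow, ← map_mul]
          exact map_one ι
        rw [← Subgroup.mul_mem_cancel_right _ (⟨_, rfl⟩ : ι (.a 1) ∈ ι.range)]
        by_cases h1 : c * ι (.a 1) = 1
        · exact h1 ▸ one_mem _
        · exact hI.eq_of_sq_eq_one hsq hz h1 hz1 ▸ ⟨_, rfl⟩
      exact (eq_one_or_eq_of_conjAut_map_eq_one hι (hq ▸ hc)).imp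
        (fun h ↦ by rw [← hq, h, map_one]) (fun h ↦ by rw [← hq, h])

theorem injective_mk'_comp_of_odd_card [ι.range.Normal] (hι : Function.Injective ι)
    {N : Subgroup G} [N.Normal] (hN : N ≤ (conjAut ι hι).ker) (hodd : Odd (Nat.card N)) :
    Function.Injective ((QuotientGroup.mk' N).comp ι) := by
  refine (injective_iff_map_eq_one _).2 fun q hq ↦ ?_
  have hqN : ι q ∈ N := (QuotientGroup.eq_one_iff _).1 hq
  obtain h | rfl := eq_one_or_eq_of_conjAut_map_eq_one hι (hN hqN)
  · exact h
  · obtain ⟨k, hk⟩ := hodd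
    have hz : ι (.a 2) ^ 2 = 1 := by rw [← map_pow]; exact map_one ι
    have hpow := orderOf_dvd_iff_pow_eq_one.1 (N.orderOf_dvd_natCard hqN)
    rw [hk, pow_succ, pow_mul, hz, one_pow, one_mul] at hpow
    exact hι (hpow.trans (map_one ι).symm)

theorem exists_quotient_isOctahedralEmbedding [Finite G] (hι : Function.Injective ι)
    [ι.range.Normal] (hI : AtMostOneInvolution G)
    (hsurj : Function.Surjective (axisPerm.comp (conjAut ι hι))) :
    ∃ (N : Subgroup G) (_ : N.Normal) (κ : QuaternionGroup 2 →* G ⧸ N) (_ : κ.range.Normal),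
      IsOctahedralEmbedding κ := by
  have hz : ι (.a 2) ^ 2 = 1 := by rw [← map_pow]; exact map_one ι
  obtain ⟨N, hN, hNC, hodd, hC⟩ := exists_normal_odd_card_of_eq_one_or_eq
    (C := (conjAut ι hι).ker) hz (fun c hc ↦ commute_of_conjAut_eq_one ι hι hc _)
    fun c hc k ↦ eq_one_or_eq_of_conjAut_eq_one_of_pow_two_pow_eq_one hι hI hc
  let κ := (QuotientGroup.mk' N).comp ι
  have hκ : Function.Injective κ := injective_mk'_comp_of_odd_card hι hNC hodd
  have hnormal : κ.range.Normal := by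
    rw [MonoidHom.range_comp]
    exact ‹ι.range.Normal›.map _ (QuotientGroup.mk'_surjective N)
  have conjAut_mk (g : G) : conjAut κ hκ g = conjAut ι hι g :=
    conjAut_comp ι hι (QuotientGroup.mk' N) hκ g
  refine ⟨N, hN, κ, hnormal, hκ, hI.quotient N hodd, fun σ ↦ ?_, le_antisymm (fun y hy ↦ ?_) ?_⟩
  · obtain ⟨g, hg⟩ := hsurj σ
    exact ⟨g, (congrArg axisPerm (conjAut_mk g)).trans hg⟩
  · obtain ⟨g, rfl⟩ := QuotientGroup.mk_surjective y
    obtain ⟨q, hq⟩ := ker_axisPerm.le (conjAut_mk g ▸ hy : conjAut ι hι g ∈ axisPerm.ker)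
    have hqg : (ι q)⁻¹ * g ∈ (conjAut ι hι).ker := by
      rw [MonoidHom.mem_ker, map_mul, map_inv, conjAut_map, ← hq, inv_mul_cancel]
    obtain h | h := hC _ hqg
    · exact ⟨q, (QuotientGroup.eq (s := N)).2 h⟩
    · refine ⟨q * (.a 2)⁻¹, (QuotientGroup.eq (s := N)).2 ?_⟩
      rw [(commute_of_conjAut_eq_one ι hι hqg _).eq] at h
      simpa [mul_assoc] using h
  · rintro _ ⟨q, rfl⟩
    exact (congrArg axisPerm (conjAut_map κ hκ q)).trans (ker_axisPerm.ge ⟨q, rfl⟩)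

end ExceptionalQuotient

section NilpotentNormal

variable {G : Type*} [Group G] [Finite G] {N : Subgroup G} [N.Normal] [Group.IsNilpotent N]

theorem commute_of_pow_eq_one_of_coprime {p q k l : ℕ} [Fact p.Prime] [Fact q.Prime] (hpq : p ≠ q)
    {x y : G} (hxN : x ∈ N) (hyN : y ∈ N) (hx : x ^ p ^ k = 1) (hy : y ^ q ^ l = 1) :
    Commute x y := by
  have mem_sylow {r m : ℕ} [Fact r.Prime] {u : N} (hu : (u : G) ^ r ^ m = 1) :
      ∃ P : Sylow r N, u ∈ P := by
    obtain ⟨j, -, hj⟩ := (Nat.dvd_prime_pow Fact.out).1 (orderOf_dvd_of_pow_eq_one hu)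
    obtain ⟨P, hP⟩ := (IsPGroup.of_card (p := r) (n := j) (G := Subgroup.zpowers u)
      (by rw [Nat.card_zpowers, ← Subgroup.orderOf_coe, hj])).exists_le_sylow
    exact ⟨P, hP (Subgroup.mem_zpowers u)⟩
  obtain ⟨P, hP⟩ := mem_sylow (u := ⟨x, hxN⟩) hx
  obtain ⟨Q, hQ⟩ := mem_sylow (u := ⟨y, hyN⟩) hy
  exact commute_of_mem_sylow_of_mem_sylow hpq hP hQ

end NilpotentNormal

theorem commute_of_commute_commutatorElement {G : Type*} [Group G] {x q : G} {m n : ℕ}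
    (hmn : m.Coprime n) (hx : x ^ m = 1) (hc : ⁅x, q⁆ ^ n = 1) (h : Commute x ⁅x, q⁆) :
    Commute x q := by
  refine commutatorElement_eq_one_iff_commute.1 ?_
  have hm : ⁅x, q⁆ ^ m = 1 := by
    simpa only [hx, one_mul, mul_one, right_eq_mul] using pow_mul_eq_commutatorElement_pow_mul h m
  rw [← pow_one ⁅x, q⁆, ← hmn, pow_gcd_eq_one.2 ⟨hm, hc⟩]

theorem quaternionGroup_two_pow_four : ∀ q : QuaternionGroup 2, q ^ 4 = 1 := by
  decide

set_option maxRecDepth 4000 in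
theorem exists_commutatorElement_pow_three : ∀ σ : Equiv.Perm (Fin 3), σ ≠ 1 →
    ∃ τ : Equiv.Perm (Fin 3), ⁅σ, τ⁆ ≠ 1 ∧ ⁅σ, τ⁆ ^ 3 = 1 := by
  simp only [commutatorElement_def, pow_succ, pow_zero, one_mul]
  decide

namespace IsOctahedralEmbedding

variable {K : Type*} [Group K] {ι : QuaternionGroup 2 →* K} [ι.range.Normal]

theorem card_eq (h : IsOctahedralEmbedding ι) : Nat.card K = 48 := by
  rw [← (axisPerm.comp (conjAut ι h.injective)).ker.card_mul_index, Subgroup.index_ker,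
    MonoidHom.range_eq_top.2 h.surjective, Subgroup.card_top, h.ker_eq,
    Nat.card_congr (MonoidHom.ofInjective h.injective).symm.toEquiv, Nat.card_eq_fintype_card,
    Nat.card_eq_fintype_card, QuaternionGroup.card, Fintype.card_perm, Fintype.card_fin]
  rfl

theorem finite (h : IsOctahedralEmbedding ι) : Finite K :=
  Nat.finite_of_card_ne_zero (h.card_eq ▸ by decide)

theorem exists_mem_pow_three_eq_one (h : IsOctahedralEmbedding ι) {N : Subgroup K} [N.Normal]
    (hN : ¬ N ≤ ι.range) : ∃ x ∈ N, x ∉ ι.range ∧ x ^ 3 = 1 := by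
  set π := axisPerm.comp (conjAut ι h.injective) with hπ
  obtain ⟨y, hyN, hy⟩ := SetLike.not_le_iff_exists.1 hN
  rw [← h.ker_eq] at hy
  obtain ⟨τ, hτ, hτ3⟩ := exists_commutatorElement_pow_three (π y) hy
  obtain ⟨k, rfl⟩ := h.surjective τ
  rw [← hπ, ← map_commutatorElement] at hτ hτ3
  have hyk : ⁅y, k⁆ ∈ N :=
    Subgroup.commutator_le_left N ⊤ (Subgroup.commutator_mem_commutator hyN (Subgroup.mem_top k))
  obtain ⟨q, hq⟩ : ⁅y, k⁆ ^ 3 ∈ ι.range := h.ker_eq ▸ (map_pow π _ _).trans hτ3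
  refine ⟨⁅y, k⁆ ^ 4, pow_mem hyk 4, fun hmem ↦ hτ ?_, ?_⟩
  · rw [← h.ker_eq, MonoidHom.mem_ker, map_pow, pow_succ] at hmem
    rwa [hτ3, one_mul] at hmem
  · rw [← pow_mul, mul_comm, pow_mul, ← hq, ← map_pow, quaternionGroup_two_pow_four, map_one]

theorem le_range_of_isNilpotent (h : IsOctahedralEmbedding ι) {N : Subgroup K} [N.Normal]
    [Group.IsNilpotent N] : N ≤ ι.range := by
  have := h.finite
  by_contra hN
  obtain ⟨x, hxN, hx, hx3⟩ := h.exists_mem_pow_three_eq_one hN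
  -- `x` commutes with the 2-elements `⁅x, ι q⁆` of `N`, so it centralizes `ι.range` by coprimality.
  have hcomm (q : QuaternionGroup 2) : Commute x (ι q) := by
    have hcN : ⁅x, ι q⁆ ∈ N := Subgroup.commutator_le_left N ⊤
      (Subgroup.commutator_mem_commutator hxN (Subgroup.mem_top _))
    obtain ⟨r, hr⟩ : ⁅x, ι q⁆ ∈ ι.range := Subgroup.commutator_le_right ⊤ _
      (Subgroup.commutator_mem_commutator (Subgroup.mem_top _) ⟨q, rfl⟩)
    have hc : ⁅x, ι q⁆ ^ 2 ^ 2 = 1 := by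
      rw [← hr, ← map_pow]
      exact (congrArg ι (quaternionGroup_two_pow_four r)).trans (map_one ι)
    exact commute_of_commute_commutatorElement (by decide) hx3 hc
      (commute_of_pow_eq_one_of_coprime (p := 3) (q := 2) (k := 1) (by decide) hxN hcN hx3 hc)
  refine hx (h.ker_eq.le ?_)
  have : conjAut ι h.injective x = 1 := MulEquiv.ext fun q ↦ h.injective <| by
    rw [map_conjAut_apply, (hcomm q).eq, mul_inv_cancel_right, MulAut.one_apply]
  rw [MonoidHom.mem_ker, MonoidHom.comp_apply, this, map_one]

theorem isPGroup_range (h : IsOctahedralEmbedding ι) : IsPGroup 2 ι.range :=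
  (IsPGroup.of_card (n := 3) (by
    rw [Nat.card_eq_fintype_card, QuaternionGroup.card]; rfl)).of_equiv
      (MonoidHom.ofInjective h.injective)

theorem nonempty_sylow_mulEquiv (h : IsOctahedralEmbedding ι) (P : Sylow 2 K) :
    Nonempty (P ≃* QuaternionGroup 4) := by
  have := h.finite
  have hcard : Nat.card P = 2 ^ 4 := by
    rw [P.card_eq_multiplicity, h.card_eq, show 48 = 2 ^ 4 * 3 from rfl,
      Nat.factorization_mul_apply_of_coprime (by decide), Nat.prime_two.factorization_pow,
      Finsupp.single_eq_same, Nat.factorization_eq_zero_of_not_dvd (by decide)]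
  have hιP (q : QuaternionGroup 2) : ι q ∈ P := h.isPGroup_range.le_sylow_of_normal P ⟨q, rfl⟩
  obtain hcyc | ⟨n, ⟨e⟩⟩ := (h.atMostOneInvolution.of_injective (P : Subgroup K).subtype
    (Subgroup.subtype_injective _)).isCyclic_or_nonempty_quaternionGroup_mulEquiv P.isPGroup'
  · have : (.a 1 * .xa 0 : QuaternionGroup 2) = .xa 0 * .a 1 := h.injective <| by
      rw [map_mul, map_mul, setLike_mul_comm (hιP _) (hιP _)]
    exact absurd this (by decide)
  · rw [← Nat.card_congr e.toEquiv, Nat.card_eq_fintype_card, QuaternionGroup.card,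
      show 4 = 2 ^ 2 from rfl, ← pow_add] at hcard
    obtain rfl : n = 1 := by have := Nat.pow_right_injective le_rfl hcard; lia
    exact ⟨e.symm⟩

end IsOctahedralEmbedding

theorem IsOctahedralEmbedding.isBinaryOctahedral {K : Type} [Group K] {ι : QuaternionGroup 2 →* K}
    [ι.range.Normal] (h : IsOctahedralEmbedding ι) : IsBinaryOctahedral K := by
  have := h.finite
  refine ⟨h.card_eq, ⟨ι.range, ⟨⟨‹_›, h.isPGroup_range.isNilpotent⟩, fun N hN ↦ ?_⟩,
    ⟨(MonoidHom.ofInjective h.injective).symm⟩⟩, h.nonempty_sylow_mulEquiv⟩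
  have := hN.1
  have := hN.2
  exact h.le_range_of_isNilpotent

section OctahedralRelations

/-- The automorphism `i ↦ j ↦ k ↦ i` of `Q₈`, where `i = a 1`, `j = xa 0` and `k = xa 3`. -/
def quaternionRotation : MulAut (QuaternionGroup 2) where
  toFun
    | .a m => ![.a 0, .xa 0, .a 2, .xa 2] m
    | .xa m => ![.xa 3, .a 3, .xa 1, .a 1] m
  invFun
    | .a m => ![.a 0, .xa 3, .a 2, .xa 1] m
    | .xa m => ![.a 1, .xa 2, .a 3, .xa 0] m
  left_inv := by decide
  right_inv := by decide
  map_mul' := by decide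

/-- The automorphism `i ↦ -j`, `j ↦ -i` of `Q₈`, where `i = a 1` and `j = xa 0`. -/
def quaternionSwap : MulAut (QuaternionGroup 2) where
  toFun
    | .a m => ![.a 0, .xa 2, .a 2, .xa 0] m
    | .xa m => ![.a 3, .xa 3, .a 1, .xa 1] m
  invFun
    | .a m => ![.a 0, .xa 2, .a 2, .xa 0] m
    | .xa m => ![.a 3, .xa 3, .a 1, .xa 1] m
  left_inv := by decide
  right_inv := by decide
  map_mul' := by decide

theorem quaternionRotation_pow_three : quaternionRotation ^ 3 = 1 :=
  MulEquiv.ext (by decide)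

theorem quaternionSwap_mul_self : quaternionSwap * quaternionSwap = 1 :=
  MulEquiv.ext (by decide)

theorem quaternionSwap_mul_quaternionRotation :
    quaternionSwap * quaternionRotation = quaternionRotation ^ 2 * quaternionSwap :=
  MulEquiv.ext (by decide)

theorem axisPerm_quaternionRotation : axisPerm quaternionRotation = finRotate 3 :=
  Equiv.ext (by decide)

theorem axisPerm_quaternionSwap : axisPerm quaternionSwap = Equiv.swap 0 1 :=
  Equiv.ext (by decide)

theorem exists_eq_finRotate_pow_mul_swap_pow : ∀ p : Equiv.Perm (Fin 3),
    ∃ (e : Fin 3) (f : Fin 2), p = finRotate 3 ^ (e : ℕ) * Equiv.swap 0 1 ^ (f : ℕ) := by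
  decide

/-- The relations satisfied by a copy of `Q₈` together with elements `c` and `s` that generate the
binary octahedral group with it: `c` has order three and rotates `i`, `j`, `k`, while `s` is a
square root of `-1` that inverts `c`. They are stated in a monoid so that they apply to matrices. -/
structure OctahedralRelations {M : Type*} [Monoid M] (κ : QuaternionGroup 2 →* M) (c s : M) :
    Prop where
  pow_three : c ^ 3 = 1
  mul_self : s * s = κ (.a 2)
  semiconj_rotation (q) : SemiconjBy c (κ q) (κ (quaternionRotation q))
  semiconj_swap (q) : SemiconjBy s (κ q) (κ (quaternionSwap q))
  semiconj : SemiconjBy s c (c ^ 2)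

variable {M : Type*} [Monoid M]

theorem semiconjBy_pow_map_pow_apply {Q : Type*} [Group Q] {κ : Q →* M} {φ : MulAut Q} {c : M}
    (h : ∀ q, SemiconjBy c (κ q) (κ (φ q))) (n : ℕ) (q : Q) :
    SemiconjBy (c ^ n) (κ q) (κ ((φ ^ n) q)) := by
  induction n with
  | zero => simp
  | succ n ih => rw [pow_succ', pow_succ', MulAut.mul_apply]; exact (h _).mul_left ih

/-- The general element of the submonoid generated by the image of `Q₈`, `c` and `s`. -/
def octahedralWord (κ : QuaternionGroup 2 →* M) (c s : M) (w : QuaternionGroup 2 × ℕ × ℕ) : M :=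
  κ w.1 * c ^ w.2.1 * s ^ w.2.2

namespace OctahedralRelations

variable {κ : QuaternionGroup 2 →* M} {c s : M}

theorem word_mul_word (h : OctahedralRelations κ c s) (q q' : QuaternionGroup 2) (e e' f f' : ℕ) :
    octahedralWord κ c s (q, e, f) * octahedralWord κ c s (q', e', f') = octahedralWord κ c s
      (q * (quaternionRotation ^ e) ((quaternionSwap ^ f) q'), e + 2 ^ f * e', f + f') := by
  have hsq := semiconjBy_pow_map_pow_apply h.semiconj_swap f q'
  have hcq := semiconjBy_pow_map_pow_apply h.semiconj_rotation e ((quaternionSwap ^ f) q')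
  have hsc : SemiconjBy (s ^ f) (c ^ e') (c ^ (2 ^ f * e')) := by
    have (n : ℕ) : SemiconjBy (s ^ n) c (c ^ 2 ^ n) := by
      induction n with
      | zero => simp
      | succ n ih =>
        rw [pow_succ' s, pow_succ', pow_mul]
        exact (h.semiconj.pow_right _).mul_left ih
    rw [pow_mul]
    exact (this f).pow_right e'
  calc κ q * c ^ e * s ^ f * (κ q' * c ^ e' * s ^ f')
      = κ q * c ^ e * (s ^ f * κ q') * c ^ e' * s ^ f' := by simp only [mul_assoc]
    _ = κ q * (c ^ e * κ ((quaternionSwap ^ f) q')) * (s ^ f * c ^ e') * s ^ f' := by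
      rw [hsq.eq]; simp only [mul_assoc]
    _ = _ := by
      rw [hcq.eq, hsc.eq, octahedralWord, map_mul, pow_add, pow_add]; simp only [mul_assoc]

theorem word_eq_word_mod (h : OctahedralRelations κ c s) (q : QuaternionGroup 2) (e f : ℕ) :
    octahedralWord κ c s (q, e, f) =
      octahedralWord κ c s (q * .a 2 ^ (f / 2), e % 3, f % 2) := by
  have hc : SemiconjBy (c ^ e) (κ (.a 2)) (κ (.a 2)) := by
    have apply_a_two (n : ℕ) : (quaternionRotation ^ n) (.a 2) = .a 2 := by
      induction n with
      | zero => rfl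
      | succ n ih => rw [pow_succ', MulAut.mul_apply, ih]; rfl
    simpa only [apply_a_two] using semiconjBy_pow_map_pow_apply h.semiconj_rotation e (.a 2)
  have hce : c ^ e = c ^ (e % 3) := pow_eq_pow_mod e h.pow_three
  have hsf : s ^ f = κ (.a 2) ^ (f / 2) * s ^ (f % 2) := by
    rw [← h.mul_self, ← sq, ← pow_mul, ← pow_add, Nat.div_add_mod]
  calc κ q * c ^ e * s ^ f = κ q * (c ^ e * κ (.a 2) ^ (f / 2)) * s ^ (f % 2) := by
        rw [hsf]; simp only [mul_assoc]
    _ = _ := by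
      rw [(hc.pow_right _).eq, octahedralWord, map_mul, map_pow, ← hce]; simp only [mul_assoc]

end OctahedralRelations

section Presentation

variable {K : Type*} [Group K] {ι : QuaternionGroup 2 →* K} {κ : QuaternionGroup 2 →* M} {c s : K}
  {c' s' : M}

theorem octahedralWord_eq_of_octahedralWord_eq (hcard : Nat.card K = 48)
    (h : OctahedralRelations ι c s) (hsurj : Function.Surjective (octahedralWord ι c s))
    (h' : OctahedralRelations κ c' s') {w w' : QuaternionGroup 2 × ℕ × ℕ}
    (hw : octahedralWord ι c s w = octahedralWord ι c s w') :
    octahedralWord κ c' s' w = octahedralWord κ c' s' w' := by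
  let incl (w : QuaternionGroup 2 × Fin 3 × Fin 2) : QuaternionGroup 2 × ℕ × ℕ :=
    (w.1, w.2.1, w.2.2)
  let reduce (w : QuaternionGroup 2 × ℕ × ℕ) : QuaternionGroup 2 × Fin 3 × Fin 2 :=
    (w.1 * .a 2 ^ (w.2.2 / 2), Fin.ofNat 3 w.2.1, Fin.ofNat 2 w.2.2)
  have hreduce (w) : octahedralWord ι c s w = octahedralWord ι c s (incl (reduce w)) :=
    h.word_eq_word_mod _ _ _
  have hreduce' (w) : octahedralWord κ c' s' w = octahedralWord κ c' s' (incl (reduce w)) :=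
    h'.word_eq_word_mod _ _ _
  -- The group has as many elements as there are reduced words, so these represent it uniquely.
  have hinj : Function.Injective (octahedralWord ι c s ∘ incl) := by
    have : Function.Surjective (octahedralWord ι c s ∘ incl) := fun y ↦
      (hsurj y).imp' reduce fun w hw ↦ (hreduce w).symm.trans hw
    refine ((Nat.bijective_iff_surjective_and_card _).2 ⟨this, ?_⟩).injective
    simp [hcard, QuaternionGroup.card]
  have hred : reduce w = reduce w' :=
    hinj ((hreduce w).symm.trans (hw.trans (hreduce w')))
  rw [hreduce', hred, ← hreduce']

theorem exists_hom_of_octahedralRelations (hcard : Nat.card K = 48)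
    (h : OctahedralRelations ι c s) (hsurj : Function.Surjective (octahedralWord ι c s))
    (h' : OctahedralRelations κ c' s') : ∃ R : K →* M, ∀ q, R (ι q) = κ q := by
  choose word hword using hsurj
  let R (y : K) : M := octahedralWord κ c' s' (word y)
  have R_apply (w : QuaternionGroup 2 × ℕ × ℕ) :
      R (octahedralWord ι c s w) = octahedralWord κ c' s' w :=
    octahedralWord_eq_of_octahedralWord_eq hcard h (fun y ↦ ⟨_, hword y⟩) h' (hword _)
  have R_map (q : QuaternionGroup 2) : R (ι q) = κ q := by
    simpa [octahedralWord] using R_apply (q, 0, 0)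
  refine ⟨⟨⟨R, by simpa using R_map 1⟩, fun x y ↦ ?_⟩, R_map⟩
  rw [← hword x, ← hword y, h.word_mul_word]
  simp only [R_apply]
  rw [h'.word_mul_word]

end Presentation

end OctahedralRelations

namespace IsOctahedralEmbedding

variable {K : Type*} [Group K] {ι : QuaternionGroup 2 →* K} [ι.range.Normal]

theorem surjective_conjAut (h : IsOctahedralEmbedding ι) :
    Function.Surjective (conjAut ι h.injective) := fun φ ↦ by
  obtain ⟨g, hg⟩ := h.surjective (axisPerm φ)
  obtain ⟨q, hq⟩ :
      (conjAut ι h.injective g)⁻¹ * φ ∈ (MulAut.conj : QuaternionGroup 2 →* _).range := by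
    rw [← ker_axisPerm, MonoidHom.mem_ker, map_mul, map_inv, ← hg]
    exact inv_mul_cancel _
  exact ⟨g * ι q, by rw [map_mul, conjAut_map, hq, mul_inv_cancel_left]⟩

theorem conjAut_eq_one_iff (h : IsOctahedralEmbedding ι) {y : K} :
    conjAut ι h.injective y = 1 ↔ y = 1 ∨ y = ι (.a 2) := by
  constructor
  · intro hy
    obtain ⟨q, rfl⟩ := h.ker_eq.le ((congrArg axisPerm hy).trans (map_one _))
    exact (eq_one_or_eq_of_conjAut_map_eq_one h.injective hy).imp
      (fun h ↦ by rw [h, map_one]) (fun h ↦ by rw [h])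
  · rintro (rfl | rfl)
    · exact map_one _
    · rw [conjAut_map]
      exact MulEquiv.ext (by decide)

theorem map_a_two_ne_one (h : IsOctahedralEmbedding ι) : ι (.a 2) ≠ 1 :=
  (map_ne_one_iff ι h.injective).2 (by decide)

theorem semiconjBy_map_conjAut (h : IsOctahedralEmbedding ι) (g : K) (q : QuaternionGroup 2) :
    SemiconjBy g (ι q) (ι (conjAut ι h.injective g q)) := by
  rw [SemiconjBy, map_conjAut_apply, inv_mul_cancel_right]

theorem exists_conjAut_eq_quaternionRotation (h : IsOctahedralEmbedding ι) :
    ∃ c : K, conjAut ι h.injective c = quaternionRotation ∧ c ^ 3 = 1 := by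
  obtain ⟨c, hc⟩ := h.surjective_conjAut quaternionRotation
  have hc3 : c ^ 3 = 1 ∨ c ^ 3 = ι (.a 2) := h.conjAut_eq_one_iff.1 <| by
    rw [map_pow, hc, quaternionRotation_pow_three]
  refine ⟨c ^ 4, ?_, ?_⟩
  · rw [map_pow, hc, pow_succ, quaternionRotation_pow_three, one_mul]
  · rw [← pow_mul, mul_comm, pow_mul]
    obtain h | h := hc3
    · rw [h, one_pow]
    · rw [h, ← map_pow]
      exact map_one ι

theorem mul_self_of_conjAut_eq_quaternionSwap (h : IsOctahedralEmbedding ι) {s : K}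
    (hs : conjAut ι h.injective s = quaternionSwap) : s * s = ι (.a 2) := by
  refine (h.conjAut_eq_one_iff.1 ?_).resolve_left fun hss ↦ ?_
  · rw [map_mul, hs, quaternionSwap_mul_self]
  have hs1 : s = 1 ∨ s = ι (.a 2) := or_iff_not_imp_left.2 fun hs1 ↦
    h.atMostOneInvolution.eq_of_sq_eq_one ((sq s).trans hss)
      ((map_pow ι _ 2).symm.trans (map_one ι)) hs1 h.map_a_two_ne_one
  have hswap : quaternionSwap = 1 := hs.symm.trans (h.conjAut_eq_one_iff.2 hs1)
  exact absurd (DFunLike.congr_fun hswap (.a 1)) (by decide)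

theorem semiconjBy_of_conjAut_eq (h : IsOctahedralEmbedding ι) {c s : K}
    (hc : conjAut ι h.injective c = quaternionRotation) (hc3 : c ^ 3 = 1)
    (hs : conjAut ι h.injective s = quaternionSwap) : SemiconjBy s c (c ^ 2) := by
  have hsc : s * c * s⁻¹ * (c ^ 2)⁻¹ = 1 ∨ s * c * s⁻¹ * (c ^ 2)⁻¹ = ι (.a 2) :=
    h.conjAut_eq_one_iff.1 <| by
      simp only [map_mul, map_inv, map_pow, hc, hs, quaternionSwap_mul_quaternionRotation,
        mul_inv_cancel_right, mul_inv_cancel]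
  rw [mul_inv_eq_one, mul_inv_eq_iff_eq_mul, mul_inv_eq_iff_eq_mul] at hsc
  refine hsc.resolve_right fun hsc ↦ h.map_a_two_ne_one ?_
  have hcz : Commute (ι (.a 2)) (c ^ 2) := by
    have : SemiconjBy c (ι (.a 2)) (ι (quaternionRotation (.a 2))) :=
      hc ▸ h.semiconjBy_map_conjAut c (.a 2)
    exact (Commute.pow_left this 2).symm
  calc ι (.a 2) = (ι (.a 2) * c ^ 2) ^ 3 := by
        rw [hcz.mul_pow, ← pow_mul, mul_comm 2 3, pow_mul, hc3, one_pow, mul_one, ← map_pow]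
        rfl
    _ = 1 := by rw [← hsc, conj_pow, hc3, mul_one, mul_inv_cancel]

theorem surjective_octahedralWord (h : IsOctahedralEmbedding ι) {c s : K}
    (hc : conjAut ι h.injective c = quaternionRotation)
    (hs : conjAut ι h.injective s = quaternionSwap) :
    Function.Surjective (octahedralWord ι c s) := fun y ↦ by
  obtain ⟨e, f, hef⟩ := exists_eq_finRotate_pow_mul_swap_pow (axisPerm (conjAut ι h.injective y))
  obtain ⟨q, hq⟩ : y * (c ^ (e : ℕ) * s ^ (f : ℕ))⁻¹ ∈ ι.range := by
    rw [← h.ker_eq, MonoidHom.mem_ker]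
    simp [hef, hc, hs, axisPerm_quaternionRotation, axisPerm_quaternionSwap]
  exact ⟨(q, e, f), by rw [octahedralWord, hq, mul_assoc, inv_mul_cancel_right]⟩

theorem exists_hom (h : IsOctahedralEmbedding ι) {M : Type*} [Monoid M]
    {κ : QuaternionGroup 2 →* M} {c' s' : M} (h' : OctahedralRelations κ c' s') :
    ∃ R : K →* M, ∀ q, R (ι q) = κ q := by
  obtain ⟨c, hc, hc3⟩ := h.exists_conjAut_eq_quaternionRotation
  obtain ⟨s, hs⟩ := h.surjective_conjAut quaternionSwap
  have hrel : OctahedralRelations ι c s :=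
    { pow_three := hc3
      mul_self := h.mul_self_of_conjAut_eq_quaternionSwap hs
      semiconj_rotation q := hc ▸ h.semiconjBy_map_conjAut c q
      semiconj_swap q := hs ▸ h.semiconjBy_map_conjAut s q
      semiconj := h.semiconjBy_of_conjAut_eq hc hc3 hs }
  exact exists_hom_of_octahedralRelations h.card_eq hrel (h.surjective_octahedralWord hc hs) h'

theorem card_mulAut (h : IsOctahedralEmbedding ι) :
    Nat.card (MulAut (QuaternionGroup 2)) = 24 := by
  have hker : ((conjAut ι h.injective).ker : Set K) = {1, ι (.a 2)} :=
    Set.ext fun _ ↦ h.conjAut_eq_one_iff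
  have hcard : Nat.card (conjAut ι h.injective).ker = 2 := by
    rw [← SetLike.coe_sort_coe, hker, Nat.card_coe_set_eq, Set.ncard_pair h.map_a_two_ne_one.symm]
  have hindex := (conjAut ι h.injective).ker.card_mul_index
  rw [hcard, Subgroup.index_ker, MonoidHom.range_eq_top.2 h.surjective_conjAut, Subgroup.card_top,
    h.card_eq] at hindex
  omega

theorem injective_of_map_a_two_ne_one (h : IsOctahedralEmbedding ι) {M : Type*} [Monoid M]
    {R : K →* M} (hR : R (ι (.a 2)) ≠ 1) : Function.Injective R := by
  have hdisj : Disjoint R.ker ι.range := by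
    refine Subgroup.disjoint_def.2 fun {x} hx hq ↦ ?_
    obtain ⟨q, rfl⟩ := hq
    have eq_or_sq_eq : ∀ q : QuaternionGroup 2, q = 1 ∨ q = .a 2 ∨ q ^ 2 = .a 2 := by decide
    obtain rfl | hq | hq := eq_or_sq_eq q
    · exact map_one ι
    · exact absurd (hq ▸ hx) hR
    · exact absurd (by rw [← hq, map_pow, map_pow, MonoidHom.mem_ker.1 hx, one_pow]) hR
  refine (MonoidHom.ker_eq_bot_iff R).1 ((Subgroup.eq_bot_iff_forall _).2 fun y hy ↦ ?_)
  have hconj : conjAut ι h.injective y = 1 := MulEquiv.ext fun q ↦ h.injective <| by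
    rw [map_conjAut_apply, mul_inv_eq_iff_eq_mul]
    exact Subgroup.commute_of_normal_of_disjoint _ _ inferInstance inferInstance hdisj _ _ hy
      ⟨q, rfl⟩
  exact (h.conjAut_eq_one_iff.1 hconj).resolve_right fun hyz ↦ hR (hyz ▸ hy)

end IsOctahedralEmbedding

theorem eq_smul_one_of_isDiag {n k : Type*} [DecidableEq n] [CommRing k] {A : Matrix n n k}
    (hA : A.IsDiag) {a : k} (hdiag : ∀ i, A i i = a) : A = a • 1 := by
  rw [Matrix.smul_one_eq_diagonal, ← hA.diagonal_diag]
  exact congrArg Matrix.diagonal (funext hdiag)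

section ScalarCommutant

open scoped Kronecker

variable {G H m n k : Type*} [Group G] [Group H] [Fintype m] [DecidableEq m] [Fintype n]
  [DecidableEq n] [CommRing k]

/-- The commutant of the matrix representation `R` consists of the scalar matrices. Over an
algebraically closed field of characteristic zero, by Schur's lemma and Maschke's theorem, this
expresses that `R` is irreducible. -/
def HasScalarCommutant (R : G →* Matrix n n k) : Prop :=
  ∀ A : Matrix n n k, (∀ g, Commute A (R g)) → ∃ a : k, A = a • 1

theorem HasScalarCommutant.comp_of_surjective {R : H →* Matrix n n k}
    (hR : HasScalarCommutant R) {φ : G →* H} (hφ : Function.Surjective φ) :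
    HasScalarCommutant (R.comp φ) :=
  fun A hA ↦ hR A (hφ.forall.2 hA)

theorem HasScalarCommutant.of_comp {R : H →* Matrix n n k} {φ : G →* H}
    (hR : HasScalarCommutant (R.comp φ)) : HasScalarCommutant R :=
  fun A hA ↦ hR A fun g ↦ hA (φ g)

theorem hasScalarCommutant_of_unique [Unique n] (R : G →* Matrix n n k) :
    HasScalarCommutant R := fun A _ ↦
  ⟨A default default, Matrix.ext fun a b ↦ by simp [Unique.eq_default]⟩

/-- The tensor product of two matrix representations. -/
def kroneckerHom (R : G →* Matrix m m k) (S : G →* Matrix n n k) :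
    G →* Matrix (m × n) (m × n) k where
  toFun g := R g ⊗ₖ S g
  map_one' := by rw [map_one, map_one, Matrix.one_kronecker_one]
  map_mul' g h := by rw [map_mul, map_mul, Matrix.mul_kronecker_mul]

theorem kroneckerHom_apply (R : G →* Matrix m m k) (S : G →* Matrix n n k) (g : G) :
    kroneckerHom R S g = R g ⊗ₖ S g := rfl

theorem HasScalarCommutant.exists_eq_kronecker_one {S : G →* Matrix n n k}
    (hS : HasScalarCommutant S) {A : Matrix (m × n) (m × n) k}
    (hA : ∀ g, Commute A ((1 : Matrix m m k) ⊗ₖ S g)) : ∃ B : Matrix m m k, A = B ⊗ₖ 1 := by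
  have exists_block (a b : m) :
      ∃ t : k, (Matrix.of fun x y ↦ A (a, x) (b, y) : Matrix n n k) = t • 1 := by
    refine hS _ fun g ↦ Matrix.ext fun x y ↦ ?_
    simpa [Matrix.mul_apply, Fintype.sum_prod_type, Matrix.one_apply] using
      congrFun₂ (hA g).eq (a, x) (b, y)
  choose B hB using exists_block
  exact ⟨Matrix.of B, Matrix.ext fun x y ↦ by simpa using congrFun₂ (hB x.1 y.1) x.2 y.2⟩

theorem HasScalarCommutant.kroneckerHom [Nonempty n] {R : G →* Matrix m m k}
    {S : G →* Matrix n n k} (hR : HasScalarCommutant R) {φ : H →* G}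
    (hS : HasScalarCommutant (S.comp φ)) (hφ : ∀ h, R (φ h) = 1) :
    HasScalarCommutant (kroneckerHom R S) := fun A hA ↦ by
  obtain ⟨B, rfl⟩ := hS.exists_eq_kronecker_one (m := m) (A := A) fun h ↦ by
    simpa only [kroneckerHom_apply, hφ, MonoidHom.comp_apply] using hA (φ h)
  obtain ⟨t, rfl⟩ := hR B fun g ↦ by
    have hBR : (B * R g) ⊗ₖ S g = (R g * B) ⊗ₖ S g := by
      simpa only [kroneckerHom_apply, ← Matrix.mul_kronecker_mul, one_mul, mul_one] using
        (hA g).eq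
    have hBR1 : (B * R g) ⊗ₖ (1 : Matrix n n k) = (R g * B) ⊗ₖ 1 := by
      simpa only [← Matrix.mul_kronecker_mul, ← map_mul, mul_inv_cancel, map_one, mul_one] using
        congrArg (· * (1 : Matrix m m k) ⊗ₖ S g⁻¹) hBR
    obtain ⟨x⟩ := ‹Nonempty n›
    exact Matrix.ext fun a b ↦ by simpa using congrFun₂ hBR1 (a, x) (b, x)
  exact ⟨t, by rw [Matrix.smul_kronecker, Matrix.one_kronecker_one]⟩

end ScalarCommutant

section Codegrees

variable {G n : Type} [Group G] [Fintype n] [DecidableEq n]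

/-- The representation of `G` on column vectors afforded by a matrix representation. -/
noncomputable def matrixFDRep (R : G →* Matrix n n ℂ) : FDRep ℂ G :=
  FDRep.of ((MonoidHomClass.toMonoidHom (Matrix.toLinAlgEquiv' (R := ℂ) (n := n))).comp R)

theorem charKer_matrixFDRep (R : G →* Matrix n n ℂ) : charKer (matrixFDRep R) = R.ker := by
  ext g
  rw [charKer, MonoidHom.mem_ker, MonoidHom.mem_ker, Units.ext_iff,
    Representation.asGroupHom_apply]
  exact map_eq_one_iff _ (Matrix.toLinAlgEquiv' (R := ℂ) (n := n)).injective

theorem simple_matrixFDRep [Finite G] [Nonempty n] {R : G →* Matrix n n ℂ}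
    (hR : HasScalarCommutant R) : Simple (matrixFDRep R) := by
  have : NeZero (Nat.card G : ℂ) := ⟨Nat.cast_ne_zero.2 Nat.card_pos.ne'⟩
  rw [FDRep.simple_iff_end_is_rank_one]
  refine finrank_eq_one (𝟙 _) (fun h ↦ ?_) fun w ↦ ?_
  · have : (LinearMap.id : (n → ℂ) →ₗ[ℂ] n → ℂ) = 0 := congrArg (fun w ↦ w.hom.hom.hom) h
    exact one_ne_zero (α := n → ℂ) (LinearMap.congr_fun this 1)
  · let L : (n → ℂ) →ₗ[ℂ] n → ℂ := w.hom.hom.hom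
    obtain ⟨a, ha⟩ := hR (LinearMap.toMatrix' L) fun g ↦ (commute_iff_eq _ _).2 <| by
      have hL : L ∘ₗ Matrix.toLin' (R g) = Matrix.toLin' (R g) ∘ₗ L :=
        congrArg (fun w ↦ w.hom.hom) (w.comm g)
      simpa only [LinearMap.toMatrix'_comp, LinearMap.toMatrix'_toLin'] using
        congrArg LinearMap.toMatrix' hL
    refine ⟨a, Action.Hom.ext (InducedCategory.hom_ext (ModuleCat.hom_ext ?_))⟩
    refine LinearMap.toMatrix'.injective (Eq.trans ?_ ha.symm)
    exact (map_smul _ a _).trans (congrArg _ LinearMap.toMatrix'_id)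

theorem card_div_card_mem_codSet {H : Type*} [Finite G] [Group H] [Nonempty n] {φ : G →* H}
    (hφ : Function.Surjective φ) {R : H →* Matrix n n ℂ} (hR : HasScalarCommutant R)
    (hinj : Function.Injective R) :
    Nat.card H / Fintype.card n ∈ codSet G := by
  refine ⟨matrixFDRep (R.comp φ), simple_matrixFDRep (hR.comp_of_surjective hφ), ?_⟩
  have hker : (R.comp φ).ker = φ.ker := by
    rw [← MonoidHom.comap_ker, (MonoidHom.ker_eq_bot_iff R).2 hinj, MonoidHom.comap_bot]
  have hindex : φ.ker.index = Nat.card H := by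
    rw [Subgroup.index_ker, MonoidHom.range_eq_top.2 hφ, Subgroup.card_top]
  have hdim : Module.finrank ℂ (matrixFDRep (R.comp φ)) = Fintype.card n :=
    Module.finrank_fintype_fun_eq_card ℂ
  rw [codeg, charKer_matrixFDRep, hker, hindex, hdim]

theorem finite_codSet (G : Type) [Group G] [Finite G] : (codSet G).Finite := by
  refine (Set.finite_Iic (Nat.card G)).subset ?_
  rintro _ ⟨V, -, rfl⟩
  exact (Nat.div_le_self _ _).trans (Nat.le_of_dvd Nat.card_pos (Subgroup.index_dvd_card _))

end Codegrees

section IntegralRepresentations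

variable {G n : Type*} [Group G] [Fintype n] [DecidableEq n]

/-- An integral matrix representation, viewed over the complex numbers. -/
noncomputable def complexification (R : G →* Matrix n n ℤ) : G →* Matrix n n ℂ :=
  (MonoidHomClass.toMonoidHom (Int.castRingHom ℂ).mapMatrix).comp R

theorem complexification_apply (R : G →* Matrix n n ℤ) (g : G) (a b : n) :
    complexification R g a b = R g a b := rfl

theorem complexification_injective {R : G →* Matrix n n ℤ} (hR : Function.Injective R) :
    Function.Injective (complexification R) :=
  (Matrix.map_injective (Int.castRingHom ℂ).injective_int).comp hR

/-- The standard representation of `S₃` on the basis `e₀ - e₂`, `e₁ - e₂` of the root lattice. -/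
def standardRep : Equiv.Perm (Fin 3) →* Matrix (Fin 2) (Fin 2) ℤ where
  toFun σ := Matrix.of fun a b ↦
    (if σ b.castSucc = a.castSucc then 1 else 0) - if σ 2 = a.castSucc then 1 else 0
  map_one' := by decide
  map_mul' := by decide

theorem standardRep_injective : Function.Injective standardRep := by
  unfold Function.Injective
  decide

theorem hasScalarCommutant_complexification_standardRep :
    HasScalarCommutant (complexification standardRep) := fun A hA ↦ by
  have standardRep_swap : standardRep (Equiv.swap 0 1) = !![0, 1; 1, 0] := by decide
  have standardRep_rotate : standardRep (finRotate 3) = !![-1, -1; 1, 0] := by decide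
  have hoff : A 0 1 = A 1 0 := by
    simpa [Matrix.mul_apply, complexification_apply, standardRep_swap] using
      congrFun₂ (hA (Equiv.swap 0 1)).eq 0 0
  have hoff' : -A 1 0 = A 0 1 := by
    simpa [Matrix.mul_apply, complexification_apply, standardRep_rotate] using
      congrFun₂ (hA (finRotate 3)).eq 1 1
  have hdiag : A 0 0 = A 1 1 := by
    simpa [Matrix.mul_apply, complexification_apply, standardRep_swap] using
      congrFun₂ (hA (Equiv.swap 0 1)).eq 0 1
  refine ⟨A 0 0, eq_smul_one_of_isDiag (fun a b hab ↦ ?_) (Fin.forall_fin_two.2 ⟨rfl, hdiag.symm⟩)⟩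
  fin_cases a <;> fin_cases b <;> grind

/-- The coordinates of `±i`, `±j`, `±k` with respect to the three `axisGenerator`s; those of `±1`
are zero. -/
def axisCoord (q : QuaternionGroup 2) (m : Fin 3) : ℤ :=
  if q = axisGenerator m then 1 else if q = (axisGenerator m)⁻¹ then -1 else 0

theorem axisCoord_axisGenerator :
    ∀ l m, axisCoord (axisGenerator l) m = if l = m then 1 else 0 := by
  decide

theorem axisCoord_inv :
    ∀ q : QuaternionGroup 2, q ^ 2 ≠ 1 → ∀ m, axisCoord q⁻¹ m = -axisCoord q m := by
  decide

theorem axisCoord_eq_one : ∀ q m, axisCoord q m = 1 → q = axisGenerator m := by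
  decide

theorem axisCoord_mulAut_apply (φ : MulAut (QuaternionGroup 2)) {q : QuaternionGroup 2}
    (hq : q ^ 2 ≠ 1) (m : Fin 3) :
    axisCoord (φ q) m = ∑ l, axisCoord (φ (axisGenerator l)) m * axisCoord q l := by
  obtain h | h := eq_axisGenerator_or_inv q hq
  · generalize quaternionAxis q = a at h
    simp [h, axisCoord_axisGenerator]
  · generalize quaternionAxis q = a at h
    have hg := axisGenerator_sq_ne_one a
    simp [h, axisCoord_inv _ hg, axisCoord_inv _ (mulAut_apply_sq_ne_one φ hg),
      axisCoord_axisGenerator]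

/-- The representation of `Aut Q₈` on the pure quaternions, by signed permutation matrices. -/
def axisRep : MulAut (QuaternionGroup 2) →* Matrix (Fin 3) (Fin 3) ℤ where
  toFun φ := Matrix.of fun m l ↦ axisCoord (φ (axisGenerator l)) m
  map_one' := by decide
  map_mul' φ ψ := Matrix.ext fun m l ↦ by
    exact axisCoord_mulAut_apply φ (mulAut_apply_sq_ne_one ψ (axisGenerator_sq_ne_one l)) m

theorem axisRep_injective : Function.Injective axisRep := by
  refine (injective_iff_map_eq_one _).2 fun φ hφ ↦ ?_
  have apply_axisGenerator (m) : φ (axisGenerator m) = axisGenerator m :=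
    axisCoord_eq_one _ _ ((congrFun₂ hφ m m).trans (Matrix.one_apply_eq m))
  exact MulEquiv.toMonoidHom_injective
    (quaternionGroup_hom_ext (apply_axisGenerator 0) (apply_axisGenerator 1))

theorem hasScalarCommutant_complexification_axisRep :
    HasScalarCommutant (complexification axisRep) := fun A hA ↦ by
  have axisRep_i : axisRep (MulAut.conj (.a 1)) = Matrix.diagonal ![1, -1, -1] := by decide
  have axisRep_j : axisRep (MulAut.conj (.xa 0)) = Matrix.diagonal ![-1, 1, -1] := by decide
  have axisRep_rotation : axisRep quaternionRotation = !![0, 0, -1; 1, 0, 0; 0, -1, 0] := by decide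
  have hi : (-A 0 1 = A 0 1 ∧ -A 0 2 = A 0 2) ∧ A 1 0 = -A 1 0 ∧ A 2 0 = -A 2 0 := by
    simpa [Matrix.mul_apply, complexification_apply, axisRep_i, Fin.sum_univ_three,
      Fin.forall_fin_succ] using
      congrFun₂ (hA (MulAut.conj (.a 1))).eq
  have hj : A 0 1 = -A 0 1 ∧ (-A 1 0 = A 1 0 ∧ -A 1 2 = A 1 2) ∧ A 2 1 = -A 2 1 := by
    simpa [Matrix.mul_apply, complexification_apply, axisRep_j, Fin.sum_univ_three,
      Fin.forall_fin_succ] using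
      congrFun₂ (hA (MulAut.conj (.xa 0))).eq
  have hrotation : (A 0 1 = -A 2 0 ∧ A 0 2 = A 2 1 ∧ A 0 0 = A 2 2) ∧
      (A 1 1 = A 0 0 ∧ -A 1 2 = A 0 1 ∧ -A 1 0 = A 0 2) ∧
      A 2 1 = -A 1 0 ∧ A 2 2 = A 1 1 ∧ A 2 0 = A 1 2 := by
    simpa [Matrix.mul_apply, complexification_apply, axisRep_rotation, Fin.sum_univ_three,
      Fin.forall_fin_succ] using
      congrFun₂ (hA quaternionRotation).eq
  refine ⟨A 0 0, eq_smul_one_of_isDiag (fun a b hab ↦ ?_) fun a ↦ ?_⟩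
  · fin_cases a <;> fin_cases b <;> grind
  · fin_cases a <;> grind

end IntegralRepresentations

section MonoidSolutions

variable {M : Type*} [Monoid M]

theorem exists_quaternionGroup_two_hom {i j : M} (hi : i ^ 4 = 1) (hj : j ^ 2 = i ^ 2)
    (hji : j * i = i ^ 3 * j) :
    ∃ κ : QuaternionGroup 2 →* M, κ (.a 1) = i ∧ κ (.xa 0) = j := by
  have hj4 : j ^ 4 = 1 := by rw [pow_mul j 2 2, hj, ← pow_mul, hi]
  let u : Mˣ := Units.ofPowEqOne i 4 hi (by decide)
  let v : Mˣ := Units.ofPowEqOne j 4 hj4 (by decide)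
  have hu : u ^ (2 * 2) = 1 := Units.ext hi
  have hv : v * v = u ^ 2 := Units.ext ((sq j).symm.trans hj)
  have hvu : v * u * v⁻¹ = u⁻¹ := by
    have huinv : u⁻¹ = u ^ 3 := inv_eq_of_mul_eq_one_left ((pow_succ u 3).symm.trans hu)
    rw [huinv, mul_inv_eq_iff_eq_mul]
    exact Units.ext hji
  refine ⟨(Units.coeHom M).comp (quaternionGroupLift hu hv hvu), ?_, ?_⟩
  · simpa [u] using congrArg Units.val (quaternionGroupLift_a hu hv hvu 1)
  · simpa [v] using congrArg Units.val (quaternionGroupLift_xa hu hv hvu 0)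

theorem exists_eq_a_one_pow_mul_xa_zero_pow : ∀ q : QuaternionGroup 2,
    ∃ (m : Fin 4) (n : Fin 2), q = .a 1 ^ (m : ℕ) * .xa 0 ^ (n : ℕ) := by
  decide

theorem semiconjBy_map_of_a_one_of_xa_zero {κ : QuaternionGroup 2 →* M}
    {φ : MulAut (QuaternionGroup 2)} {c : M} (ha : SemiconjBy c (κ (.a 1)) (κ (φ (.a 1))))
    (hx : SemiconjBy c (κ (.xa 0)) (κ (φ (.xa 0)))) (q : QuaternionGroup 2) :
    SemiconjBy c (κ q) (κ (φ q)) := by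
  obtain ⟨m, n, rfl⟩ := exists_eq_a_one_pow_mul_xa_zero_pow q
  simp only [map_mul, map_pow]
  exact (ha.pow_right _).mul_right (hx.pow_right _)

theorem exists_octahedralRelations {i j c s : M} (hi : i ^ 4 = 1) (hj : j ^ 2 = i ^ 2)
    (hji : j * i = i ^ 3 * j) (hc : c ^ 3 = 1) (hci : c * i = j * c) (hcj : c * j = i * j * c)
    (hs : s ^ 2 = i ^ 2) (hsi : s * i = j ^ 3 * s) (hsj : s * j = i ^ 3 * s)
    (hsc : s * c = c ^ 2 * s) :
    ∃ κ : QuaternionGroup 2 →* M, κ (.a 1) = i ∧ κ (.xa 0) = j ∧ OctahedralRelations κ c s := by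
  obtain ⟨κ, rfl, rfl⟩ := exists_quaternionGroup_two_hom hi hj hji
  simp only [← map_pow, ← map_mul] at hci hcj hs hsi hsj
  exact ⟨κ, rfl, rfl,
    { pow_three := hc
      mul_self := (sq s).symm.trans hs
      semiconj_rotation := semiconjBy_map_of_a_one_of_xa_zero hci hcj
      semiconj_swap := semiconjBy_map_of_a_one_of_xa_zero hsi hsj
      semiconj := hsc }⟩

end MonoidSolutions

-- `c` is the Hurwitz unit `-(1 + i + j + k) / 2`, and `s` is `(i - j) / √2`.
theorem exists_octahedralRelations_matrix :
    ∃ (κ : QuaternionGroup 2 →* Matrix (Fin 2) (Fin 2) ℂ) (c s : Matrix (Fin 2) (Fin 2) ℂ),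
      OctahedralRelations κ c s ∧ HasScalarCommutant κ ∧ κ (.a 2) ≠ 1 := by
  obtain ⟨u, hu⟩ : ∃ u : ℂ, u ^ 2 = -1 := ⟨Complex.I, Complex.I_sq⟩
  obtain ⟨w, hw⟩ : ∃ w : ℂ, w ^ 2 = 1 / 2 := IsAlgClosed.exists_pow_nat_eq _ two_pos
  let i : Matrix (Fin 2) (Fin 2) ℂ := !![u, 0; 0, -u]
  let j : Matrix (Fin 2) (Fin 2) ℂ := !![0, 1; -1, 0]
  let c : Matrix (Fin 2) (Fin 2) ℂ :=
    !![-(1 + u) / 2, -(1 + u) / 2; (1 - u) / 2, -(1 - u) / 2]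
  let s : Matrix (Fin 2) (Fin 2) ℂ := !![w * u, -w; w, -(w * u)]
  obtain ⟨κ, hκi, hκj, hκ⟩ : ∃ κ : QuaternionGroup 2 →* _,
      κ (.a 1) = i ∧ κ (.xa 0) = j ∧ OctahedralRelations κ c s := by
    apply exists_octahedralRelations <;> ext a b <;> fin_cases a <;> fin_cases b <;>
      simp [i, j, c, s, pow_succ] <;> grind
  refine ⟨κ, c, s, hκ, fun A hA ↦ ?_, fun h ↦ ?_⟩
  · have h01 : A 0 1 * -u = u * A 0 1 := by
      simpa [hκi, i, Matrix.mul_apply] using congrFun₂ (hA (.a 1)).eq 0 1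
    have h10 : A 1 0 * u = -u * A 1 0 := by
      simpa [hκi, i, Matrix.mul_apply] using congrFun₂ (hA (.a 1)).eq 1 0
    have hdiag : A 0 0 = A 1 1 := by
      simpa [hκj, j, Matrix.mul_apply] using congrFun₂ (hA (.xa 0)).eq 0 1
    refine ⟨A 0 0, eq_smul_one_of_isDiag (fun a b hab ↦ ?_)
      (Fin.forall_fin_two.2 ⟨rfl, hdiag.symm⟩)⟩
    fin_cases a <;> fin_cases b <;> grind
  · have hii : i ^ 2 = 1 := by rw [← hκi, ← map_pow]; exact h
    have h00 : u ^ 2 = 1 := by simpa [i, sq] using congrFun₂ hii 0 0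
    norm_num [hu] at h00

theorem card_mem_codSet_of_injective {G : Type} {H : Type*} [Group G] [Finite G] [Group H]
    {φ : G →* H} (hφ : Function.Surjective φ) {χ : H →* ℂ} (hχ : Function.Injective χ) :
    Nat.card H ∈ codSet G := by
  simpa using card_div_card_mem_codSet hφ
    (hasScalarCommutant_of_unique
      ((MonoidHomClass.toMonoidHom (Matrix.scalar (Fin 1))).comp χ))
    fun _ _ h ↦ hχ (Matrix.scalar_inj.1 h)

theorem one_mem_codSet (G : Type) [Group G] [Finite G] : 1 ∈ codSet G := by
  simpa using card_mem_codSet_of_injective (φ := (1 : G →* PUnit.{1}))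
    (fun _ ↦ ⟨1, rfl⟩) (χ := 1) (Function.injective_of_subsingleton _)

namespace IsOctahedralEmbedding

variable {K : Type*} [Group K] {ι : QuaternionGroup 2 →* K} [ι.range.Normal]

theorem exists_matrix_hom (h : IsOctahedralEmbedding ι) :
    ∃ R : K →* Matrix (Fin 2) (Fin 2) ℂ, HasScalarCommutant (R.comp ι) ∧ R (ι (.a 2)) ≠ 1 := by
  obtain ⟨κ, c, s, hκ, hcomm, hne⟩ := exists_octahedralRelations_matrix
  obtain ⟨R, hR⟩ := h.exists_hom hκ
  obtain rfl : R.comp ι = κ := MonoidHom.ext hR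
  exact ⟨R, hcomm, hne⟩

variable {G : Type} [Group G] [Finite G] {φ : G →* K}

theorem two_mem_codSet (h : IsOctahedralEmbedding ι) (hφ : Function.Surjective φ) :
    2 ∈ codSet G := by
  let σ : G →* ℤˣ := Equiv.Perm.sign.comp ((axisPerm.comp (conjAut ι h.injective)).comp φ)
  have hσ : Function.Surjective σ :=
    (Equiv.Perm.sign_surjective (Fin 3)).comp (h.surjective.comp hφ)
  let χ : ℤˣ →* ℂ := (MonoidHomClass.toMonoidHom (Int.castRingHom ℂ)).comp (Units.coeHom ℤ)
  have hχ : Function.Injective χ := Int.cast_injective.comp Units.val_injective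
  simpa using card_mem_codSet_of_injective hσ hχ

theorem three_mem_codSet (h : IsOctahedralEmbedding ι) (hφ : Function.Surjective φ) :
    3 ∈ codSet G := by
  have hsurj : Function.Surjective ((axisPerm.comp (conjAut ι h.injective)).comp φ) :=
    h.surjective.comp hφ
  simpa [Nat.card_eq_fintype_card, Fintype.card_perm, Nat.factorial] using
    card_div_card_mem_codSet hsurj hasScalarCommutant_complexification_standardRep
      (complexification_injective standardRep_injective)

theorem eight_mem_codSet (h : IsOctahedralEmbedding ι) (hφ : Function.Surjective φ) :
    8 ∈ codSet G := by
  have hsurj : Function.Surjective ((conjAut ι h.injective).comp φ) :=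
    h.surjective_conjAut.comp hφ
  have hmem := card_div_card_mem_codSet hsurj hasScalarCommutant_complexification_axisRep
    (complexification_injective axisRep_injective)
  rwa [h.card_mulAut, Fintype.card_fin] at hmem

theorem twenty_four_mem_codSet (h : IsOctahedralEmbedding ι) (hφ : Function.Surjective φ) :
    24 ∈ codSet G := by
  obtain ⟨R, hR, hz⟩ := h.exists_matrix_hom
  simpa [h.card_eq] using
    card_div_card_mem_codSet hφ hR.of_comp (h.injective_of_map_a_two_ne_one hz)

theorem twelve_mem_codSet (h : IsOctahedralEmbedding ι) (hφ : Function.Surjective φ) :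
    12 ∈ codSet G := by
  obtain ⟨R, hR, hz⟩ := h.exists_matrix_hom
  let S : K →* Matrix (Fin 2) (Fin 2) ℂ :=
    (complexification standardRep).comp (axisPerm.comp (conjAut ι h.injective))
  have hS : HasScalarCommutant S :=
    hasScalarCommutant_complexification_standardRep.comp_of_surjective h.surjective
  have hSι (q : QuaternionGroup 2) : S (ι q) = 1 := by
    have hq : axisPerm (conjAut ι h.injective (ι q)) = 1 := h.ker_eq.ge ⟨q, rfl⟩
    simp [S, hq]
  have hinj : Function.Injective (kroneckerHom S R) :=
    h.injective_of_map_a_two_ne_one fun hz' ↦ hz <| by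
      rw [kroneckerHom_apply, hSι] at hz'
      ext a b
      simpa [Matrix.one_apply] using congrFun₂ hz' (0, a) (0, b)
  simpa [h.card_eq] using card_div_card_mem_codSet hφ (hS.kroneckerHom hR hSι) hinj

theorem six_le_ncard_codSet (h : IsOctahedralEmbedding ι) (hφ : Function.Surjective φ) :
    6 ≤ (codSet G).ncard := by
  have hsub : (({1, 2, 3, 8, 12, 24} : Finset ℕ) : Set ℕ) ⊆ codSet G := by
    simp [Set.insert_subset_iff, one_mem_codSet, h.two_mem_codSet hφ, h.three_mem_codSet hφ,
      h.eight_mem_codSet hφ, h.twelve_mem_codSet hφ, h.twenty_four_mem_codSet hφ]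
  simpa [Set.ncard_coe_finset] using Set.ncard_le_ncard hsub (finite_codSet G)

end IsOctahedralEmbedding

theorem stmt_14_general {G : Type} [Group G] [Finite G] [Group.IsSolvable G] {V : Type*}
    [AddCommGroup V] [DistribMulAction G V] [FaithfulSMul G V]
    (hfpf : ActsFixedPointFreely G V) :
    fittingHeight G ≤ 2 ∨
      (fittingHeight G = 3 ∧ HasBinaryOctahedralQuotient G ∧ 6 ≤ (codSet G).ncard) := by
  have hI := hfpf.atMostOneInvolution
  refine or_iff_not_imp_left.2 fun h2 ↦ ?_
  obtain ⟨h3, ι, hι, _, hsurj⟩ := (fittingHeight_le_two_or_exists_quaternionGroup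
    (fun p _ _ ↦ hfpf.pSqCondition p) hI).resolve_left h2
  obtain ⟨N, _, κ, _, hκ⟩ := exists_quotient_isOctahedralEmbedding hι hI hsurj
  have hN : Function.Surjective (QuotientGroup.mk' N) := QuotientGroup.mk'_surjective N
  exact ⟨by lia, ⟨G ⧸ N, inferInstance, QuotientGroup.mk' N, hN, hκ.isBinaryOctahedral⟩,
    hκ.six_le_ncard_codSet hN⟩

theorem stmt_14 {G : Type} [Group G] [Finite G] {F : Type} [Field F] {V : Type}
    [AddCommGroup V] [Module F V] [Finite V]
    (ρ : G →* (V ≃ₗ[F] V)) (hfaithful : Function.Injective ρ)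
    (hfpf : ∀ g : G, g ≠ 1 → ∀ v : V, v ≠ 0 → ρ g v ≠ v)
    (hsol : IsSolvable G) :
    fittingHeight G ≤ 2 ∨
      (fittingHeight G = 3 ∧ HasBinaryOctahedralQuotient G ∧ 6 ≤ (codSet G).ncard) := by
  let := DistribMulAction.compHom V ρ
  have : FaithfulSMul G V := ⟨fun h ↦ hfaithful (LinearEquiv.ext h)⟩
  have : Group.IsSolvable G := hsol
  exact stmt_14_general (V := V) hfpf
end

section
/- The codegree set of the binary octahedral group (the conformal special unitary group CSU(2,3) of order 48, with Fitting subgroup Q₈ and Sylow 2-subgroup Q₁₆) is {1, 2, 3, 8, 12, 24}. -/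
open CategoryTheory

/-!
Let `F ≅ Q₈` be the Fitting subgroup of `K` and `Z` its centralizer. Solvability and the faithful
action of elements of order three on `F` force the normal subgroups of `K` to be the chain
`1 < Z < F < K' < K`, of indices 48, 24, 6, 2, 1.

For `N` normal, the squares of the degrees of the irreducible characters with `N` in their kernel
add up to `|K : N|`, so the sums over the characters with kernel exactly `1, Z, F, K', K` are
24, 18, 4, 1, 1. As only characters trivial on `K'` are linear, the degrees are determined as soon
as the faithful ones are known: 24 is `6 · 2²` or `2² + 2² + 4²`. The former is impossible: an
element `t ∈ K'` of order three has trace `-1` in every faithful representation of degree two, while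
the sum of `χ(1) χ(t)` over the faithful `χ` vanishes.
-/

section Representations

open Module (finrank)

universe u

variable {k G : Type u} [Field k] [Group G]

theorem ker_eq_of_iso {V W : FDRep k G} (e : V ≅ W) : V.ρ.ker = W.ρ.ker := by
  ext g
  rw [MonoidHom.mem_ker, MonoidHom.mem_ker, FDRep.Iso.conj_ρ e]
  exact ((LinearEquiv.conjRingEquiv (FDRep.isoToLinearEquiv e)).map_eq_one_iff).symm

theorem finrank_eq_of_iso {V W : FDRep k G} (e : V ≅ W) : finrank k V = finrank k W :=
  (FDRep.isoToLinearEquiv e).finrank_eq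

theorem id_eq_zero_iff_finrank_eq_zero {V : FDRep k G} : 𝟙 V = 0 ↔ finrank k V = 0 := by
  rw [Module.finrank_eq_zero_iff_of_free]
  refine ⟨fun h => subsingleton_of_forall_eq 0 fun x => ?_, fun _ => ?_⟩
  · exact congrArg (fun f : V ⟶ V => f.hom.hom.hom x) h
  · ext x
    exact Subsingleton.elim (α := V) _ _

theorem finrank_ne_zero_of_simple (V : FDRep k G) [Simple V] : finrank k V ≠ 0 :=
  mt id_eq_zero_iff_finrank_eq_zero.mpr (id_nonzero V)

/-- The endomorphism of a representation given by a linear map commuting with the action. -/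
noncomputable def endOfCommute (V : FDRep k G) (f : V →ₗ[k] V) (hf : ∀ g, Commute (V.ρ g) f) :
    V ⟶ V where
  hom := FGModuleCat.ofHom f
  comm g := by
    ext x
    exact LinearMap.congr_fun (hf g).symm x

theorem sum_subgroup_apply_eq_zero (V : FDRep k G) [Simple V] {N : Subgroup G} [N.Normal]
    [Fintype N] (hker : ¬ N ≤ V.ρ.ker) : ∑ n : N, V.ρ n = 0 := by
  obtain ⟨m, hmN, hm⟩ := SetLike.not_le_iff_exists.mp hker
  have hcomm (g : G) : Commute (V.ρ g) (∑ n : N, V.ρ n) := by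
    rw [commute_iff_eq, Finset.mul_sum, Finset.sum_mul]
    refine Fintype.sum_equiv (MulAut.conjNormal g).toEquiv _ _ fun n => ?_
    rw [MulEquiv.toEquiv_eq_coe, MulEquiv.coe_toEquiv, MulAut.conjNormal_apply, ← map_mul,
      ← map_mul, inv_mul_cancel_right]
  have habsorb : (∑ n : N, V.ρ n) * V.ρ m = ∑ n : N, V.ρ n := by
    rw [Finset.sum_mul]
    refine Fintype.sum_equiv (Equiv.mulRight ⟨m, hmN⟩) _ _ fun n => ?_
    rw [Equiv.coe_mulRight, Subgroup.coe_mul, map_mul]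
  by_contra hne
  have hend : endOfCommute V _ hcomm ≠ 0 := fun h =>
    hne (LinearMap.ext fun x => congrArg (fun f : V ⟶ V => f.hom.hom.hom x) h)
  have := isIso_of_hom_simple hend
  have hinj : Function.Injective ⇑(∑ n : N, V.ρ n) :=
    (FDRep.isoToLinearEquiv (asIso (endOfCommute V _ hcomm))).injective
  exact hm (MonoidHom.mem_ker.mpr (LinearMap.ext fun x => hinj (LinearMap.congr_fun habsorb x)))

open scoped Classical in
theorem sum_subgroup_character_mul (V : FDRep k G) [Simple V] (N : Subgroup G) [N.Normal]
    [Fintype N] (g : G) :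
    ∑ n : N, V.character (n * g) = if N ≤ V.ρ.ker then Nat.card N * V.character g else 0 := by
  have htrace : ∑ n : N, V.character (n * g) =
      LinearMap.trace k V ((∑ n : N, V.ρ n) * V.ρ g) := by
    simp only [FDRep.character, map_mul, Finset.sum_mul, map_sum]
  split_ifs with hker
  · have hn (n : N) : V.ρ n = 1 := MonoidHom.mem_ker.mp (hker n.2)
    rw [htrace, Finset.sum_congr rfl fun n _ => hn n, Finset.sum_const, Finset.card_univ,
      Nat.card_eq_fintype_card, smul_mul_assoc, one_mul, map_nsmul, nsmul_eq_mul, FDRep.character]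
  · rw [htrace, sum_subgroup_apply_eq_zero V hker, zero_mul, map_zero]

open scoped Classical in
/-- A finite family of representations is regular if their characters, weighted by their degrees,
add up to the regular character. Over an algebraically closed field of characteristic zero, this
says that the family lists the irreducible representations up to isomorphism. -/
structure IsRegularFamily [Finite G] {ι : Type*} [Fintype ι] (W : ι → FDRep k G) : Prop where
  finrank_ne_zero (i : ι) : finrank k (W i) ≠ 0
  sum_finrank_mul_character (g : G) :
    ∑ i, (finrank k (W i) : k) * (W i).character g = if g = 1 then (Nat.card G : k) else 0

namespace IsRegularFamily

variable [IsAlgClosed k] [CharZero k] [Finite G] {ι : Type*} [Fintype ι] {W : ι → FDRep k G}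

omit [IsAlgClosed k] in
theorem sum_finrank_mul_finrank_hom (hW : IsRegularFamily W) (V : FDRep k G) :
    ∑ i, finrank k (W i) * finrank k (V ⟶ W i) = finrank k V := by
  have := Fintype.ofFinite G
  have hcard : (Nat.card G : k) ≠ 0 := Nat.cast_ne_zero.mpr Nat.card_pos.ne'
  have := invertibleOfNonzero hcard
  suffices h : ∑ i, (finrank k (W i) : k) * (finrank k (V ⟶ W i) : k) = finrank k V by
    exact_mod_cast h
  calc ∑ i, (finrank k (W i) : k) * (finrank k (V ⟶ W i) : k)
    _ = (Nat.card G : k)⁻¹ *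
        ∑ g, (∑ i, (finrank k (W i) : k) * (W i).character g) * V.character g⁻¹ := by
      simp only [← FDRep.scalar_product_char_eq_finrank_equivariant, Finset.mul_sum,
        Finset.sum_mul]
      rw [Finset.sum_comm]
      exact Finset.sum_congr rfl fun g _ => Finset.sum_congr rfl fun i _ => by ring
    _ = finrank k V := by
      simp only [hW.sum_finrank_mul_character]
      rw [Fintype.sum_eq_single 1 fun g hg => by rw [if_neg hg, zero_mul], if_pos rfl, inv_one,
        FDRep.char_one, inv_mul_cancel_left₀ hcard]

theorem simple (hW : IsRegularFamily W) (i : ι) : Simple (W i) := by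
  have : NeZero (Nat.card G : k) := ⟨Nat.cast_ne_zero.mpr Nat.card_pos.ne'⟩
  rw [FDRep.simple_iff_end_is_rank_one]
  have hle : finrank k (W i) * finrank k (W i ⟶ W i) ≤ finrank k (W i) * 1 := by
    rw [mul_one]
    refine (Finset.single_le_sum (f := fun j => finrank k (W j) * finrank k (W i ⟶ W j))
      (fun j _ => Nat.zero_le _) (Finset.mem_univ i)).trans ?_
    exact (hW.sum_finrank_mul_finrank_hom (W i)).le
  have hne : finrank k (W i ⟶ W i) ≠ 0 := fun h => by
    rw [Module.finrank_eq_zero_iff_of_free] at h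
    exact hW.finrank_ne_zero i (id_eq_zero_iff_finrank_eq_zero.mp (Subsingleton.elim _ _))
  have := Nat.le_of_mul_le_mul_left hle (Nat.pos_of_ne_zero (hW.finrank_ne_zero i))
  omega

theorem exists_iso (hW : IsRegularFamily W) (V : FDRep k G) [Simple V] :
    ∃ i, Nonempty (V ≅ W i) := by
  by_contra! hempty
  refine finrank_ne_zero_of_simple V ?_
  rw [← hW.sum_finrank_mul_finrank_hom V]
  refine Finset.sum_eq_zero fun i _ => ?_
  have := hW.simple i
  rw [FDRep.finrank_hom_simple_simple, if_neg (not_nonempty_iff.mpr (hempty i)), mul_zero]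

open scoped Classical in
theorem sum_le_ker_finrank_mul_character (hW : IsRegularFamily W) (N : Subgroup G) [N.Normal]
    (g : G) :
    ∑ i with N ≤ (W i).ρ.ker, (finrank k (W i) : k) * (W i).character g =
      if g ∈ N then (N.index : k) else 0 := by
  have := Fintype.ofFinite N
  have hcard : (Nat.card N : k) ≠ 0 := Nat.cast_ne_zero.mpr Nat.card_pos.ne'
  refine mul_left_cancel₀ hcard ?_
  calc (Nat.card N : k) * ∑ i with N ≤ (W i).ρ.ker, (finrank k (W i) : k) * (W i).character g
    _ = ∑ i, (finrank k (W i) : k) * ∑ n : N, (W i).character (n * g) := by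
      rw [Finset.mul_sum, Finset.sum_filter]
      refine Finset.sum_congr rfl fun i _ => ?_
      have := hW.simple i
      rw [sum_subgroup_character_mul, mul_ite, mul_zero, mul_left_comm]
    _ = ∑ n : N, if (n : G) * g = 1 then (Nat.card G : k) else 0 := by
      simp only [← hW.sum_finrank_mul_character, Finset.mul_sum]
      exact Finset.sum_comm
    _ = (Nat.card N : k) * if g ∈ N then (N.index : k) else 0 := by
      simp only [mul_eq_one_iff_eq_inv, mul_ite, mul_zero, ← Nat.cast_mul, N.card_mul_index]
      split_ifs with hg
      · rw [Fintype.sum_eq_single ⟨g⁻¹, inv_mem hg⟩ fun n hn => if_neg fun h => hn (Subtype.ext h),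
          if_pos rfl]
      · exact Finset.sum_eq_zero fun n _ => if_neg fun h => hg (inv_mem_iff.mp (h ▸ n.2))

open scoped Classical in
theorem sum_le_ker_finrank_sq (hW : IsRegularFamily W) (N : Subgroup G) [N.Normal] :
    ∑ i with N ≤ (W i).ρ.ker, finrank k (W i) ^ 2 = N.index := by
  have h := hW.sum_le_ker_finrank_mul_character N 1
  simp only [FDRep.char_one, if_pos (one_mem N), ← sq] at h
  exact_mod_cast h

end IsRegularFamily

end Representations

section RegularFamilyExistence

open Module (finrank)

universe u

variable {k G : Type u} [Field k] [Group G]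

/-- The representation on column vectors attached to a homomorphism to square matrices. -/
noncomputable def ofMatrixHom {ι : Type} [Fintype ι] [DecidableEq ι]
    (ρ : G →* Matrix ι ι k) : FDRep k G :=
  FDRep.of (V := ι → k)
    ((Matrix.toLinAlgEquiv' : Matrix ι ι k ≃ₐ[k] ((ι → k) →ₗ[k] ι → k)).toMulEquiv.toMonoidHom.comp
      ρ)

theorem finrank_ofMatrixHom {ι : Type} [Fintype ι] [DecidableEq ι] (ρ : G →* Matrix ι ι k) :
    finrank k (ofMatrixHom ρ) = Fintype.card ι :=
  Module.finrank_fintype_fun_eq_card k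

theorem character_ofMatrixHom {ι : Type} [Fintype ι] [DecidableEq ι] (ρ : G →* Matrix ι ι k)
    (g : G) : (ofMatrixHom ρ).character g = (ρ g).trace :=
  Matrix.trace_toLin'_eq (ρ g)

theorem trace_mulLeft_pi_matrix {ι : Type*} [Fintype ι] {n : ι → Type*} [∀ i, Fintype (n i)]
    (x : ∀ i, Matrix (n i) (n i) k) :
    LinearMap.trace k _ (LinearMap.mulLeft k x) =
      ∑ i, (Fintype.card (n i) : k) * (x i).trace := by
  classical
  rw [LinearMap.trace_eq_matrix_trace k (Pi.basis fun i => Matrix.stdBasis k (n i) (n i))]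
  have hrepr (i : ι) (A : Matrix (n i) (n i) k) (a b : n i) :
      (Matrix.stdBasis k (n i) (n i)).repr A (a, b) = A a b := by
    simp [Matrix.stdBasis]
  simp only [Matrix.trace, Matrix.diag, LinearMap.toMatrix_apply, LinearMap.mulLeft_apply,
    Fintype.sum_sigma, Fintype.sum_prod_type, Pi.basis_repr, Pi.basis_apply,
    Matrix.stdBasis_eq_single, hrepr]
  simp [Finset.mul_sum]

open scoped Classical in
theorem trace_mulLeft_monoidAlgebra_of [Finite G] (g : G) :
    LinearMap.trace k _ (LinearMap.mulLeft k (MonoidAlgebra.of k G g)) =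
      if g = 1 then (Nat.card G : k) else 0 := by
  have := Fintype.ofFinite G
  rw [LinearMap.trace_eq_matrix_trace k (MonoidAlgebra.basis G k)]
  simp only [Matrix.trace, LinearMap.toMatrix_apply, Matrix.diag, LinearMap.mulLeft_apply]
  simp [MonoidAlgebra.basis, Finsupp.single_apply]

theorem trace_mulLeft_algEquiv {A B : Type*} [Ring A] [Ring B] [Algebra k A] [Algebra k B]
    (e : A ≃ₐ[k] B) (a : A) :
    LinearMap.trace k B (LinearMap.mulLeft k (e a)) =
      LinearMap.trace k A (LinearMap.mulLeft k a) := by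
  rw [← LinearMap.trace_conj' _ e.toLinearEquiv]
  congr 1
  ext b
  simp [LinearEquiv.conj_apply]

theorem exists_isRegularFamily (k G : Type u) [Field k] [IsAlgClosed k] [CharZero k] [Group G]
    [Finite G] : ∃ (n : ℕ) (W : Fin n → FDRep k G), IsRegularFamily W := by
  have : NeZero (Nat.card G : k) := ⟨Nat.cast_ne_zero.mpr Nat.card_pos.ne'⟩
  obtain ⟨n, d, hd, ⟨e⟩⟩ :=
    IsSemisimpleRing.exists_algEquiv_pi_matrix_of_isAlgClosed k (MonoidAlgebra k G)
  let ρ (i : Fin n) : G →* Matrix (Fin (d i)) (Fin (d i)) k :=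
    (Pi.evalMonoidHom (fun i => Matrix (Fin (d i)) (Fin (d i)) k) i).comp
      (e.toMulEquiv.toMonoidHom.comp (MonoidAlgebra.of k G))
  refine ⟨n, fun i => ofMatrixHom (ρ i), fun i => ?_, fun g => ?_⟩
  · rw [finrank_ofMatrixHom, Fintype.card_fin]
    exact NeZero.ne (d i)
  · simp only [finrank_ofMatrixHom, character_ofMatrixHom]
    rw [← trace_mulLeft_monoidAlgebra_of, ← trace_mulLeft_algEquiv e, trace_mulLeft_pi_matrix]
    rfl

end RegularFamilyExistence

section DegreeBounds

open Module (finrank)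

theorem commutator_le_ker {G M : Type*} [Group G] [CommMonoid M] (f : G →* M) :
    commutator G ≤ f.ker := fun _ hg =>
  MonoidHom.mem_ker.mpr (congrArg Units.val (Abelianization.commutator_subset_ker f.toHomUnits hg))

theorem mul_self_eq_trace_smul_sub_one {k V : Type*} [Field k] [AddCommGroup V] [Module k V]
    {f : Module.End k V} (hV : finrank k V = 2) (hdet : LinearMap.det f = 1) :
    f * f = LinearMap.trace k V f • f - 1 := by
  have := Module.finite_of_finrank_pos (hV ▸ two_pos)
  have hcharpoly : f.charpoly = .X ^ 2 - .C (LinearMap.trace k V f) * .X + 1 := by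
    let b := Module.finBasisOfFinrankEq k V hV
    rw [← LinearMap.charpoly_toMatrix f b, Matrix.charpoly_fin_two, LinearMap.det_toMatrix, hdet,
      LinearMap.trace_eq_matrix_trace k b, map_one]
  have hroot := f.aeval_self_charpoly
  rw [hcharpoly] at hroot
  simp only [map_add, map_sub, map_mul, Polynomial.aeval_X, Polynomial.aeval_C, map_one,
    ← Algebra.smul_def, pow_two] at hroot
  exact eq_sub_of_add_eq (sub_eq_zero.mp (by rw [← hroot]; abel))

theorem trace_eq_neg_one_of_pow_three_eq_one {k V : Type*} [Field k] [AddCommGroup V] [Module k V]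
    {f : Module.End k V} (hV : finrank k V = 2) (hdet : LinearMap.det f = 1) (hcube : f ^ 3 = 1)
    (hne : f ≠ 1) : LinearMap.trace k V f = -1 := by
  have := Module.finite_of_finrank_pos (hV ▸ two_pos)
  have : Nontrivial V := Module.nontrivial_of_finrank_pos (R := k) (hV ▸ two_pos)
  set τ := LinearMap.trace k V f
  have hsq : f * f = τ • f - 1 := mul_self_eq_trace_smul_sub_one hV hdet
  have hfactor : (τ + 1) • ((τ - 1) • f - 1) = 0 := by
    calc (τ + 1) • ((τ - 1) • f - 1)
      _ = τ • (τ • f - 1) - f - 1 := by module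
      _ = f ^ 3 - 1 := by rw [← hsq, pow_three, hsq, mul_sub, mul_smul_comm, hsq, mul_one]
      _ = 0 := sub_eq_zero.mpr hcube
  by_contra htrace
  have hinv : (τ - 1) • f = 1 := sub_eq_zero.mp
    ((smul_eq_zero.mp hfactor).resolve_left fun h => htrace (eq_neg_of_add_eq_zero_left h))
  have hτ : τ - 1 ≠ 0 := fun h => zero_ne_one (by rw [← hinv, h, zero_smul])
  obtain ⟨c, rfl⟩ : ∃ c : k, c • 1 = f := ⟨(τ - 1)⁻¹, (inv_smul_eq_iff₀ hτ).mpr hinv.symm⟩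
  have hc2 : c ^ 2 = 1 := by rwa [LinearMap.det_smul, hV, map_one, mul_one] at hdet
  have hc3 : c ^ 3 = 1 := by
    rw [smul_pow, one_pow] at hcube
    refine FaithfulSMul.algebraMap_injective k (Module.End k V) ?_
    rw [Algebra.algebraMap_eq_smul_one, hcube, map_one]
  have hc : c = 1 := by linear_combination hc3 - c * hc2
  exact hne (by rw [hc, one_smul])

universe u

variable {k G : Type u} [Field k] [Group G]

theorem det_eq_one_of_mem_commutator (V : FDRep k G) {g : G} (hg : g ∈ commutator G) :
    LinearMap.det (V.ρ g) = 1 :=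
  MonoidHom.mem_ker.mp (commutator_le_ker (LinearMap.det.comp V.ρ) hg)

theorem commutator_le_ker_of_finrank_eq_one {V : FDRep k G} (hV : finrank k V = 1) :
    commutator G ≤ V.ρ.ker := fun g hg => by
  obtain ⟨c, hc, -⟩ := LinearMap.existsUnique_eq_smul_id_of_finrank_eq_one hV (V.ρ g)
  have hdet := det_eq_one_of_mem_commutator V hg
  rw [hc, LinearMap.det_smul, hV, pow_one, LinearMap.det_id, mul_one] at hdet
  rw [MonoidHom.mem_ker, hc, hdet, one_smul]
  rfl

theorem two_le_finrank (V : FDRep k G) [Simple V] (hV : ¬ commutator G ≤ V.ρ.ker) :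
    2 ≤ finrank k V := by
  have hne := finrank_ne_zero_of_simple V
  have hne' : finrank k V ≠ 1 := mt commutator_le_ker_of_finrank_eq_one hV
  lia

theorem character_eq_neg_one_of_pow_three_eq_one {V : FDRep k G} (hV : finrank k V = 2) {t : G}
    (ht : t ∈ commutator G) (hcube : t ^ 3 = 1) (hker : t ∉ V.ρ.ker) : V.character t = -1 :=
  trace_eq_neg_one_of_pow_three_eq_one hV (det_eq_one_of_mem_commutator V ht)
    (by rw [← map_pow, hcube, map_one]) hker

end DegreeBounds

section SumsOfSquares

open scoped Finset

theorem image_eq_singleton_of_sum_sq_eq_sq {ι : Type*} {s : Finset ι} {d : ι → ℕ} {m : ℕ}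
    (hm : m ≠ 0) (hd : ∀ i ∈ s, m ≤ d i) (hsum : ∑ i ∈ s, d i ^ 2 = m ^ 2) : s.image d = {m} := by
  refine Finset.eq_singleton_iff_nonempty_unique_mem.mpr ⟨?_, ?_⟩
  · rw [Finset.image_nonempty]
    exact Finset.nonempty_of_sum_ne_zero (hsum ▸ pow_ne_zero 2 hm)
  · refine Finset.forall_mem_image.mpr fun i hi => (hd i hi).antisymm' ?_
    refine (Nat.pow_le_pow_iff_left two_ne_zero).mp (hsum ▸ ?_)
    exact Finset.single_le_sum (f := fun i => d i ^ 2) (fun _ _ => Nat.zero_le _) hi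

theorem sum_sq_eq_card_filter {ι : Type*} {s : Finset ι} {d : ι → ℕ} (hd : ∀ i ∈ s, 2 ≤ d i)
    (hsum : ∑ i ∈ s, d i ^ 2 < 25) :
    (∀ i ∈ s, d i = 2 ∨ d i = 3 ∨ d i = 4) ∧
      ∑ i ∈ s, d i ^ 2 = 4 * #{i ∈ s | d i = 2} + 9 * #{i ∈ s | d i = 3} +
        16 * #{i ∈ s | d i = 4} := by
  have hcases : ∀ i ∈ s, d i = 2 ∨ d i = 3 ∨ d i = 4 := fun i hi => by
    have hle : d i ^ 2 ≤ ∑ i ∈ s, d i ^ 2 :=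
      Finset.single_le_sum (f := fun i => d i ^ 2) (fun _ _ => Nat.zero_le _) hi
    have hlt : d i < 5 := by nlinarith
    have := hd i hi
    lia
  refine ⟨hcases, ?_⟩
  simp only [Finset.card_filter, Finset.mul_sum, ← Finset.sum_add_distrib]
  refine Finset.sum_congr rfl fun i hi => ?_
  rcases hcases i hi with h | h | h <;> simp [h]

theorem image_eq_of_sum_sq_eq_eighteen {ι : Type*} {s : Finset ι} {d : ι → ℕ}
    (hd : ∀ i ∈ s, 2 ≤ d i) (hsum : ∑ i ∈ s, d i ^ 2 = 18) : s.image d = {3} := by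
  obtain ⟨hcases, hcount⟩ := sum_sq_eq_card_filter hd (by lia)
  obtain ⟨h2, h4⟩ : #{i ∈ s | d i = 2} = 0 ∧ #{i ∈ s | d i = 4} = 0 := by omega
  rw [Finset.card_eq_zero, Finset.filter_eq_empty_iff] at h2 h4
  refine Finset.eq_singleton_iff_nonempty_unique_mem.mpr ⟨?_, ?_⟩
  · exact Finset.image_nonempty.mpr (Finset.nonempty_of_sum_ne_zero (hsum.trans_ne (by decide)))
  · refine Finset.forall_mem_image.mpr fun i hi => ?_
    have := hcases i hi
    have := h2 hi
    have := h4 hi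
    lia

theorem image_eq_of_sum_sq_eq_twentyFour {ι : Type*} {s : Finset ι} {d : ι → ℕ}
    (hd : ∀ i ∈ s, 2 ≤ d i) (hne : ∃ i ∈ s, d i ≠ 2) (hsum : ∑ i ∈ s, d i ^ 2 = 24) :
    s.image d = {2, 4} := by
  obtain ⟨hcases, hcount⟩ := sum_sq_eq_card_filter hd (by lia)
  obtain ⟨h3, h2⟩ : #{i ∈ s | d i = 3} = 0 ∧ #{i ∈ s | d i = 2} ≠ 0 := by omega
  rw [Finset.card_eq_zero, Finset.filter_eq_empty_iff] at h3
  obtain ⟨i, hi⟩ := Finset.card_ne_zero.mp h2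
  obtain ⟨his, hi2⟩ := Finset.mem_filter.mp hi
  obtain ⟨j, hjs, hj2⟩ := hne
  refine (Finset.image_subset_iff.mpr fun l hl => ?_).antisymm ?_
  · simpa [h3 hl] using hcases l hl
  · have hj4 : d j = 4 := by simpa [h3 hjs, hj2] using hcases j hjs
    rw [Finset.insert_subset_iff, Finset.singleton_subset_iff, ← hi2, ← hj4]
    exact ⟨Finset.mem_image_of_mem d his, Finset.mem_image_of_mem d hjs⟩

end SumsOfSquares

section IrreducibleDegrees

open Module (finrank)

universe u

variable {G : Type u} [Group G]

/-- The degrees of the irreducible representations of `G` over `k` whose kernel is exactly `N`. -/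
def irrDegrees (k : Type u) [Field k] (N : Subgroup G) : Set ℕ :=
  {d | ∃ V : FDRep k G, Simple V ∧ V.ρ.ker = N ∧ finrank k V = d}

theorem charKer_eq_ker {G : Type} [Group G] (V : FDRep ℂ G) : charKer V = V.ρ.ker := by
  ext g
  rw [charKer, MonoidHom.mem_ker, MonoidHom.mem_ker, Units.ext_iff]
  rfl

theorem codSet_eq_iUnion (G : Type) [Group G] :
    codSet G = ⋃ (N : Subgroup G) (_ : N.Normal), (N.index / ·) '' irrDegrees ℂ N := by
  ext n
  simp only [codSet, codeg, irrDegrees, charKer_eq_ker, Set.mem_iUnion, Set.mem_image,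
    Set.mem_ofPred_eq, exists_prop]
  constructor
  · rintro ⟨V, hV, rfl⟩
    exact ⟨V.ρ.ker, inferInstance, _, ⟨V, hV, rfl, rfl⟩, rfl⟩
  · rintro ⟨_, _, _, ⟨V, hV, rfl, rfl⟩, rfl⟩
    exact ⟨V, hV, rfl⟩

variable {k : Type u} [Field k]

theorem one_le_of_mem_irrDegrees {N : Subgroup G} {d : ℕ} (hd : d ∈ irrDegrees k N) : 1 ≤ d := by
  obtain ⟨V, _, -, rfl⟩ := hd
  exact Nat.one_le_iff_ne_zero.mpr (finrank_ne_zero_of_simple V)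

theorem two_le_of_mem_irrDegrees {N : Subgroup G} (hN : ¬ commutator G ≤ N) {d : ℕ}
    (hd : d ∈ irrDegrees k N) : 2 ≤ d := by
  obtain ⟨V, _, rfl, rfl⟩ := hd
  exact two_le_finrank V hN

variable [IsAlgClosed k] [CharZero k] [Finite G]

namespace IsRegularFamily

variable {ι : Type*} [Fintype ι] {W : ι → FDRep k G} {M N : Subgroup G}

open scoped Classical in
theorem irrDegrees_eq_image (hW : IsRegularFamily W) (N : Subgroup G) :
    irrDegrees k N = ({i | (W i).ρ.ker = N} : Finset ι).image fun i => finrank k (W i) := by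
  ext d
  simp only [irrDegrees, Set.mem_ofPred_eq, Finset.coe_image, Finset.coe_filter, Finset.mem_univ,
    true_and, Set.mem_image]
  constructor
  · rintro ⟨V, _, rfl, rfl⟩
    obtain ⟨i, ⟨e⟩⟩ := hW.exists_iso V
    exact ⟨i, (ker_eq_of_iso e).symm, (finrank_eq_of_iso e).symm⟩
  · rintro ⟨i, rfl, rfl⟩
    exact ⟨W i, hW.simple i, rfl, rfl⟩

omit [IsAlgClosed k] [CharZero k] [Finite G] in
open scoped Classical in
theorem sum_ker_eq_add_sum_le_ker {A : Type*} [AddCommMonoid A] (W : ι → FDRep k G)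
    (hM : IsLeast {L : Subgroup G | L.Normal ∧ N < L} M) (f : ι → A) :
    ∑ i with (W i).ρ.ker = N, f i + ∑ i with M ≤ (W i).ρ.ker, f i =
      ∑ i with N ≤ (W i).ρ.ker, f i := by
  have hdisj : Disjoint ({i | (W i).ρ.ker = N} : Finset ι) ({i | M ≤ (W i).ρ.ker} : Finset ι) :=
    Finset.disjoint_filter.mpr fun i _ hN hM' => (hM.1.2.trans_le hM').ne' hN
  rw [← Finset.sum_union hdisj, ← Finset.filter_or]
  refine Finset.sum_congr (Finset.filter_congr fun i _ => ?_) fun _ _ => rfl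
  constructor
  · rintro (h | h)
    · exact h.ge
    · exact hM.1.2.le.trans h
  · intro h
    exact h.eq_or_lt.imp Eq.symm fun hlt => hM.2 ⟨inferInstance, hlt⟩

variable [N.Normal]

open scoped Classical in
theorem sum_ker_eq_finrank_sq_add_index (hW : IsRegularFamily W)
    (hM : IsLeast {L : Subgroup G | L.Normal ∧ N < L} M) :
    ∑ i with (W i).ρ.ker = N, finrank k (W i) ^ 2 + M.index = N.index := by
  have := hM.1.1
  rw [← hW.sum_le_ker_finrank_sq M, ← hW.sum_le_ker_finrank_sq N, sum_ker_eq_add_sum_le_ker W hM]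

open scoped Classical in
theorem sum_ker_eq_finrank_mul_character (hW : IsRegularFamily W)
    (hM : IsLeast {L : Subgroup G | L.Normal ∧ N < L} M) {g : G} (hg : g ∉ M) :
    ∑ i with (W i).ρ.ker = N, (finrank k (W i) : k) * (W i).character g = 0 := by
  have := hM.1.1
  have hsum := sum_ker_eq_add_sum_le_ker W hM fun i => (finrank k (W i) : k) * (W i).character g
  rwa [hW.sum_le_ker_finrank_mul_character M, hW.sum_le_ker_finrank_mul_character N, if_neg hg,
    if_neg fun h => hg (hM.1.2.le h), add_zero] at hsum

open scoped Classical in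
theorem exists_ker_eq_finrank_ne_two (hW : IsRegularFamily W)
    (hM : IsLeast {L : Subgroup G | L.Normal ∧ N < L} M) (hindex : N.index ≠ M.index) {t : G}
    (ht : t ∈ commutator G) (hcube : t ^ 3 = 1) (htM : t ∉ M) :
    ∃ i, (W i).ρ.ker = N ∧ finrank k (W i) ≠ 2 := by
  by_contra! htwo
  have hsum : ∑ i with (W i).ρ.ker = N, (2 : k) * -1 = 0 := by
    rw [← hW.sum_ker_eq_finrank_mul_character hM htM]
    refine Finset.sum_congr rfl fun i hi => ?_
    have hker := (Finset.mem_filter.mp hi).2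
    have htN : t ∉ (W i).ρ.ker := hker ▸ fun h => htM (hM.1.2.le h)
    rw [character_eq_neg_one_of_pow_three_eq_one (htwo i hker) ht hcube htN, htwo i hker,
      Nat.cast_ofNat]
  have hempty : ({i | (W i).ρ.ker = N} : Finset ι) = ∅ := by simpa using hsum
  have hsq := hW.sum_ker_eq_finrank_sq_add_index hM
  rw [hempty, Finset.sum_empty, zero_add] at hsq
  exact hindex hsq.symm

end IsRegularFamily

variable (k)

theorem irrDegrees_top : irrDegrees k (⊤ : Subgroup G) = {1} := by
  classical
  obtain ⟨n, W, hW⟩ := exists_isRegularFamily k G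
  have hsum := hW.sum_le_ker_finrank_sq ⊤
  simp only [top_le_iff, Subgroup.index_top] at hsum
  rw [hW.irrDegrees_eq_image, image_eq_singleton_of_sum_sq_eq_sq one_ne_zero ?_ hsum,
    Finset.coe_singleton]
  exact fun i _ => Nat.one_le_iff_ne_zero.mpr (hW.finrank_ne_zero i)

variable {M N : Subgroup G} [N.Normal] (hM : IsLeast {L : Subgroup G | L.Normal ∧ N < L} M)

include hM

theorem irrDegrees_eq_singleton_of_index_eq {m : ℕ} (hm : m ≠ 0)
    (hle : ∀ d ∈ irrDegrees k N, m ≤ d) (hindex : N.index = m ^ 2 + M.index) :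
    irrDegrees k N = {m} := by
  classical
  obtain ⟨n, W, hW⟩ := exists_isRegularFamily k G
  have hsum := hW.sum_ker_eq_finrank_sq_add_index hM
  rw [hindex, Nat.add_right_cancel_iff] at hsum
  simp only [hW.irrDegrees_eq_image, Finset.mem_coe, Finset.forall_mem_image] at hle
  rw [hW.irrDegrees_eq_image, image_eq_singleton_of_sum_sq_eq_sq hm @hle hsum,
    Finset.coe_singleton]

theorem irrDegrees_eq_singleton_three (hN : ¬ commutator G ≤ N)
    (hindex : N.index = 18 + M.index) : irrDegrees k N = {3} := by
  classical
  obtain ⟨n, W, hW⟩ := exists_isRegularFamily k G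
  have hle : ∀ d ∈ irrDegrees k N, 2 ≤ d := fun d => two_le_of_mem_irrDegrees hN
  have hsum := hW.sum_ker_eq_finrank_sq_add_index hM
  rw [hindex, Nat.add_right_cancel_iff] at hsum
  simp only [hW.irrDegrees_eq_image, Finset.mem_coe, Finset.forall_mem_image] at hle
  rw [hW.irrDegrees_eq_image, image_eq_of_sum_sq_eq_eighteen @hle hsum, Finset.coe_singleton]

theorem irrDegrees_eq_pair_two_four {t : G} (ht : t ∈ commutator G) (hcube : t ^ 3 = 1)
    (htM : t ∉ M) (hindex : N.index = 24 + M.index) : irrDegrees k N = {2, 4} := by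
  classical
  obtain ⟨n, W, hW⟩ := exists_isRegularFamily k G
  have hle : ∀ d ∈ irrDegrees k N, 2 ≤ d := fun d =>
    two_le_of_mem_irrDegrees fun hN => htM (hM.1.2.le (hN ht))
  obtain ⟨i, hi, hne⟩ := hW.exists_ker_eq_finrank_ne_two hM (by lia) ht hcube htM
  have hsum := hW.sum_ker_eq_finrank_sq_add_index hM
  rw [hindex, Nat.add_right_cancel_iff] at hsum
  simp only [hW.irrDegrees_eq_image, Finset.mem_coe, Finset.forall_mem_image] at hle
  rw [hW.irrDegrees_eq_image, image_eq_of_sum_sq_eq_twentyFour @hle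
    ⟨i, Finset.mem_filter.mpr ⟨Finset.mem_univ i, hi⟩, hne⟩ hsum, Finset.coe_pair]

end IrreducibleDegrees

section FittingSubgroup

/-- `F` is the Fitting subgroup of `G`: the largest nilpotent normal subgroup. -/
def IsFittingSubgroup {G : Type*} [Group G] (F : Subgroup G) : Prop :=
  IsGreatest {N : Subgroup G | N.Normal ∧ Group.IsNilpotent N} F

variable {G : Type*} [Group G] {F M : Subgroup G}

theorem IsFittingSubgroup.le_of_isPGroup [Finite G] (hF : IsFittingSubgroup F) [M.Normal] {p : ℕ}
    [Fact p.Prime] (hM : IsPGroup p M) : M ≤ F :=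
  hF.2 ⟨inferInstance, hM.isNilpotent⟩

theorem isNilpotent_of_commutator_commutator_eq_bot {H : Subgroup G} (h : ⁅⁅H, H⁆, H⁆ = ⊥) :
    Group.IsNilpotent H :=
  Subgroup.isNilpotent_of_lowerCentralSeries_eq_bot (n := 2) h

/- Each term `C ∩ G⁽ⁿ⁾` of the series below is nilpotent of class at most two once the next one lies
in `F`, because it centralizes `F`. -/
theorem IsFittingSubgroup.centralizer_le [Group.IsSolvable G] (hF : IsFittingSubgroup F) :
    Subgroup.centralizer (F : Set G) ≤ F := by
  have := hF.1.1
  set C := Subgroup.centralizer (F : Set G)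
  have hdescend (n : ℕ) (h : C ⊓ derivedSeries G (n + 1) ≤ F) : C ⊓ derivedSeries G n ≤ F := by
    refine hF.2 ⟨inferInstance, isNilpotent_of_commutator_commutator_eq_bot ?_⟩
    have hle : ⁅C ⊓ derivedSeries G n, C ⊓ derivedSeries G n⁆ ≤ F :=
      le_trans (le_inf ((Subgroup.commutator_le_left _ _).trans inf_le_left)
        (Subgroup.commutator_mono inf_le_right inf_le_right)) h
    rw [Subgroup.commutator_eq_bot_iff_le_centralizer, Subgroup.le_centralizer_iff]
    exact inf_le_left.trans (Subgroup.centralizer_le hle)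
  have hseries (n : ℕ) : C ⊓ derivedSeries G n ≤ F → C ≤ F := by
    induction n with
    | zero => simp only [derivedSeries_zero, inf_top_eq, imp_self]
    | succ n ih => exact fun h => ih (hdescend n h)
  obtain ⟨n, hn⟩ := Group.IsSolvable.solvable (G := G)
  exact hseries n (by rw [hn, inf_bot_eq]; exact bot_le)

theorem isSolvable_of_squarefree_index (N : Subgroup G) [N.Normal] [Group.IsSolvable N]
    (hN : Squarefree N.index) : Group.IsSolvable G := by
  have : N.FiniteIndex := ⟨hN.ne_zero⟩
  have : IsZGroup (G ⧸ N) := .of_squarefree hN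
  exact (Group.isSolvable_iff_subgroup_quotient N).mpr ⟨inferInstance, inferInstance⟩

end FittingSubgroup

section CoprimeAction

open scoped commutatorElement

variable {G : Type*} [Group G]

theorem commutator_eq_one_of_commute_of_coprime {t x : G} (hcomm : Commute t ⁅t, x⁆)
    (hcop : (orderOf t).Coprime (orderOf ⁅t, x⁆)) : ⁅t, x⁆ = 1 := by
  have hpow (n : ℕ) : t ^ n * x = ⁅t, x⁆ ^ n * x * t ^ n := by
    induction n with
    | zero => simp
    | succ n ih =>
      rw [pow_succ', mul_assoc, ih, ← mul_assoc, ← mul_assoc, (hcomm.pow_right n).eq, pow_succ,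
        commutatorElement_def]
      group
  have hone := hpow (orderOf t)
  rw [pow_orderOf_eq_one, one_mul, mul_one, right_eq_mul] at hone
  exact orderOf_eq_one_iff.mp (hcop.symm.eq_one_of_dvd (orderOf_dvd_of_pow_eq_one hone))

theorem mem_centralizer_of_coprime_totient {R : Subgroup G} [R.Normal] [IsCyclic R] [Finite R]
    {t : G} (hcop : (orderOf t).Coprime (Nat.card R).totient) :
    t ∈ Subgroup.centralizer (R : Set G) := by
  have hconj : MulAut.conjNormal (H := R) t = 1 := by
    refine orderOf_eq_one_iff.mp (Nat.eq_one_of_dvd_coprimes hcop (orderOf_map_dvd _ t) ?_)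
    rw [← IsCyclic.card_mulAut]
    exact orderOf_dvd_natCard _
  rw [Subgroup.mem_centralizer_iff]
  intro r hr
  have := congrArg Subtype.val (DFunLike.congr_fun hconj ⟨r, hr⟩)
  rw [MulAut.conjNormal_apply] at this
  exact (mul_inv_eq_iff_eq_mul.mp this).symm

theorem mem_centralizer_of_commutator_mem {R : Subgroup G} [R.Normal] [IsCyclic R] [Finite R]
    {t : G} (hcard : (orderOf t).Coprime (Nat.card R))
    (htotient : (orderOf t).Coprime (Nat.card R).totient) {s : Set G} (hs : ∀ x ∈ s, ⁅t, x⁆ ∈ R) :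
    t ∈ Subgroup.centralizer s := by
  rw [Subgroup.mem_centralizer_iff_commutator_eq_one']
  intro x hx
  refine commutator_eq_one_of_commute_of_coprime ?_ ?_
  · exact (Subgroup.mem_centralizer_iff.mp (mem_centralizer_of_coprime_totient htotient) _
      (hs x hx)).symm
  · exact hcard.of_dvd_right (Subgroup.orderOf_dvd_natCard R (hs x hx))

end CoprimeAction

section SmallNormalSubgroups

open scoped commutatorElement

variable {G : Type*} [Group G] {M N : Subgroup G}

theorem commutator_mem_of_relIndex_eq_two [N.Normal] [M.Normal] (h : M.relIndex N = 2) (t : G)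
    {x : G} (hx : x ∈ N) : ⁅t, x⁆ ∈ M := by
  have hconj : t * x * t⁻¹ ∈ N := Subgroup.Normal.conj_mem inferInstance x hx t
  have hmem : t * x * t⁻¹ ∈ M ↔ x ∈ M := by
    rw [Subgroup.Normal.mem_comm_iff inferInstance, inv_mul_cancel_left]
  have hiff := Subgroup.mul_mem_iff_of_index_two h (a := ⟨_, hconj⟩) (b := ⟨x, hx⟩⁻¹)
  rw [inv_mem_iff] at hiff
  exact hiff.mpr hmem

theorem le_centralizer_of_card_eq_two [M.Normal] (hM : Nat.card M = 2) (s : Set G) :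
    M ≤ Subgroup.centralizer s := by
  have : Finite M := Nat.finite_of_card_ne_zero (by lia)
  have : IsCyclic M := isCyclic_of_prime_card hM
  intro m hm
  rw [Subgroup.mem_centralizer_iff]
  intro x _
  have hx : x ∈ Subgroup.centralizer (M : Set G) :=
    mem_centralizer_of_coprime_totient (by rw [hM, Nat.totient_two]; exact Nat.coprime_one_right _)
  exact (Subgroup.mem_centralizer_iff.mp hx m hm).symm

end SmallNormalSubgroups

section QuaternionSubgroup

open QuaternionGroup

theorem isCyclic_of_ne_top_quaternionGroup_two {H : Subgroup (QuaternionGroup 2)} (hH : H ≠ ⊤) :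
    IsCyclic H := by
  classical
  have hcard : Fintype.card H ≤ 4 := by
    have hmul := H.card_mul_index
    rw [Nat.card_eq_fintype_card, Nat.card_eq_fintype_card, QuaternionGroup.card] at hmul
    have := H.one_lt_index_of_ne_top hH
    nlinarith
  refine isCyclic_of_card_pow_eq_one_le fun n hn => ?_
  rcases lt_or_ge n 4 with hlt | hge
  · refine le_trans (Finset.card_le_card_of_injOn (t := {x : QuaternionGroup 2 | x ^ n = 1})
      Subtype.val (fun x hx => ?_) Subtype.val_injective.injOn) ?_
    · simpa [Subtype.ext_iff] using hx
    · interval_cases n <;> decide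
  · exact (Finset.card_le_univ _).trans (hcard.trans hge)

theorem card_center_quaternionGroup_two :
    Nat.card (Subgroup.center (QuaternionGroup 2)) = 2 := by
  rw [Nat.card_eq_fintype_card]
  decide

end QuaternionSubgroup

namespace QuaternionFitting

open scoped commutatorElement

variable {K : Type*} [Group K] {F M R : Subgroup K}

theorem card_eq_eight_of_mulEquiv (e : F ≃* QuaternionGroup 2) : Nat.card F = 8 := by
  rw [Nat.card_congr e.toEquiv, Nat.card_eq_fintype_card, QuaternionGroup.card]

theorem index_eq_six_of_mulEquiv (hcard : Nat.card K = 48) (e : F ≃* QuaternionGroup 2) :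
    F.index = 6 := by
  have hmul := F.card_mul_index
  rw [card_eq_eight_of_mulEquiv e, hcard] at hmul
  lia

theorem isCyclic_of_lt_of_mulEquiv (e : F ≃* QuaternionGroup 2) (hlt : R < F) : IsCyclic R := by
  have hne : (R.subgroupOf F).map e.toMonoidHom ≠ ⊤ := fun h => by
    rw [← Subgroup.map_top_of_surjective e.toMonoidHom e.surjective] at h
    exact hlt.not_ge (Subgroup.subgroupOf_eq_top.mp (Subgroup.map_injective e.injective h))
  have := isCyclic_of_ne_top_quaternionGroup_two hne
  let f : R ≃* (R.subgroupOf F).map e.toMonoidHom :=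
    (Subgroup.subgroupOfEquivOfLe hlt.le).symm.trans (e.subgroupMap _)
  exact f.symm.isCyclic.mp this

theorem card_centralizer_eq_two (e : F ≃* QuaternionGroup 2)
    (hC : Subgroup.centralizer (F : Set K) ≤ F) :
    Nat.card (Subgroup.centralizer (F : Set K)) = 2 := by
  have hcenter : (Subgroup.centralizer (F : Set K)).subgroupOf F = Subgroup.center F := by
    ext x
    simp [Subgroup.mem_subgroupOf, Subgroup.mem_centralizer_iff, Subgroup.mem_center_iff,
      Subtype.ext_iff]
  rw [← Nat.card_congr (Subgroup.subgroupOfEquivOfLe hC).toEquiv, hcenter,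
    Nat.card_congr (Subgroup.centerCongr e).toEquiv, card_center_quaternionGroup_two]

theorem index_centralizer_eq_twentyFour (hcard : Nat.card K = 48) (e : F ≃* QuaternionGroup 2)
    (hC : Subgroup.centralizer (F : Set K) ≤ F) :
    (Subgroup.centralizer (F : Set K)).index = 24 := by
  have hmul := (Subgroup.centralizer (F : Set K)).card_mul_index
  rw [card_centralizer_eq_two e hC, hcard] at hmul
  lia

theorem card_eq_one_or_two_or_four_of_lt [Finite K] (e : F ≃* QuaternionGroup 2) (hlt : R < F) :
    Nat.card R = 1 ∨ Nat.card R = 2 ∨ Nat.card R = 4 := by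
  have hdvd : Nat.card R ∣ 8 := card_eq_eight_of_mulEquiv e ▸ Subgroup.card_dvd_of_le hlt.le
  have hne : Nat.card R ≠ 8 := fun h =>
    hlt.ne (Subgroup.eq_of_le_of_card_ge hlt.le (by rw [h, card_eq_eight_of_mulEquiv e]))
  have := Nat.le_of_dvd (by decide) hdvd
  interval_cases Nat.card R <;> omega

theorem exists_commutator_notMem_of_orderOf_eq_three [Finite K] (e : F ≃* QuaternionGroup 2)
    (hC : Subgroup.centralizer (F : Set K) ≤ F) [R.Normal] (hlt : R < F) {t : K}
    (ht : orderOf t = 3) : ∃ x ∈ F, ⁅t, x⁆ ∉ R := by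
  by_contra! hmem
  have := isCyclic_of_lt_of_mulEquiv e hlt
  have htF : t ∈ F := by
    refine hC (mem_centralizer_of_commutator_mem (R := R) ?_ ?_ hmem)
    all_goals
      rcases card_eq_one_or_two_or_four_of_lt e hlt with h | h | h <;> rw [ht, h] <;> decide
  have hdvd := F.orderOf_dvd_natCard htF
  rw [ht, card_eq_eight_of_mulEquiv e] at hdvd
  omega

theorem le_of_three_dvd_card [Finite K] (e : F ≃* QuaternionGroup 2)
    (hC : Subgroup.centralizer (F : Set K) ≤ F) [F.Normal] [M.Normal] (hM : 3 ∣ Nat.card M) :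
    F ≤ M := by
  by_contra hle
  have : Fact (Nat.Prime 3) := ⟨Nat.prime_three⟩
  obtain ⟨t, ht⟩ := exists_prime_orderOf_dvd_card' 3 hM
  rw [← Subgroup.orderOf_coe] at ht
  obtain ⟨x, hxF, hx⟩ := exists_commutator_notMem_of_orderOf_eq_three e hC
    (inf_le_right.lt_of_ne fun h : M ⊓ F = F => hle (inf_eq_right.mp h)) ht
  exact hx (Subgroup.commutator_le_inf M F (Subgroup.commutator_mem_commutator t.2 hxF))

theorem card_ne_four_of_lt [Finite K] (e : F ≃* QuaternionGroup 2)
    (hC : Subgroup.centralizer (F : Set K) ≤ F) [F.Normal] [M.Normal] (hlt : M < F)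
    (hK : 3 ∣ Nat.card K) : Nat.card M ≠ 4 := by
  intro hcard
  have : Fact (Nat.Prime 3) := ⟨Nat.prime_three⟩
  obtain ⟨t, ht⟩ := exists_prime_orderOf_dvd_card' 3 hK
  obtain ⟨x, hxF, hx⟩ := exists_commutator_notMem_of_orderOf_eq_three e hC hlt ht
  have hmul := Subgroup.card_mul_index (M.subgroupOf F)
  rw [Nat.card_congr (Subgroup.subgroupOfEquivOfLe hlt.le).toEquiv, hcard,
    card_eq_eight_of_mulEquiv e] at hmul
  exact hx (commutator_mem_of_relIndex_eq_two (show M.relIndex F = 2 by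
    rw [Subgroup.relIndex]; lia) t hxF)

end QuaternionFitting

namespace OrderFortyEight

open QuaternionFitting

variable {K : Type*} [Group K] {F M : Subgroup K} (hcard : Nat.card K = 48)
  (hF : IsFittingSubgroup F) (e : F ≃* QuaternionGroup 2)

include hcard hF e in
theorem isSolvable_of_card_eq_fortyEight : Group.IsSolvable K := by
  have := hF.1.1
  have := hF.1.2
  refine isSolvable_of_squarefree_index F ?_
  rw [index_eq_six_of_mulEquiv hcard e, show 6 = 2 * 3 from rfl]
  exact Nat.squarefree_mul_iff.mpr
    ⟨by decide, Nat.prime_two.squarefree, Nat.prime_three.squarefree⟩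

variable [Finite K]

include hcard e

theorem index_eq_one_or_two_or_three_of_fitting_lt (hlt : F < M) :
    M.index = 1 ∨ M.index = 2 ∨ M.index = 3 := by
  have hdvd := Subgroup.index_dvd_of_le hlt.le
  have hlt6 := Subgroup.index_strictAnti hlt
  rw [index_eq_six_of_mulEquiv hcard e] at hdvd hlt6
  interval_cases M.index <;> lia

theorem commutator_le_of_fitting_lt [M.Normal] (hlt : F < M) : commutator K ≤ M := by
  have hprime {p : ℕ} [Fact p.Prime] (h : M.index = p) : commutator K ≤ M :=
    Subgroup.Normal.quotient_commutative_iff_commutator_le.mp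
      (isCyclic_of_prime_card (p := p) h).isMulCommutative
  rcases index_eq_one_or_two_or_three_of_fitting_lt hcard e hlt with h | h | h
  · exact Subgroup.index_eq_one.mp h ▸ le_top
  · exact hprime (p := 2) h
  · exact hprime (p := 3) h

include hF

theorem fitting_le_or_le_fitting [M.Normal] : F ≤ M ∨ M ≤ F := by
  have := hF.1.1
  have := isSolvable_of_card_eq_fortyEight hcard hF e
  have : Fact (Nat.Prime 2) := ⟨Nat.prime_two⟩
  by_cases h : 3 ∣ Nat.card M
  · exact Or.inl (le_of_three_dvd_card e hF.centralizer_le h)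
  · refine Or.inr (hF.le_of_isPGroup (p := 2) ?_)
    have hdvd : Nat.card M ∣ 2 ^ 4 * 3 := M.card_subgroup_dvd_card.trans hcard.dvd
    obtain ⟨m, -, hm⟩ := (Nat.dvd_prime_pow Nat.prime_two).mp
      (((Nat.Prime.coprime_iff_not_dvd Nat.prime_three).mpr h).symm.dvd_of_dvd_mul_right hdvd)
    exact IsPGroup.of_card hm

theorem eq_bot_or_eq_centralizer_or_eq_or_lt [M.Normal] :
    M = ⊥ ∨ M = Subgroup.centralizer (F : Set K) ∨ M = F ∨ F < M := by
  have := hF.1.1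
  have := isSolvable_of_card_eq_fortyEight hcard hF e
  rcases fitting_le_or_le_fitting hcard hF e (M := M) with h | h
  · exact Or.inr (Or.inr (h.eq_or_lt.imp_left Eq.symm))
  rcases h.eq_or_lt with rfl | hlt
  · exact Or.inr (Or.inr (Or.inl rfl))
  rcases card_eq_one_or_two_or_four_of_lt e hlt with h1 | h2 | h4
  · exact Or.inl (Subgroup.card_eq_one.mp h1)
  · refine Or.inr (Or.inl (Subgroup.eq_of_le_of_card_ge (le_centralizer_of_card_eq_two h2 _) ?_))
    rw [h2, card_centralizer_eq_two e hF.centralizer_le]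
  · exact absurd h4 (card_ne_four_of_lt e hF.centralizer_le hlt (by lia))

theorem not_commutator_le_fitting : ¬ commutator K ≤ F := by
  intro hle
  have : Fact (Nat.Prime 2) := ⟨Nat.prime_two⟩
  have hF8 := card_eq_eight_of_mulEquiv e
  obtain ⟨P, hP, hFP⟩ := Sylow.exists_subgroup_card_pow_succ (p := 2) (n := 3)
    (by rw [hcard]; decide) hF8
  have : P.Normal := .of_commutator_le _ (hle.trans hFP)
  have := Subgroup.card_le_of_le (hF.le_of_isPGroup (IsPGroup.of_card hP))
  lia

theorem fitting_lt_commutator : F < commutator K := by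
  have hnot := not_commutator_le_fitting hcard hF e
  have := isSolvable_of_card_eq_fortyEight hcard hF e
  exact ((fitting_le_or_le_fitting hcard hF e).resolve_right hnot).lt_of_not_ge hnot

theorem index_commutator_eq_two : (commutator K).index = 2 := by
  have := isSolvable_of_card_eq_fortyEight hcard hF e
  have : Nontrivial K := Finite.one_lt_card_iff_nontrivial.mp (by lia)
  have hlt := fitting_lt_commutator hcard hF e
  rcases index_eq_one_or_two_or_three_of_fitting_lt hcard e hlt with h | h | h
  · exact absurd (Subgroup.index_eq_one.mp h)
      (Group.IsSolvable.commutator_lt_top_of_nontrivial K).ne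
  · exact h
  · have : Fact (Nat.Prime 2) := ⟨Nat.prime_two⟩
    have hmul := (commutator K).card_mul_index
    rw [h, hcard] at hmul
    have h16 : Nat.card (commutator K) = 2 ^ 4 := by lia
    exact absurd (hF.le_of_isPGroup (IsPGroup.of_card h16)) (not_commutator_le_fitting hcard hF e)

theorem eq_commutator_or_eq_top_of_fitting_lt [M.Normal] (hlt : F < M) :
    M = commutator K ∨ M = ⊤ := by
  refine (commutator_le_of_fitting_lt hcard e hlt).eq_or_lt.imp Eq.symm fun hlt' => ?_
  have hindex := Subgroup.index_strictAnti hlt'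
  rw [index_commutator_eq_two hcard hF e] at hindex
  have := M.index_ne_zero_of_finite
  exact Subgroup.index_eq_one.mp (by lia)

theorem normal_iff :
    M.Normal ↔ M = ⊥ ∨ M = Subgroup.centralizer (F : Set K) ∨ M = F ∨ M = commutator K ∨ M = ⊤ := by
  have := hF.1.1
  constructor
  · intro
    have := eq_commutator_or_eq_top_of_fitting_lt hcard hF e (M := M)
    have := eq_bot_or_eq_centralizer_or_eq_or_lt hcard hF e (M := M)
    tauto
  · rintro (rfl | rfl | rfl | rfl | rfl) <;> infer_instance

theorem isLeast_centralizer :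
    IsLeast {L : Subgroup K | L.Normal ∧ ⊥ < L} (Subgroup.centralizer (F : Set K)) := by
  have := hF.1.1
  have := isSolvable_of_card_eq_fortyEight hcard hF e
  have hC := hF.centralizer_le
  refine ⟨⟨inferInstance, bot_lt_iff_ne_bot.mpr fun h => ?_⟩, fun M ⟨_, hlt⟩ => ?_⟩
  · have := card_centralizer_eq_two e hC
    rw [h, Subgroup.card_bot] at this
    lia
  · rcases eq_bot_or_eq_centralizer_or_eq_or_lt hcard hF e (M := M) with rfl | rfl | rfl | h
    · exact absurd hlt (lt_irrefl _)
    · exact le_rfl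
    · exact hC
    · exact hC.trans h.le

theorem isLeast_fitting :
    IsLeast {L : Subgroup K | L.Normal ∧ Subgroup.centralizer (F : Set K) < L} F := by
  have := isSolvable_of_card_eq_fortyEight hcard hF e
  have hC := hF.centralizer_le
  refine ⟨⟨hF.1.1, hC.lt_of_ne fun h => ?_⟩, fun M ⟨_, hlt⟩ => ?_⟩
  · have := card_centralizer_eq_two e hC
    rw [h, card_eq_eight_of_mulEquiv e] at this
    lia
  · rcases eq_bot_or_eq_centralizer_or_eq_or_lt hcard hF e (M := M) with rfl | rfl | rfl | h
    · exact absurd hlt not_lt_bot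
    · exact absurd hlt (lt_irrefl _)
    · exact le_rfl
    · exact h.le

theorem isLeast_commutator : IsLeast {L : Subgroup K | L.Normal ∧ F < L} (commutator K) :=
  ⟨⟨inferInstance, fitting_lt_commutator hcard hF e⟩, fun _ ⟨_, hlt⟩ =>
    commutator_le_of_fitting_lt hcard e hlt⟩

theorem isLeast_top : IsLeast {L : Subgroup K | L.Normal ∧ commutator K < L} ⊤ := by
  refine ⟨⟨inferInstance, lt_top_iff_ne_top.mpr fun h => ?_⟩, fun M ⟨_, hlt⟩ => ?_⟩
  · have := index_commutator_eq_two hcard hF e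
    rw [h, Subgroup.index_top] at this
    lia
  · have hFM := (fitting_lt_commutator hcard hF e).trans hlt
    exact ((eq_commutator_or_eq_top_of_fitting_lt hcard hF e hFM).resolve_left hlt.ne').ge

theorem exists_mem_commutator_notMem_centralizer :
    ∃ t ∈ commutator K, t ^ 3 = 1 ∧ t ∉ Subgroup.centralizer (F : Set K) := by
  have := isSolvable_of_card_eq_fortyEight hcard hF e
  have : Fact (Nat.Prime 3) := ⟨Nat.prime_three⟩
  have hmul := (commutator K).card_mul_index
  rw [index_commutator_eq_two hcard hF e, hcard] at hmul
  obtain ⟨t, ht⟩ := exists_prime_orderOf_dvd_card' (G := commutator K) 3 (by lia)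
  rw [← Subgroup.orderOf_coe] at ht
  refine ⟨t, t.2, ht ▸ pow_orderOf_eq_one _, fun htC => ?_⟩
  have hdvd := F.orderOf_dvd_natCard (hF.centralizer_le htC)
  rw [ht, card_eq_eight_of_mulEquiv e] at hdvd
  lia

end OrderFortyEight

open QuaternionFitting OrderFortyEight in
theorem stmt_15_general {K : Type} [Group K] (hcard : Nat.card K = 48) {F : Subgroup K}
    (hF : IsFittingSubgroup F) (e : F ≃* QuaternionGroup 2) :
    codSet K = {1, 2, 3, 8, 12, 24} := by
  have : Finite K := Nat.finite_of_card_ne_zero (by lia)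
  have : F.Normal := hF.1.1
  have := isSolvable_of_card_eq_fortyEight hcard hF e
  have hindexF := index_eq_six_of_mulEquiv hcard e
  have hindexC := index_centralizer_eq_twentyFour hcard e hF.centralizer_le
  have hindexK := index_commutator_eq_two hcard hF e
  have hnot := not_commutator_le_fitting hcard hF e
  obtain ⟨t, ht, hcube, htC⟩ := exists_mem_commutator_notMem_centralizer hcard hF e
  have hbot := irrDegrees_eq_pair_two_four ℂ (isLeast_centralizer hcard hF e) ht hcube htC
    (by rw [Subgroup.index_bot, hcard, hindexC])
  have hcentralizer := irrDegrees_eq_singleton_three ℂ (isLeast_fitting hcard hF e)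
    (fun h => hnot (h.trans hF.centralizer_le)) (by rw [hindexC, hindexF])
  have hfitting := irrDegrees_eq_singleton_of_index_eq ℂ (isLeast_commutator hcard hF e)
    two_ne_zero (fun _ => two_le_of_mem_irrDegrees hnot) (by rw [hindexF, hindexK]; rfl)
  have hcommutator := irrDegrees_eq_singleton_of_index_eq ℂ (isLeast_top hcard hF e)
    one_ne_zero (fun _ => one_le_of_mem_irrDegrees) (by rw [hindexK, Subgroup.index_top]; rfl)
  simp only [codSet_eq_iUnion, normal_iff hcard hF e,
    Set.iUnion_iUnion_eq_or_left, Set.iUnion_iUnion_eq_left, hbot, hcentralizer, hfitting,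
    hcommutator, irrDegrees_top, Subgroup.index_bot, hcard, hindexC, hindexF, hindexK,
    Subgroup.index_top, Set.image_pair, Set.image_singleton]
  ext n
  simp only [Set.mem_union, Set.mem_insert_iff, Set.mem_singleton_iff]
  lia

theorem stmt_15 {K : Type} [Group K] [Finite K] (h : IsBinaryOctahedral K) :
    codSet K = {1, 2, 3, 8, 12, 24} := by
  obtain ⟨hcard, ⟨_, hF, ⟨e⟩⟩, -⟩ := h
  exact stmt_15_general hcard hF e
end
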